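/- Let 𝔤 be a finite-dimensional complex simple Lie algebra of type E7 and let (e,h,f) be an sl2-triple in 𝔤 such that e is a distinguished nilpotent element with dim 𝔤^e = 9 (the subregular orbit of E7). Then the centre 𝔷(𝔤^e) of 𝔤^e has dimension 6, the eigenvalues of the restriction of ad h to 𝔷(𝔤^e) are 2, 10, 14, 18, 22, 26, and e satisfies property (P). -/

import Mathlib

open scoped ComplexOrder

/-- The centralizer `𝔤^e = {x ∈ 𝔤 : ⁅x, e⁆ = 0}` of an element `e`, as a Lie subalgebra. -/
def centralizer (L : Type*) [LieRing L] [LieAlgebra ℂ L] (e : L) : LieSubalgebra ℂ L where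
  carrier := {x : L | ⁅x, e⁆ = 0}
  add_mem' := fun {a b} ha hb => by
    simp only [Set.mem_setOf_eq] at *
    rw [add_lie, ha, hb, add_zero]
  zero_mem' := by simp
  smul_mem' := fun c a ha => by
    simp only [Set.mem_setOf_eq] at *
    rw [smul_lie, ha, smul_zero]
  lie_mem' := fun {a b} ha hb => by
    simp only [Set.mem_setOf_eq] at *
    simp [lie_lie, ha, hb]

/-- Membership in the centre `𝔷(𝔤^e)` of the centralizer of `e`:
`v` centralizes `e` and commutes with every element of `𝔤^e`. -/
def InCenterOfCentralizer (L : Type*) [LieRing L] [LieAlgebra ℂ L] (e v : L) : Prop :=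
  ⁅v, e⁆ = 0 ∧ ∀ y : L, ⁅y, e⁆ = 0 → ⁅v, y⁆ = 0

/-- The centre `𝔷(𝔤^e)` of the centralizer of `e`, as a subspace of `L`. -/
def zCenter (L : Type*) [LieRing L] [LieAlgebra ℂ L] (e : L) : Submodule ℂ L where
  carrier := {v : L | ⁅v, e⁆ = 0 ∧ ∀ y : L, ⁅y, e⁆ = 0 → ⁅v, y⁆ = 0}
  add_mem' := fun {a b} ha hb => ⟨by rw [add_lie, ha.1, hb.1, add_zero],
    fun y hy => by rw [add_lie, ha.2 y hy, hb.2 y hy, add_zero]⟩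
  zero_mem' := ⟨zero_lie e, fun y _ => zero_lie y⟩
  smul_mem' := fun c a ha => ⟨by rw [smul_lie, ha.1, smul_zero],
    fun y hy => by rw [smul_lie, ha.2 y hy, smul_zero]⟩

/-- Property (P) for an `sl₂`-triple `(e, h, f)`: for every nonzero `v ∈ 𝔷(𝔤^e)`, the
eigenspace `𝔷_max` of the restriction of `ad h` to `𝔷(𝔤^e)` for its largest eigenvalue is
contained in `[[f, 𝔤^e], v] = {⁅⁅f, x⁆, v⁆ : x ∈ 𝔤^e}`. -/
def PropertyP (L : Type*) [LieRing L] [LieAlgebra ℂ L] (e h f : L) : Prop :=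
  ∀ m : ℂ,
    (∃ z : L, z ≠ 0 ∧ InCenterOfCentralizer L e z ∧ ⁅h, z⁆ = m • z) →
    (∀ m' : ℂ, (∃ z : L, z ≠ 0 ∧ InCenterOfCentralizer L e z ∧ ⁅h, z⁆ = m' • z) → m' ≤ m) →
    ∀ v : L, InCenterOfCentralizer L e v → v ≠ 0 →
      ∀ z : L, InCenterOfCentralizer L e z → ⁅h, z⁆ = m • z →
        ∃ x : L, ⁅x, e⁆ = 0 ∧ ⁅⁅f, x⁆, v⁆ = z

/-- The stabilizer `{x ∈ 𝔮 : ξ(⁅x, y⁆) = 0 for all y ∈ 𝔮}` of a linear functional `ξ`. -/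
def coadStab (Q : Type*) [LieRing Q] [LieAlgebra ℂ Q] (ξ : Module.Dual ℂ Q) : Submodule ℂ Q where
  carrier := {x : Q | ∀ y : Q, ξ ⁅x, y⁆ = 0}
  add_mem' := fun {a b} ha hb y => by rw [add_lie, map_add, ha y, hb y, add_zero]
  zero_mem' := fun y => by rw [zero_lie, map_zero]
  smul_mem' := fun c a ha y => by rw [smul_lie, map_smul, ha y, smul_zero]

/-- The index of a complex Lie algebra:
`ind 𝔮 = min_{ξ ∈ 𝔮*} dim {x ∈ 𝔮 : ξ(⁅x, y⁆) = 0 for all y ∈ 𝔮}`. -/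
noncomputable def lieIndex (Q : Type*) [LieRing Q] [LieAlgebra ℂ Q] : ℕ :=
  ⨅ ξ : Module.Dual ℂ Q, Module.finrank ℂ ↥(coadStab Q ξ)

/-- A nilpotent element `e` is distinguished if the only `x ∈ 𝔤^e` such that `ad x` is a
semisimple endomorphism of `𝔤` is `x = 0`. -/
def IsDistinguished (L : Type*) [LieRing L] [LieAlgebra ℂ L] (e : L) : Prop :=
  ∀ x : L, ⁅x, e⁆ = 0 → (LieAlgebra.ad ℂ L x).IsSemisimple → x = 0

/-- Operators on complex sequences; the 56-dimensional representation of `E₇` is realised on the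
first 56 coordinates. -/
def SeqOp : Type := Module.End ℂ (ℕ → ℂ)

noncomputable instance : Ring SeqOp := inferInstanceAs (Ring (Module.End ℂ (ℕ → ℂ)))

noncomputable instance : Algebra ℂ SeqOp := inferInstanceAs (Algebra ℂ (Module.End ℂ (ℕ → ℂ)))

noncomputable instance : LieRing SeqOp := LieRing.ofAssociativeRing

/-- The matrix unit sending the `j`-th coordinate vector to the `i`-th one. -/
noncomputable def unitOp (i j : ℕ) : SeqOp :=
  (LinearMap.single ℂ (fun _ => ℂ) i ∘ₗ LinearMap.proj j : Module.End ℂ (ℕ → ℂ))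

lemma unitOp_mul (i j k l : ℕ) :
    unitOp i j * unitOp k l = if j = k then unitOp i l else 0 := by
  refine LinearMap.ext fun v => ?_
  change (Pi.single i ((Pi.single k (v l) : ℕ → ℂ) j) : ℕ → ℂ) = _
  split_ifs with h
  · rw [h, Pi.single_eq_same]
    rfl
  · rw [Pi.single_eq_of_ne h, Pi.single_zero]
    rfl

/-- Integer matrices with finitely many nonzero entries, as lists of `(row, column, entry)`. -/
abbrev Sparse := List (ℕ × ℕ × ℤ)

namespace Sparse

/-- The operator given by a sparse matrix. -/
noncomputable def toOp (S : Sparse) : SeqOp :=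
  (S.map fun t => (t.2.2 : ℂ) • unitOp t.1 t.2.1).sum

/-- Scalar multiplication of sparse matrices. -/
def scale (c : ℤ) (S : Sparse) : Sparse := S.map fun t => (t.1, t.2.1, c * t.2.2)

/-- The product of a matrix with one entry and a sparse matrix. -/
def rowMul (s : ℕ × ℕ × ℤ) (T : Sparse) : Sparse :=
  T.foldr (fun t acc => bif Nat.beq s.2.1 t.1 then (s.1, t.2.1, s.2.2 * t.2.2) :: acc else acc) []

/-- The product of sparse matrices. -/
def mul (S T : Sparse) : Sparse := S.foldr (fun s acc => rowMul s T ++ acc) []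

/-- The commutator of sparse matrices. -/
def bracket (S T : Sparse) : Sparse := mul S T ++ scale (-1) (mul T S)

/-- Add one entry to a sparse matrix, dropping it if it becomes zero. -/
def insertEntry (t : ℕ × ℕ × ℤ) : Sparse → Sparse
  | [] => match t.2.2 with
    | Int.ofNat 0 => []
    | c => [(t.1, t.2.1, c)]
  | s :: S => bif Nat.beq s.1 t.1 && Nat.beq s.2.1 t.2.1 then
      match s.2.2 + t.2.2 with
      | Int.ofNat 0 => S
      | c => (s.1, s.2.1, c) :: S
    else s :: insertEntry t S

/-- Collect equal positions and drop zero entries. -/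
def collect (S : Sparse) : Sparse := S.foldr insertEntry []

/-- Test whether two sparse matrices agree. -/
def agree (S T : Sparse) : Bool := (collect (S ++ scale (-1) T)).isEmpty

/-- The transpose of a sparse matrix. -/
def swap (S : Sparse) : Sparse := S.map fun t => (t.2.1, t.1, t.2.2)

@[simp] lemma toOp_nil : toOp [] = 0 := rfl

lemma toOp_cons (t : ℕ × ℕ × ℤ) (S : Sparse) :
    toOp (t :: S) = (t.2.2 : ℂ) • unitOp t.1 t.2.1 + toOp S := by
  simp [toOp]

lemma toOp_append (S T : Sparse) : toOp (S ++ T) = toOp S + toOp T := by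
  simp [toOp]

lemma toOp_scale (c : ℤ) (S : Sparse) : toOp (scale c S) = (c : ℂ) • toOp S := by
  induction S with
  | nil => simp [scale]
  | cons t S ih =>
    have : scale c (t :: S) = (t.1, t.2.1, c * t.2.2) :: scale c S := rfl
    rw [this, toOp_cons, toOp_cons, ih, smul_add, smul_smul]
    push_cast
    rfl

lemma toOp_rowMul (s : ℕ × ℕ × ℤ) (T : Sparse) :
    toOp (rowMul s T) = ((s.2.2 : ℂ) • unitOp s.1 s.2.1) * toOp T := by
  induction T with
  | nil => simp [rowMul]
  | cons t T ih =>
    have : rowMul s (t :: T) = bif Nat.beq s.2.1 t.1 then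
      (s.1, t.2.1, s.2.2 * t.2.2) :: rowMul s T else rowMul s T := rfl
    rw [this, toOp_cons, mul_add, ← ih, smul_mul_smul_comm, unitOp_mul]
    by_cases h : s.2.1 = t.1
    · rw [show Nat.beq s.2.1 t.1 = true by rw [h]; exact Nat.beq_refl _, cond_true, toOp_cons,
        if_pos h]
      push_cast
      rfl
    · rw [if_neg h, Bool.eq_false_iff.mpr (fun h' => h (Nat.eq_of_beq_eq_true h'))]
      simp

lemma toOp_mul (S T : Sparse) : toOp (mul S T) = toOp S * toOp T := by
  induction S with
  | nil => simp [mul]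
  | cons s S ih =>
    have : mul (s :: S) T = rowMul s T ++ mul S T := rfl
    rw [this, toOp_append, toOp_rowMul, ih, toOp_cons, add_mul]

lemma toOp_bracket (S T : Sparse) : toOp (bracket S T) = ⁅toOp S, toOp T⁆ := by
  rw [bracket, toOp_append, toOp_scale, toOp_mul, toOp_mul, Ring.lie_def, 
    Int.cast_neg, Int.cast_one,
    neg_smul, one_smul, sub_eq_add_neg]

lemma toOp_insertEntry (t : ℕ × ℕ × ℤ) (S : Sparse) :
    toOp (insertEntry t S) = (t.2.2 : ℂ) • unitOp t.1 t.2.1 + toOp S := by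
  induction S with
  | nil =>
    rw [insertEntry]
    split
    · next h₀ => rw [h₀]; simp
    · simp [toOp_cons]
  | cons s S ih =>
    rw [insertEntry]
    cases h : Nat.beq s.1 t.1 && Nat.beq s.2.1 t.2.1
    · rw [cond_false, toOp_cons, ih, toOp_cons]
      abel
    · rw [cond_true]
      rw [Bool.and_eq_true] at h
      have h₁ := Nat.eq_of_beq_eq_true h.1
      have h₂ := Nat.eq_of_beq_eq_true h.2
      have key : ((s.2.2 + t.2.2 : ℤ) : ℂ) • unitOp s.1 s.2.1 + toOp S =
          (t.2.2 : ℂ) • unitOp t.1 t.2.1 + toOp (s :: S) := by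
        rw [toOp_cons, h₁, h₂]
        push_cast
        rw [add_smul]
        abel
      rw [← key]
      split
      · next h₀ => rw [h₀]; simp
      · rw [toOp_cons]

lemma toOp_collect (S : Sparse) : toOp (collect S) = toOp S := by
  induction S with
  | nil => rfl
  | cons s S ih =>
    have : collect (s :: S) = insertEntry s (collect S) := rfl
    rw [this, toOp_insertEntry, ih, toOp_cons]

lemma toOp_eq_of_agree {S T : Sparse} (h : agree S T = true) : toOp S = toOp T := by
  have h₁ : toOp (collect (S ++ scale (-1) T)) = 0 := by
    rw [List.isEmpty_iff.mp h, toOp_nil]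
  rw [toOp_collect, toOp_append, toOp_scale] at h₁
  have h₂ : toOp S - toOp T = 0 := by
    rw [← h₁, Int.cast_neg, Int.cast_one,
    neg_smul, one_smul, sub_eq_add_neg]
  exact sub_eq_zero.mp h₂

lemma swap_append (S T : Sparse) : swap (S ++ T) = swap S ++ swap T := List.map_append

lemma swap_scale (c : ℤ) (S : Sparse) : swap (scale c S) = scale c (swap S) := by
  simp [swap, scale]

lemma swap_insertEntry (t : ℕ × ℕ × ℤ) (S : Sparse) :
    swap (insertEntry t S) = insertEntry (t.2.1, t.1, t.2.2) (swap S) := by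
  induction S with
  | nil =>
    obtain ⟨i, j, (_ | n) | n⟩ := t <;> rfl
  | cons s S ih =>
    have : swap (s :: S) = (s.2.1, s.1, s.2.2) :: swap S := rfl
    rw [insertEntry, this, insertEntry, Bool.and_comm (Nat.beq s.2.1 _)]
    cases Nat.beq s.1 t.1 && Nat.beq s.2.1 t.2.1
    · rw [cond_false, cond_false, ← ih]
      rfl
    · rw [cond_true, cond_true]
      dsimp only
      generalize s.2.2 + t.2.2 = c
      obtain (_ | n) | n := c <;> rfl

lemma swap_collect (S : Sparse) : swap (collect S) = collect (swap S) := by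
  induction S with
  | nil => rfl
  | cons s S ih =>
    have h₁ : collect (s :: S) = insertEntry s (collect S) := rfl
    have h₂ : collect (swap (s :: S)) =
      insertEntry (s.2.1, s.1, s.2.2) (collect (swap S)) := rfl
    rw [h₁, h₂, swap_insertEntry, ih]

lemma agree_swap {S T : Sparse} (h : agree S T = true) : agree (swap S) (swap T) = true := by
  rw [agree, ← swap_scale, ← swap_append, ← swap_collect, List.isEmpty_iff.mp h]
  rfl

lemma toOp_swap_rowMul (s : ℕ × ℕ × ℤ) (T : Sparse) :
    toOp (swap (rowMul s T)) = toOp (swap T) * ((s.2.2 : ℂ) • unitOp s.2.1 s.1) := by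
  induction T with
  | nil => simp [rowMul, swap]
  | cons t T ih =>
    have h₁ : rowMul s (t :: T) = bif Nat.beq s.2.1 t.1 then
      (s.1, t.2.1, s.2.2 * t.2.2) :: rowMul s T else rowMul s T := rfl
    have h₂ : swap (t :: T) = (t.2.1, t.1, t.2.2) :: swap T := rfl
    rw [h₁, h₂, toOp_cons, add_mul, ← ih, smul_mul_smul_comm, unitOp_mul]
    by_cases h : s.2.1 = t.1
    · rw [show Nat.beq s.2.1 t.1 = true by rw [h]; exact Nat.beq_refl _, cond_true,
        if_pos h.symm]
      have h₃ (x : ℕ × ℕ × ℤ) (X : Sparse) : swap (x :: X) = (x.2.1, x.1, x.2.2) :: swap X := rfl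
      rw [h₃, toOp_cons]
      push_cast
      rw [mul_comm (t.2.2 : ℂ)]
    · rw [if_neg (Ne.symm h), Bool.eq_false_iff.mpr (fun h' => h (Nat.eq_of_beq_eq_true h'))]
      simp

lemma toOp_swap_mul (S T : Sparse) :
    toOp (swap (mul S T)) = toOp (swap T) * toOp (swap S) := by
  induction S with
  | nil => simp [mul, swap]
  | cons s S ih =>
    have h₁ : mul (s :: S) T = rowMul s T ++ mul S T := rfl
    have h₂ : swap (s :: S) = (s.2.1, s.1, s.2.2) :: swap S := rfl
    rw [h₁, swap_append, toOp_append, toOp_swap_rowMul, ih, h₂, toOp_cons, mul_add]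

lemma toOp_swap_bracket (S T : Sparse) :
    toOp (swap (bracket S T)) = ⁅toOp (swap T), toOp (swap S)⁆ := by
  rw [bracket, swap_append, swap_scale, toOp_append, toOp_scale, toOp_swap_mul, toOp_swap_mul,
    Ring.lie_def, Int.cast_neg, Int.cast_one,
    neg_smul, one_smul, sub_eq_add_neg]

end Sparse

namespace E7

open Sparse

/-- The sparse matrix with entries `1` on `P` and `-1` on `N`. -/
def signed (P N : List (ℕ × ℕ)) : Sparse :=
  P.map (fun t => (t.1, t.2, 1)) ++ N.map fun t => (t.1, t.2, -1)

/-- The positive roots of `E₇`; the decimal digits, lowest first, are the coefficients of the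
simple roots. -/
def rootCode : List ℕ :=
  [1, 10, 100, 1000, 10000, 100000, 1000000, 101, 1010, 1100, 11000, 110000, 1100000, 1101, 1110,
   11010, 11100, 111000, 1110000, 1111, 11101, 11110, 111010, 111100, 1111000, 11111, 111101,
   12110, 111110, 1111010, 1111100, 12111, 111111, 1111101, 112110, 1111110, 12211, 112111,
   1111111, 122110, 1112110, 112211, 122111, 1112111, 1122110, 122211, 1112211, 1122111, 1222110,
   123211, 1122211, 1222111, 123221, 1123211, 1222211, 1123221, 1223211, 1223221, 1233211, 1233221,
   1234221, 1234321, 1234322]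

/-- The coefficient of the `i`-th simple root in the `k`-th positive root. -/
def coeff (k : Fin 63) (i : Fin 7) : ℕ := rootCode.getD k 0 / 10 ^ (i : ℕ) % 10

/-- Matrices of root vectors for the positive roots in the 56-dimensional representation. -/
def rootTable : List Sparse :=
  [signed [(6, 8), (7, 9), (10, 11), (12, 14), (15, 17), (18, 21), (34, 37), (38, 40), (41, 43),
   (44, 45), (46, 47), (48, 49)] [],
   signed [(4, 5), (6, 7), (8, 9), (19, 22), (23, 25), (26, 28), (27, 29), (30, 32), (33, 36), (46,
   48), (47, 49), (50, 51)] [],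
   signed [(4, 6), (5, 7), (11, 13), (14, 16), (17, 20), (21, 24), (31, 34), (35, 38), (39, 41),
   (42, 44), (47, 50), (49, 51)] [],
   signed [(3, 4), (7, 10), (9, 11), (16, 19), (20, 23), (24, 27), (28, 31), (32, 35), (36, 39),
   (44, 46), (45, 47), (51, 52)] [],
   signed [(2, 3), (10, 12), (11, 14), (13, 16), (23, 26), (25, 28), (27, 30), (29, 32), (39, 42),
   (41, 44), (43, 45), (52, 53)] [],
   signed [(1, 2), (12, 15), (14, 17), (16, 20), (19, 23), (22, 25), (30, 33), (32, 36), (35, 39),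
   (38, 41), (40, 43), (53, 54)] [],
   signed [(0, 1), (15, 18), (17, 21), (20, 24), (23, 27), (25, 29), (26, 30), (28, 32), (31, 35),
   (34, 38), (37, 40), (54, 55)] [],
   signed [(4, 8), (5, 9), (31, 37), (35, 40), (39, 43), (42, 45)] [(10, 13), (12, 16), (15, 20),
   (18, 24), (46, 50), (48, 51)],
   signed [(3, 5), (16, 22), (20, 25), (24, 29), (44, 48), (45, 49)] [(6, 10), (8, 11), (26, 31),
   (30, 35), (33, 39), (50, 52)],
   signed [(3, 6), (9, 13), (28, 34), (32, 38), (36, 41), (45, 50)] [(5, 10), (14, 19), (17, 23),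
   (21, 27), (42, 46), (49, 52)],
   signed [(2, 4), (13, 19), (25, 31), (29, 35), (41, 46), (43, 47)] [(7, 12), (9, 14), (20, 26),
   (24, 30), (36, 42), (51, 53)],
   signed [(1, 3), (19, 26), (22, 28), (35, 42), (38, 44), (40, 45)] [(10, 15), (11, 17), (13, 20),
   (27, 33), (29, 36), (52, 54)],
   signed [(0, 2), (26, 33), (28, 36), (31, 39), (34, 41), (37, 43)] [(12, 18), (14, 21), (16, 24),
   (19, 27), (22, 29), (53, 55)],
   signed [(3, 8), (12, 19), (15, 23), (18, 27), (28, 37), (32, 40), (36, 43), (48, 52)] [(5, 11),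
   (7, 13), (42, 47), (44, 50)],
   signed [(8, 13), (14, 22), (17, 25), (21, 29), (26, 34), (30, 38), (33, 41), (42, 48)] [(3, 7),
   (4, 10), (45, 51), (47, 52)],
   signed [(2, 5), (6, 12), (8, 14), (13, 22), (33, 42), (41, 48), (43, 49), (50, 53)] [(20, 28),
   (23, 31), (24, 32), (27, 35)],
   signed [(2, 6), (5, 12), (17, 26), (21, 30), (25, 34), (29, 38), (43, 50), (49, 53)] [(9, 16),
   (11, 19), (36, 44), (39, 46)],
   signed [(1, 4), (7, 15), (9, 17), (22, 31), (24, 33), (38, 46), (40, 47), (51, 54)] [(13, 23),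
   (16, 26), (29, 39), (32, 42)],
   signed [(0, 3), (10, 18), (11, 21), (13, 24), (31, 42), (34, 44), (37, 45), (52, 55)] [(19, 30),
   (22, 32), (23, 33), (25, 36)],
   signed [(26, 37), (30, 40), (33, 43), (42, 49), (44, 51), (46, 52)] [(3, 9), (4, 11), (6, 13),
   (12, 22), (15, 25), (18, 29)],
   signed [(2, 8), (5, 14), (7, 16), (10, 19), (25, 37), (29, 40)] [(15, 26), (18, 30), (36, 45),
   (39, 47), (41, 50), (48, 53)],
   signed [(4, 12), (11, 22), (23, 34), (27, 38), (39, 48), (47, 53)] [(2, 7), (8, 16), (17, 28),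
   (21, 32), (33, 44), (43, 51)],
   signed [(1, 5), (24, 36), (27, 39), (30, 42), (38, 48), (40, 49)] [(6, 15), (8, 17), (13, 25),
   (16, 28), (19, 31), (50, 54)],
   signed [(1, 6), (9, 20), (11, 23), (14, 26), (22, 34), (40, 50)] [(5, 15), (21, 33), (29, 41),
   (32, 44), (35, 46), (49, 54)],
   signed [(0, 4), (13, 27), (16, 30), (20, 33), (34, 46), (37, 47)] [(7, 18), (9, 21), (22, 35),
   (25, 39), (28, 42), (51, 55)],
   signed [(4, 14), (6, 16), (15, 28), (18, 32), (23, 37), (27, 40), (39, 49), (41, 51)] [(2, 9),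
   (10, 22), (33, 45), (46, 53)],
   signed [(1, 8), (18, 33), (22, 37), (48, 54)] [(5, 17), (7, 20), (10, 23), (12, 26), (29, 43),
   (32, 45), (35, 47), (38, 50)],
   signed [(2, 10), (3, 12), (8, 19), (9, 22), (17, 31), (20, 34), (21, 35), (24, 38), (33, 46),
   (36, 48), (43, 52), (45, 53)] [],
   signed [(8, 20), (19, 34), (21, 36), (35, 48)] [(1, 7), (4, 15), (11, 25), (14, 28), (27, 41),
   (30, 44), (40, 51), (47, 54)],
   signed [(0, 5), (6, 18), (8, 21), (13, 29), (16, 32), (19, 35), (20, 36), (23, 39), (26, 42),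
   (34, 48), (37, 49), (50, 55)] [],
   signed [(0, 6), (5, 18), (37, 50), (49, 55)] [(9, 24), (11, 27), (14, 30), (17, 33), (22, 38),
   (25, 41), (28, 44), (31, 46)],
   signed [(2, 11), (3, 14), (20, 37), (24, 40), (33, 47), (36, 49)] [(6, 19), (7, 22), (15, 31),
   (18, 35), (41, 52), (44, 53)],
   signed [(10, 25), (12, 28), (19, 37), (35, 49), (38, 51), (46, 54)] [(1, 9), (4, 17), (6, 20),
   (18, 36), (27, 43), (30, 45)],
   signed [(0, 8), (5, 21), (7, 24), (10, 27), (12, 30), (15, 33)] [(22, 40), (25, 43), (28, 45),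
   (31, 47), (34, 50), (48, 55)],
   signed [(1, 10), (14, 31), (16, 34), (30, 46), (32, 48), (40, 52)] [(3, 15), (8, 23), (9, 25),
   (21, 39), (24, 41), (45, 54)],
   signed [(4, 18), (11, 29), (14, 32), (17, 36), (31, 48), (47, 55)] [(0, 7), (8, 24), (19, 38),
   (23, 41), (26, 44), (37, 51)],
   signed [(15, 34), (17, 37), (18, 38), (21, 40)] [(2, 13), (3, 16), (4, 19), (5, 22), (33, 50),
   (36, 51), (39, 52), (42, 53)],
   signed [(1, 11), (6, 23), (7, 25), (16, 37), (18, 39), (30, 47), (32, 49), (44, 54)] [(3, 17),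
   (12, 31), (24, 43), (38, 52)],
   signed [(4, 21), (6, 24), (31, 49), (34, 51)] [(0, 9), (10, 29), (12, 32), (15, 36), (19, 40),
   (23, 43), (26, 45), (46, 55)],
   signed [(8, 26), (9, 28), (11, 31), (13, 34), (21, 42), (24, 44), (27, 46), (29, 48)] [(1, 12),
   (2, 15), (40, 53), (43, 54)],
   signed [(0, 10), (3, 18), (8, 27), (9, 29), (26, 46), (28, 48), (37, 52), (45, 55)] [(14, 35),
   (16, 38), (17, 39), (20, 41)],
   signed [(3, 20), (4, 23), (5, 25), (12, 34), (14, 37), (42, 54)] [(1, 13), (18, 41), (21, 43),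
   (30, 50), (32, 51), (35, 52)],
   signed [(13, 37), (24, 45), (27, 47), (29, 49), (38, 53), (41, 54)] [(1, 14), (2, 17), (6, 26),
   (7, 28), (10, 31), (18, 42)],
   signed [(0, 11), (3, 21), (12, 35), (15, 39), (26, 47), (28, 49)] [(6, 27), (7, 29), (16, 40),
   (20, 43), (34, 52), (44, 55)],
   signed [(2, 18), (17, 42), (20, 44), (23, 46), (25, 48), (43, 55)] [(0, 12), (8, 30), (9, 32),
   (11, 35), (13, 38), (37, 53)],
   signed [(1, 16), (2, 20), (10, 34), (11, 37), (18, 44), (21, 45), (35, 53), (39, 54)] [(4, 26),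
   (5, 28), (27, 50), (29, 51)],
   signed [] [(0, 13), (3, 24), (4, 27), (5, 29), (12, 38), (14, 40), (15, 41), (17, 43), (26, 50),
   (28, 51), (31, 52), (42, 55)],
   signed [(2, 21), (6, 30), (7, 32), (10, 35), (20, 45), (23, 47), (25, 49), (34, 53)] [(0, 14),
   (13, 40), (15, 42), (41, 55)],
   signed [(0, 15), (1, 18), (8, 33), (9, 36), (11, 39), (13, 41), (14, 42), (16, 44), (19, 46),
   (22, 48), (37, 54), (40, 55)] [],
   signed [(5, 31), (7, 34), (9, 37), (29, 52), (32, 53), (36, 54)] [(1, 19), (2, 23), (3, 26),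
   (18, 46), (21, 47), (24, 50)],
   signed [(0, 16), (4, 30), (5, 32), (15, 44), (17, 45), (31, 53)] [(2, 24), (10, 38), (11, 40),
   (23, 50), (25, 51), (39, 55)],
   signed [(0, 17), (1, 21), (13, 43), (16, 45), (19, 47), (22, 49)] [(6, 33), (7, 36), (10, 39),
   (12, 42), (34, 54), (38, 55)],
   signed [(1, 22), (2, 25), (3, 28), (4, 31), (6, 34), (8, 37), (18, 48), (21, 49), (24, 51), (27,
   52), (30, 53), (33, 54)] [],
   signed [(2, 27), (3, 30), (25, 52), (28, 53)] [(0, 19), (5, 35), (7, 38), (9, 40), (15, 46),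
   (17, 47), (20, 50), (36, 55)],
   signed [(10, 41), (11, 43), (12, 44), (14, 45)] [(0, 20), (1, 24), (4, 33), (5, 36), (19, 50),
   (22, 51), (31, 54), (35, 55)],
   signed [(0, 22), (15, 48), (17, 49), (20, 51), (23, 52), (26, 53)] [(2, 29), (3, 32), (4, 35),
   (6, 38), (8, 40), (33, 55)],
   signed [(0, 23), (1, 27), (5, 39), (7, 41), (9, 43), (22, 52)] [(3, 33), (12, 46), (14, 47),
   (16, 50), (28, 54), (32, 55)],
   signed [(3, 36), (4, 39), (6, 41), (8, 43), (12, 48), (14, 49), (16, 51), (19, 52)] [(0, 25),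
   (1, 29), (26, 54), (30, 55)],
   signed [] [(0, 26), (1, 30), (2, 33), (5, 42), (7, 44), (9, 45), (10, 46), (11, 47), (13, 50),
   (22, 53), (25, 54), (29, 55)],
   signed [(0, 28), (1, 32), (2, 36), (10, 48), (11, 49), (13, 51)] [(4, 42), (6, 44), (8, 45),
   (19, 53), (23, 54), (27, 55)],
   signed [(6, 46), (7, 48), (8, 47), (9, 49)] [(0, 31), (1, 35), (2, 39), (3, 42), (13, 52), (16,
   53), (20, 54), (24, 55)],
   signed [(0, 34), (1, 38), (2, 41), (3, 44), (4, 46), (5, 48)] [(8, 50), (9, 51), (11, 52), (14,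
   53), (17, 54), (21, 55)],
   signed [] [(0, 37), (1, 40), (2, 43), (3, 45), (4, 47), (5, 49), (6, 50), (7, 51), (10, 52),
   (12, 53), (15, 54), (18, 55)]]

/-- The matrix of the `k`-th positive root vector. -/
def posS (k : Fin 63) : Sparse := rootTable.getD k []

/-- The matrix of the `k`-th negative root vector. -/
def negS (k : Fin 63) : Sparse := swap (posS k)

/-- The simple roots as positive roots. -/
def simple (i : Fin 7) : Fin 63 := i.castLE (by decide)

/-- The matrix of the `i`-th simple coroot. -/
def corS (i : Fin 7) : Sparse :=
  (posS (simple i)).map (fun t => (t.1, t.1, 1)) ++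
    (posS (simple i)).map fun t => (t.2.1, t.2.1, -1)

/-- The neighbours of a vertex of the Dynkin diagram. -/
def neighbours (i : Fin 7) : List (Fin 7) :=
  [[2], [3], [0, 3], [1, 2, 4], [3, 5], [4, 6], [5]].getD i []

/-- The pairing of the `j`-th simple coroot with the `k`-th positive root. -/
def pairing (j : Fin 7) (k : Fin 63) : ℤ :=
  (neighbours j).foldl (fun c i => c - coeff k i) (2 * coeff k j)

/-- Test whether `X` is up to sign the root matrix in the family of positive root vectors with
code `r`, or zero if there is no such root. -/
def isRootMultiple (X : Sparse) (r : ℕ) : Bool :=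
  if h : rootCode.idxOf r < 63 then
    agree X (posS ⟨rootCode.idxOf r, h⟩) || agree X (scale (-1) (posS ⟨rootCode.idxOf r, h⟩))
  else agree X []

set_option maxRecDepth 10000 in
lemma raise_pos : ∀ (i : Fin 7) (k : Fin 63), isRootMultiple
    (bracket (posS (simple i)) (posS k)) (rootCode.getD k 0 + 10 ^ (i : ℕ)) = true := by
  decide +kernel

lemma lower_pos : ∀ (i : Fin 7) (k : Fin 63), simple i ≠ k → isRootMultiple
    (bracket (negS (simple i)) (posS k)) (rootCode.getD k 0 - 10 ^ (i : ℕ)) = true := by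
  decide +kernel

/-- Pairs `(i, p)` such that the root vectors after the simple ones are the brackets of the `i`-th
simple root vector and the `p`-th root vector. -/
def parents : List (Fin 7 × Fin 63) :=
  [(2, 0), (3, 1), (3, 2), (4, 3), (5, 4), (6, 5), (3, 7), (2, 8), (4, 8), (4, 9), (5, 10), (6,
   11), (1, 13), (4, 13), (4, 14), (5, 15), (5, 16), (6, 17), (4, 19), (5, 20), (3, 21), (5, 21),
   (6, 22), (6, 23), (3, 25), (5, 25), (6, 26), (5, 27), (6, 28), (2, 31), (5, 31), (6, 32), (4,
   34), (6, 34), (5, 36), (4, 37), (6, 37), (6, 39), (4, 41), (6, 41), (6, 42), (5, 44), (3, 45),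
   (6, 45), (5, 47), (1, 49), (6, 49), (5, 50), (6, 52), (5, 53), (5, 55), (4, 56), (4, 57), (3,
   59), (2, 60), (0, 61)]

/-- The pair `(i, p)` belonging to the `k`-th positive root. -/
def parent (k : Fin 63) : Fin 7 × Fin 63 := parents.getD (k - 7) (0, 0)

lemma parent_spec : ∀ k : Fin 63, 7 ≤ (k : ℕ) → (parent k).2 < k ∧
    agree (bracket (posS (simple (parent k).1)) (posS (parent k).2)) (posS k) = true ∧
    ∀ i, coeff k i = coeff (parent k).2 i + if i = (parent k).1 then 1 else 0 := by
  decide +kernel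

lemma agree_cor_simple : ∀ j i : Fin 7, agree (bracket (corS j) (posS (simple i)))
    (scale (pairing j (simple i)) (posS (simple i))) = true := by
  decide +kernel

lemma agree_raise_lower_of_ne : ∀ i j : Fin 7, i ≠ j →
    agree (bracket (posS (simple i)) (negS (simple j))) [] = true := by
  decide +kernel

lemma agree_serre : ∀ i j : Fin 7, i ≠ j → 
    if pairing i (simple j) = 0 then
      agree (bracket (posS (simple i)) (posS (simple j))) [] = true
    else pairing i (simple j) = -1 ∧
      agree (bracket (posS (simple i)) (bracket (posS (simple i)) (posS (simple j)))) [] =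
        true := by
  decide +kernel

lemma agree_raise_lower : ∀ i : Fin 7,
    agree (bracket (posS (simple i)) (negS (simple i))) (corS i) = true := by
  decide +kernel

lemma pairing_simple (j i : Fin 7) : pairing j (simple i) = CartanMatrix.E₇ j i := by
  fin_cases j <;> fin_cases i <;> rfl

lemma pairing_eq (j : Fin 7) (k : Fin 63) :
    pairing j k = ∑ i, CartanMatrix.E₇ j i * coeff k i := by
  fin_cases j <;>
  simp [pairing, neighbours, Fin.sum_univ_seven, CartanMatrix.E₇] <;> ring

/-- The positive root vectors. -/
noncomputable def pos (k : Fin 63) : SeqOp := toOp (posS k)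

/-- The negative root vectors. -/
noncomputable def neg (k : Fin 63) : SeqOp := toOp (negS k)

/-- The simple coroots. -/
noncomputable def cor (i : Fin 7) : SeqOp := toOp (corS i)

lemma swap_swap (S : Sparse) : swap (swap S) = S := by
  simp [swap, Function.comp_def]

lemma swap_corS (i : Fin 7) : swap (corS i) = corS i := by
  simp [swap, corS, Function.comp_def]

lemma lie_raise_lower (i : Fin 7) : ⁅pos (simple i), neg (simple i)⁆ = cor i := by
  rw [pos, neg, ← toOp_bracket, toOp_eq_of_agree (agree_raise_lower i), cor]

lemma lie_raise_lower_of_ne {i j : Fin 7} (h : i ≠ j) :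
    ⁅pos (simple i), neg (simple j)⁆ = 0 := by
  rw [pos, neg, ← toOp_bracket, toOp_eq_of_agree (agree_raise_lower_of_ne i j h), toOp_nil]

lemma pos_eq_lie (k : Fin 63) (h : 7 ≤ (k : ℕ)) :
    pos k = ⁅pos (simple (parent k).1), pos (parent k).2⁆ := by
  rw [pos, pos, pos, ← toOp_bracket, toOp_eq_of_agree (parent_spec k h).2.1]

lemma neg_eq_lie (k : Fin 63) (h : 7 ≤ (k : ℕ)) :
    neg k = ⁅neg (parent k).2, neg (simple (parent k).1)⁆ := by
  rw [neg, neg, neg, negS, negS, negS, ← toOp_swap_bracket,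
    toOp_eq_of_agree (agree_swap (parent_spec k h).2.1)]

lemma eq_simple_of_lt {k : Fin 63} (h : (k : ℕ) < 7) : k = simple ⟨k, h⟩ := rfl

lemma pairing_parent (j : Fin 7) (k : Fin 63) (h : 7 ≤ (k : ℕ)) :
    pairing j k = pairing j (simple (parent k).1) + pairing j (parent k).2 := by
  rw [pairing_simple, pairing_eq, pairing_eq]
  simp_rw [(parent_spec k h).2.2]
  push_cast
  simp_rw [mul_add, Finset.sum_add_distrib]
  simp [add_comm]

lemma lie_cor_pos (j : Fin 7) (k : Fin 63) :
    ⁅cor j, pos k⁆ = (pairing j k : ℂ) • pos k := by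
  induction k using WellFoundedLT.induction with
  | ind k ih =>
    rcases lt_or_ge (k : ℕ) 7 with h | h
    · rw [eq_simple_of_lt h, cor, pos, ← toOp_bracket, toOp_eq_of_agree (agree_cor_simple j _),
        toOp_scale]
    · have h₁ : ⁅cor j, pos (simple (parent k).1)⁆ =
          (pairing j (simple (parent k).1) : ℂ) • pos (simple (parent k).1) := by
        rw [cor, pos, ← toOp_bracket, toOp_eq_of_agree (agree_cor_simple j _), toOp_scale]
      rw [pos_eq_lie k h, leibniz_lie, h₁, ih _ (parent_spec k h).1, pairing_parent j k h]
      push_cast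
      rw [lie_smul, smul_lie, add_smul]

lemma lie_cor_neg (j : Fin 7) (k : Fin 63) :
    ⁅cor j, neg k⁆ = -(pairing j k : ℂ) • neg k := by
  have h₀ (i : Fin 7) : ⁅cor j, neg (simple i)⁆ =
      -(pairing j (simple i) : ℂ) • neg (simple i) := by
    have := toOp_eq_of_agree (agree_swap (agree_cor_simple j i))
    rw [toOp_swap_bracket, swap_corS, swap_scale, toOp_scale] at this
    rw [neg_smul, neg, negS, ← this, cor, lie_skew]
  induction k using WellFoundedLT.induction with
  | ind k ih =>
    rcases lt_or_ge (k : ℕ) 7 with h | h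
    · rw [eq_simple_of_lt h, h₀]
    · rw [neg_eq_lie k h, leibniz_lie, h₀, ih _ (parent_spec k h).1, pairing_parent j k h]
      push_cast
      rw [lie_smul, smul_lie, ← add_smul]
      congr 1
      ring

lemma lie_cor_cor (i j : Fin 7) : ⁅cor i, cor j⁆ = 0 := by
  rw [← lie_raise_lower j, leibniz_lie, lie_cor_pos, lie_cor_neg, lie_smul, smul_lie, neg_smul,
    add_neg_cancel]

lemma serre_pos (i j : Fin 7) : ((LieAlgebra.ad ℂ SeqOp (pos (simple i))) ^
    (-CartanMatrix.E₇ i j).toNat) ⁅pos (simple i), pos (simple j)⁆ = 0 := by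
  rw [← pairing_simple]
  by_cases hij : i = j
  · subst hij
    simp
  have h := agree_serre i j hij
  split_ifs at h with h₀
  · rw [pos, pos, ← toOp_bracket, toOp_eq_of_agree h, toOp_nil, map_zero]
  · rw [h.1]
    change ⁅pos (simple i), ⁅pos (simple i), pos (simple j)⁆⁆ = 0
    rw [pos, pos, ← toOp_bracket, ← toOp_bracket, toOp_eq_of_agree h.2, toOp_nil]

lemma serre_neg (i j : Fin 7) : ((LieAlgebra.ad ℂ SeqOp (neg (simple i))) ^
    (-CartanMatrix.E₇ i j).toNat) ⁅neg (simple i), neg (simple j)⁆ = 0 := by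
  rw [← pairing_simple]
  by_cases hij : i = j
  · subst hij
    simp
  have h := agree_serre i j hij
  split_ifs at h with h₀
  · have := toOp_eq_of_agree (agree_swap h)
    rw [toOp_swap_bracket] at this
    rw [← lie_skew, neg, neg, negS, negS, this]
    simp [swap]
  · have := toOp_eq_of_agree (agree_swap h.2)
    rw [toOp_swap_bracket, toOp_swap_bracket] at this
    rw [h.1]
    change ⁅neg (simple i), ⁅neg (simple i), neg (simple j)⁆⁆ = 0
    rw [← lie_skew, ← lie_skew (neg (simple i)), neg_lie, neg_neg, neg, neg, negS, negS, this]
    rfl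

/-- The Lie algebra of operators generated by the simple root vectors. -/
noncomputable def model : LieSubalgebra ℂ SeqOp :=
  LieSubalgebra.lieSpan ℂ SeqOp
    (Set.range (fun i => pos (simple i)) ∪ Set.range fun i => neg (simple i))

lemma pos_simple_mem (i : Fin 7) : pos (simple i) ∈ model :=
  LieSubalgebra.subset_lieSpan (Or.inl ⟨i, rfl⟩)

lemma neg_simple_mem (i : Fin 7) : neg (simple i) ∈ model :=
  LieSubalgebra.subset_lieSpan (Or.inr ⟨i, rfl⟩)

lemma cor_mem (i : Fin 7) : cor i ∈ model := by
  rw [← lie_raise_lower]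
  exact model.lie_mem (pos_simple_mem i) (neg_simple_mem i)

lemma pos_mem (k : Fin 63) : pos k ∈ model := by
  induction k using WellFoundedLT.induction with
  | ind k ih =>
    rcases lt_or_ge (k : ℕ) 7 with h | h
    · exact pos_simple_mem ⟨k, h⟩
    · rw [pos_eq_lie k h]
      exact model.lie_mem (pos_simple_mem _) (ih _ (parent_spec k h).1)

lemma neg_mem (k : Fin 63) : neg k ∈ model := by
  induction k using WellFoundedLT.induction with
  | ind k ih =>
    rcases lt_or_ge (k : ℕ) 7 with h | h
    · exact neg_simple_mem ⟨k, h⟩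
    · rw [neg_eq_lie k h]
      exact model.lie_mem (ih _ (parent_spec k h).1) (neg_simple_mem _)

/-- The root vectors and simple coroots. -/
noncomputable def rootVector : Fin 63 ⊕ Fin 63 ⊕ Fin 7 → SeqOp := Sum.elim pos (Sum.elim neg cor)

lemma mem_span_of_isRootMultiple {X : Sparse} {r : ℕ} (h : isRootMultiple X r = true) :
    toOp X ∈ Submodule.span ℂ (Set.range pos) := by
  rw [isRootMultiple] at h
  split_ifs at h with hr
  · rw [Bool.or_eq_true] at h
    rcases h with h | h
    · rw [toOp_eq_of_agree h]
      exact Submodule.subset_span ⟨_, rfl⟩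
    · rw [toOp_eq_of_agree h, toOp_scale]
      exact Submodule.smul_mem _ _ (Submodule.subset_span ⟨_, rfl⟩)
  · rw [toOp_eq_of_agree h, toOp_nil]
    exact zero_mem _

lemma swap_mem_span_of_isRootMultiple {X : Sparse} {r : ℕ} (h : isRootMultiple X r = true) :
    toOp (swap X) ∈ Submodule.span ℂ (Set.range neg) := by
  rw [isRootMultiple] at h
  split_ifs at h with hr
  · rw [Bool.or_eq_true] at h
    rcases h with h | h
    · rw [toOp_eq_of_agree (agree_swap h)]
      exact Submodule.subset_span ⟨_, rfl⟩
    · rw [toOp_eq_of_agree (agree_swap h), swap_scale, toOp_scale]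
      exact Submodule.smul_mem _ _ (Submodule.subset_span ⟨_, rfl⟩)
  · rw [toOp_eq_of_agree (agree_swap h)]
    exact zero_mem _

lemma model_le_span : model.toSubmodule ≤ Submodule.span ℂ (Set.range rootVector) := by
  set S := Submodule.span ℂ (Set.range rootVector)
  have hp (k) : pos k ∈ S := Submodule.subset_span ⟨Sum.inl k, rfl⟩
  have hn (k) : neg k ∈ S := Submodule.subset_span ⟨Sum.inr (Sum.inl k), rfl⟩
  have hc (k) : cor k ∈ S := Submodule.subset_span ⟨Sum.inr (Sum.inr k), rfl⟩
  have hP : Submodule.span ℂ (Set.range pos) ≤ S :=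
    Submodule.span_le.mpr (by rintro _ ⟨k, rfl⟩; exact hp k)
  have hN : Submodule.span ℂ (Set.range neg) ≤ S :=
    Submodule.span_le.mpr (by rintro _ ⟨k, rfl⟩; exact hn k)
  let N : LieSubalgebra ℂ SeqOp :=
    { carrier := {x | x ∈ S ∧ ∀ y ∈ S, ⁅x, y⁆ ∈ S}
      add_mem' := fun hx hy => ⟨S.add_mem hx.1 hy.1, fun z hz => by
        rw [add_lie]
        exact S.add_mem (hx.2 z hz) (hy.2 z hz)⟩
      zero_mem' := ⟨S.zero_mem, fun z _ => by rw [zero_lie]; exact S.zero_mem⟩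
      smul_mem' := fun c x hx => ⟨S.smul_mem c hx.1, fun z hz => by
        rw [smul_lie]
        exact S.smul_mem c (hx.2 z hz)⟩
      lie_mem' := fun hx hy => ⟨hx.2 _ hy.1, fun z hz => by
        rw [lie_lie]
        exact S.sub_mem (hx.2 _ (hy.2 z hz)) (hy.2 _ (hx.2 z hz))⟩ }
  have hM : model ≤ N := by
    refine LieSubalgebra.lieSpan_le.mpr ?_
    have aux {x : SeqOp} (hx : x ∈ S) (h : ∀ b, ⁅x, rootVector b⁆ ∈ S) : x ∈ N := by
      refine ⟨hx, fun y hy => ?_⟩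
      induction hy using Submodule.span_induction with
      | mem y hy => obtain ⟨b, rfl⟩ := hy; exact h b
      | zero => rw [lie_zero]; exact S.zero_mem
      | add y z _ _ hy hz => rw [lie_add]; exact S.add_mem hy hz
      | smul c y _ hy => rw [lie_smul]; exact S.smul_mem c hy
    rintro x (⟨i, rfl⟩ | ⟨i, rfl⟩)
    · refine aux (hp _) ?_
      rintro (k | k | j)
      · change ⁅pos (simple i), pos k⁆ ∈ S
        rw [pos, pos, ← toOp_bracket]
        exact hP (mem_span_of_isRootMultiple (raise_pos i k))
      · change ⁅pos (simple i), neg k⁆ ∈ S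
        by_cases hik : simple i = k
        · rw [← hik, lie_raise_lower]
          exact hc i
        · have h := swap_mem_span_of_isRootMultiple (lower_pos i k hik)
          rw [toOp_swap_bracket, negS, swap_swap, ← lie_skew] at h
          exact hN ((Submodule.neg_mem_iff _).mp h)
      · change ⁅pos (simple i), cor j⁆ ∈ S
        rw [← lie_skew, lie_cor_pos]
        exact S.neg_mem (S.smul_mem _ (hp _))
    · refine aux (hn _) ?_
      rintro (k | k | j)
      · change ⁅neg (simple i), pos k⁆ ∈ S
        by_cases hik : simple i = k
        · rw [← hik, ← lie_skew, lie_raise_lower]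
          exact S.neg_mem (hc i)
        · rw [pos, neg, ← toOp_bracket]
          exact hP (mem_span_of_isRootMultiple (lower_pos i k hik))
      · change ⁅neg (simple i), neg k⁆ ∈ S
        rw [← lie_skew, neg, neg, negS, negS, ← toOp_swap_bracket]
        exact S.neg_mem (hN (swap_mem_span_of_isRootMultiple (raise_pos i k)))
      · change ⁅neg (simple i), cor j⁆ ∈ S
        rw [← lie_skew, lie_cor_neg]
        exact S.neg_mem (S.smul_mem _ (hn _))
  exact fun x hx => (hM hx).1

end E7

section SemisimplePart

variable {L : Type*} [LieRing L] [LieAlgebra ℂ L]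

open LieAlgebra Module.End

/-- Every element of a complex Killing Lie algebra has a semisimple part: it acts by a scalar on
generalized eigenspaces. -/
lemma exists_semisimple_part [FiniteDimensional ℂ L] [IsKilling ℂ L] (h : L) :
    ∃ s : L, (ad ℂ L s).IsSemisimple ∧
    ∀ (x : L) (μ : ℂ), x ∈ (ad ℂ L h).maxGenEigenspace μ → ⁅s, x⁆ = μ • x := by
  obtain ⟨N, -, S, hS₀, hN, hS, hSN⟩ := (ad ℂ L h).exists_isNilpotent_isSemisimple
  replace hS₀ : Commute (ad ℂ L h) S := Algebra.commute_of_mem_adjoin_self hS₀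
  rw [eq_sub_of_add_eq hSN.symm] at hN
  have aux {μ : ℂ} {y : L} (hy : y ∈ (ad ℂ L h).maxGenEigenspace μ) : S y = μ • y := by
    rw [maxGenEigenspace_eq] at hy
    rw [apply_eq_of_mem_of_comm_of_isFinitelySemisimple_of_isNil hy hS₀ hS.isFinitelySemisimple hN]
  have h_der (y z : L) (α β : ℂ) (hy : y ∈ (ad ℂ L h).maxGenEigenspace α)
      (hz : z ∈ (ad ℂ L h).maxGenEigenspace β) : S ⁅y, z⁆ = ⁅S y, z⁆ + ⁅y, S z⁆ := by
    have hyz : ⁅y, z⁆ ∈ (ad ℂ L h).maxGenEigenspace (α + β) :=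
      LieModule.lie_mem_maxGenEigenspace_toEnd hy hz
    rw [aux hy, aux hz, aux hyz, smul_lie, lie_smul, ← add_smul]
  replace h_der (y z : L) : S ⁅y, z⁆ = ⁅S y, z⁆ + ⁅y, S z⁆ := by
    have hy : y ∈ ⨆ α : ℂ, (ad ℂ L h).maxGenEigenspace α := by
      rw [iSup_maxGenEigenspace_eq_top]; trivial
    have hz : z ∈ ⨆ α : ℂ, (ad ℂ L h).maxGenEigenspace α := by
      rw [iSup_maxGenEigenspace_eq_top]; trivial
    induction hy using Submodule.iSup_induction' with
    | mem α y hy =>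
      induction hz using Submodule.iSup_induction' with
      | mem β z hz => exact h_der y z α β hy hz
      | zero => simp
      | add _ _ _ _ h h' => simp only [lie_add, map_add, h, h']; abel
    | zero => simp
    | add _ _ _ _ h h' => simp only [add_lie, map_add, h, h']; abel
  replace h_der : ∀ y z : L, S ⁅y, z⁆ = ⁅y, S z⁆ - ⁅z, S y⁆ := by
    simp_rw [← lie_skew (S _) _, add_comm, ← sub_eq_add_neg] at h_der; assumption
  obtain ⟨s, hs⟩ := LieDerivation.IsKilling.exists_eq_ad (⟨S, h_der⟩ : LieDerivation ℂ L L)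
  have hs' : ad ℂ L s = S := by
    rw [← LieDerivation.coe_ad_apply_eq_ad_apply s, hs]
  exact ⟨s, hs' ▸ hS, fun x μ hx => by rw [← ad_apply (R := ℂ), hs', aux hx]⟩

lemma lie_eq_smul_of_lie_eq_smul {h s : L}
    (hs : ∀ (x : L) (μ : ℂ), x ∈ (ad ℂ L h).maxGenEigenspace μ → ⁅s, x⁆ = μ • x) {x : L} {μ : ℂ}
    (hx : ⁅h, x⁆ = μ • x) : ⁅s, x⁆ = μ • x :=
  hs x μ (eigenspace_le_maxGenEigenspace (mem_eigenspace_iff.mpr hx))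

/-- Eigenvalues of the semisimple part are eigenvalues, inside any invariant subspace. -/
lemma exists_eigenvector_of_semisimple_part [FiniteDimensional ℂ L] {h s : L}
    (hs : ∀ (x : L) (μ : ℂ), x ∈ (ad ℂ L h).maxGenEigenspace μ → ⁅s, x⁆ = μ • x)
    (W : Submodule ℂ L) (hW : ∀ x ∈ W, ⁅h, x⁆ ∈ W) {μ : ℂ} {x : L} (hxW : x ∈ W) (hx : x ≠ 0)
    (hμ : ⁅s, x⁆ = μ • x) : ∃ y ∈ W, y ≠ 0 ∧ ⁅h, y⁆ = μ • y := by
  have hsh : ⁅s, h⁆ = 0 := by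
    rw [lie_eq_smul_of_lie_eq_smul hs (x := h) (μ := 0) (by simp), zero_smul]
  let U : Submodule ℂ L := W ⊓ eigenspace (ad ℂ L s) μ
  have hU : ∀ y ∈ U, ad ℂ L h y ∈ U := by
    refine fun y hy => ⟨hW y hy.1, mem_eigenspace_iff.mpr ?_⟩
    have := mem_eigenspace_iff.mp hy.2
    rw [ad_apply] at this
    rw [ad_apply, ad_apply, leibniz_lie, hsh, zero_lie, zero_add, this, lie_smul]
  have hxU : x ∈ U := ⟨hxW, mem_eigenspace_iff.mpr hμ⟩
  have : Nontrivial U := ⟨⟨x, hxU⟩, 0, fun h' => hx (congrArg Subtype.val h')⟩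
  obtain ⟨ν, hν⟩ := exists_eigenvalue ((ad ℂ L h).restrict hU)
  obtain ⟨⟨y, hyU⟩, hy⟩ := hν.exists_hasEigenvector
  have h₁ : ⁅h, y⁆ = ν • y := congrArg Subtype.val hy.apply_eq_smul
  have hy0 : y ≠ 0 := fun h' => hy.2 (Subtype.ext h')
  have h₂ : μ • y = ν • y := by
    rw [← lie_eq_smul_of_lie_eq_smul hs h₁]
    exact (mem_eigenspace_iff.mp hyU.2).symm
  exact ⟨y, hyU.1, hy0, by rw [h₁, h₂]⟩

lemma natCast_of_highest [FiniteDimensional ℂ L] {h e f s : L} (t : IsSl2Triple h e f)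
    (hs : ∀ (x : L) (μ : ℂ), x ∈ (ad ℂ L h).maxGenEigenspace μ → ⁅s, x⁆ = μ • x) {x : L} {μ : ℂ}
    (hx : x ≠ 0) (hex : ⁅e, x⁆ = 0) (hμ : ⁅s, x⁆ = μ • x) : ∃ n : ℕ, μ = n := by
  obtain ⟨y, hy, hy0, h₁⟩ := exists_eigenvector_of_semisimple_part hs
    (LinearMap.ker (ad ℂ L e)) (fun y hy => by
      have hy' : ⁅e, y⁆ = 0 := hy
      change ⁅e, ⁅h, y⁆⁆ = 0
      rw [leibniz_lie, hy', lie_zero, add_zero, ← lie_skew e h, t.lie_h_e_nsmul, neg_lie, nsmul_lie]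
      simp [hy']) (x := x) hex hx hμ
  exact (⟨hy0, h₁, hy⟩ : t.HasPrimitiveVectorWith y μ).exists_nat

lemma intCast_of_eigenvector [FiniteDimensional ℂ L] {h e f s : L} (t : IsSl2Triple h e f)
    (he : IsNilpotent (ad ℂ L e))
    (hs : ∀ (x : L) (μ : ℂ), x ∈ (ad ℂ L h).maxGenEigenspace μ → ⁅s, x⁆ = μ • x) {x : L} {μ : ℂ}
    (hx : x ≠ 0) (hμ : ⁅s, x⁆ = μ • x) : ∃ n : ℤ, μ = n := by
  have hse : ⁅s, e⁆ = (2 : ℂ) • e := lie_eq_smul_of_lie_eq_smul hs (by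
    rw [t.lie_h_e_nsmul, two_smul, two_smul])
  obtain ⟨N, hN⟩ := he
  have key : ∀ (k : ℕ) (x : L) (μ : ℂ), ((ad ℂ L e) ^ k) x = 0 → x ≠ 0 → ⁅s, x⁆ = μ • x →
      ∃ n : ℤ, μ = n := by
    intro k
    induction k with
    | zero => exact fun x μ h₁ h₂ _ => absurd h₁ h₂
    | succ k ih =>
      intro x μ h₁ h₂ h₃
      by_cases hex : ⁅e, x⁆ = 0
      · obtain ⟨n, hn⟩ := natCast_of_highest t hs h₂ hex h₃
        exact ⟨n, by simp [hn]⟩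
      · obtain ⟨n, hn⟩ := ih ⁅e, x⁆ (2 + μ) (by rw [← h₁, pow_succ]; rfl) hex (by
          rw [leibniz_lie, hse, h₃, smul_lie, lie_smul, add_smul])
        exact ⟨n - 2, by push_cast; rw [← hn]; ring⟩
  exact key N x μ (by rw [hN]; rfl) hx hμ

end SemisimplePart

namespace E7

open CartanMatrix Sparse

/-- The images of the Serre generators. -/
noncomputable def generator : Generators (Fin 7) → model
  | .H i => ⟨cor i, cor_mem i⟩
  | .E i => ⟨pos (simple i), pos_simple_mem i⟩
  | .F i => ⟨neg (simple i), neg_simple_mem i⟩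

lemma lift_generator_eq_zero {x : FreeLieAlgebra ℂ (Generators (Fin 7))}
    (hx : x ∈ Relations.toSet ℂ CartanMatrix.E₇) : FreeLieAlgebra.lift ℂ generator x = 0 := by
  have pow_ad (x y : FreeLieAlgebra ℂ (Generators (Fin 7))) (n : ℕ) :
      ((FreeLieAlgebra.lift ℂ generator ((LieAlgebra.ad ℂ _ x ^ n) y) : model) : SeqOp) =
      (LieAlgebra.ad ℂ SeqOp (FreeLieAlgebra.lift ℂ generator x) ^ n)
        (FreeLieAlgebra.lift ℂ generator y) := by
    induction n with
    | zero => rfl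
    | succ n ih =>
      rw [pow_succ', pow_succ', Module.End.mul_apply, Module.End.mul_apply, ← ih]
      simp
  rcases hx with ((((⟨⟨i, j⟩, rfl⟩ | ⟨⟨i, j⟩, rfl⟩) | ⟨⟨i, j⟩, rfl⟩) | ⟨⟨i, j⟩, rfl⟩) |
    ⟨⟨i, j⟩, rfl⟩) | ⟨⟨i, j⟩, rfl⟩ <;> refine Subtype.ext ?_
  · simp [Relations.HH, FreeLieAlgebra.lift_of_apply, generator, lie_cor_cor]
  · by_cases h : i = j
    · simp [Relations.EF, h, FreeLieAlgebra.lift_of_apply, generator, lie_raise_lower]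
    · simp [Relations.EF, h, FreeLieAlgebra.lift_of_apply, generator, lie_raise_lower_of_ne h]
  · simp only [Relations.HE, Function.uncurry_apply_pair, Function.comp_apply, map_sub,
      LieHom.map_lie, map_zsmul, FreeLieAlgebra.lift_of_apply, generator]
    change ⁅cor i, pos (simple j)⁆ - CartanMatrix.E₇ i j • pos (simple j) = 0
    rw [lie_cor_pos, pairing_simple, Int.cast_smul_eq_zsmul, sub_self]
  · simp only [Relations.HF, Function.uncurry_apply_pair, Function.comp_apply, map_add,
      LieHom.map_lie, map_zsmul, FreeLieAlgebra.lift_of_apply, generator]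
    change ⁅cor i, neg (simple j)⁆ + CartanMatrix.E₇ i j • neg (simple j) = 0
    rw [lie_cor_neg, pairing_simple, neg_smul, Int.cast_smul_eq_zsmul, neg_add_cancel]
  · simp only [Relations.adE, Function.uncurry_apply_pair]
    rw [pow_ad]
    simpa [FreeLieAlgebra.lift_of_apply, generator] using serre_pos i j
  · simp only [Relations.adF, Function.uncurry_apply_pair]
    rw [pow_ad]
    simpa [FreeLieAlgebra.lift_of_apply, generator] using serre_neg i j

/-- A matrix entry of an operator. -/
noncomputable def entry (p q : ℕ) : SeqOp →ₗ[ℂ] ℂ where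
  toFun x := (show Module.End ℂ (ℕ → ℂ) from x) (Pi.single q 1) p
  map_add' _ _ := rfl
  map_smul' _ _ := rfl

/-- A matrix entry of a sparse matrix. -/
def entryS (p q : ℕ) (S : Sparse) : ℤ :=
  S.foldr (fun t c => bif Nat.beq p t.1 && Nat.beq q t.2.1 then t.2.2 + c else c) 0

lemma entry_toOp (p q : ℕ) (S : Sparse) : entry p q (toOp S) = entryS p q S := by
  induction S with
  | nil => simp [entryS]
  | cons t S ih =>
    have h : entryS p q (t :: S) =
      bif Nat.beq p t.1 && Nat.beq q t.2.1 then t.2.2 + entryS p q S else entryS p q S := rfl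
    have h₂ : entry p q (unitOp t.1 t.2.1) = if p = t.1 ∧ q = t.2.1 then 1 else 0 := by
      change (Pi.single t.1 ((Pi.single q 1 : ℕ → ℂ) t.2.1) : ℕ → ℂ) p = _
      rw [Pi.single_apply, Pi.single_apply, ← ite_and]
      simp only [eq_comm]
    rw [h, toOp_cons, map_add, map_smul, ih, h₂]
    by_cases h₃ : p = t.1 ∧ q = t.2.1
    · rw [if_pos h₃, h₃.1, h₃.2, Nat.beq_refl, Nat.beq_refl]
      simp
    · have : (Nat.beq p t.1 && Nat.beq q t.2.1) = false := by
        rw [Bool.eq_false_iff, ne_eq, Bool.and_eq_true]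
        exact fun h => h₃ ⟨Nat.eq_of_beq_eq_true h.1, Nat.eq_of_beq_eq_true h.2⟩
      rw [if_neg h₃, this]
      simp

lemma entryS_posS (k : Fin 63) : ∃ p q, entryS p q (posS k) ≠ 0 := by
  have : ∀ k : Fin 63, entryS ((posS k).headD (0, 0, 0)).1 ((posS k).headD (0, 0, 0)).2.1
      (posS k) ≠ 0 := by
    decide +kernel
  exact ⟨_, _, this k⟩

lemma pos_ne_zero (k : Fin 63) : pos k ≠ 0 := by
  obtain ⟨p, q, h⟩ := entryS_posS k
  intro h₀
  have := entry_toOp p q (posS k)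
  rw [show toOp (posS k) = 0 from h₀, map_zero] at this
  exact h (by exact_mod_cast this.symm)

section Existence

variable {L : Type*} [LieRing L] [LieAlgebra ℂ L]

/-- An isomorphism of a Lie algebra with the algebra of operators `E7.model`. -/
structure IsModel (φ : L →ₗ⁅ℂ⁆ SeqOp) : Prop where
  injective : Function.Injective φ
  range_eq : φ.range = model

lemma exists_isModel [LieAlgebra.IsSimple ℂ L] (ψ : L ≃ₗ⁅ℂ⁆ LieAlgebra.e₇ ℂ) :
    ∃ φ : L →ₗ⁅ℂ⁆ SeqOp, IsModel φ := by
  let g := FreeLieAlgebra.lift ℂ generator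
  have hI : Relations.toIdeal ℂ CartanMatrix.E₇ ≤ g.ker :=
    LieSubmodule.lieSpan_le.mpr fun x hx => g.mem_ker.mpr (lift_generator_eq_zero hx)
  let q : LieAlgebra.e₇ ℂ →ₗ[ℂ] model :=
    (Relations.toIdeal ℂ CartanMatrix.E₇).toSubmodule.liftQ (g : _ →ₗ[ℂ] model)
      fun x hx => LinearMap.mem_ker.mpr (g.mem_ker.mp (hI hx))
  have hq (x) : q (LieSubmodule.Quotient.mk x) = g x := rfl
  let q' : LieAlgebra.e₇ ℂ →ₗ⁅ℂ⁆ model :=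
    { q with
      map_lie' := fun {x y} => by
        obtain ⟨x, rfl⟩ := Quot.exists_rep x
        obtain ⟨y, rfl⟩ := Quot.exists_rep y
        exact g.map_lie x y }
  let φ : L →ₗ⁅ℂ⁆ SeqOp := (model.incl.comp q').comp ψ.toLieHom
  have hmem (x) : (g x : SeqOp) ∈ φ.range :=
    ⟨ψ.symm (LieSubmodule.Quotient.mk x), congrArg (fun y => (q' y : SeqOp)) (ψ.apply_symm_apply _)⟩
  have hrange : φ.range = model := by
    refine le_antisymm ?_ (LieSubalgebra.lieSpan_le.mpr ?_)
    · rintro _ ⟨x, rfl⟩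
      exact (q' (ψ x)).2
    · rintro x (⟨i, rfl⟩ | ⟨i, rfl⟩)
      · simpa [g, FreeLieAlgebra.lift_of_apply, generator] using
          hmem (FreeLieAlgebra.of ℂ (Generators.E i))
      · simpa [g, FreeLieAlgebra.lift_of_apply, generator] using
          hmem (FreeLieAlgebra.of ℂ (Generators.F i))
  refine ⟨φ, LieHom.ker_eq_bot _ |>.mp ?_, hrange⟩
  refine (LieAlgebra.IsSimple.eq_bot_or_eq_top φ.ker).resolve_right fun h => ?_
  obtain ⟨x, hx⟩ : pos (simple 0) ∈ φ.range := hrange ▸ pos_simple_mem 0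
  refine pos_ne_zero _ (hx.symm.trans (φ.mem_ker.mp ?_))
  rw [h]
  trivial

end Existence

end E7

section Openness

open NormedSpace Topology

variable {V : Type*} [NormedAddCommGroup V] [NormedSpace ℂ V] [CompleteSpace V]

lemma eventually_exists_exp_apply (A : V →L[ℂ] V →L[ℂ] V) (K : Submodule ℂ V) [CompleteSpace K]
    {x₀ : V} (hx₀ : x₀ ∈ K) (h : ∀ y, ∃ g, ∃ k ∈ K, y = A g x₀ + k) :
    ∀ᶠ y in 𝓝 x₀, ∃ g, ∃ k ∈ K, exp (A g) k = y := by
  let F : V × K → V := fun p => exp (A p.1) (p.2 : V)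
  have h₁ : HasStrictFDerivAt (fun p : V × K => exp (A p.1))
      ((1 : (V →L[ℂ] V) →L[ℂ] (V →L[ℂ] V)).comp (A.comp (ContinuousLinearMap.fst ℂ V K)))
      (0, ⟨x₀, hx₀⟩) := by
    refine HasStrictFDerivAt.comp (g := exp) (f := fun p : V × K => A p.1) _ ?_
      (A.comp (ContinuousLinearMap.fst ℂ V K)).hasStrictFDerivAt
    simpa using hasStrictFDerivAt_exp_zero (𝕂 := ℂ) (𝔸 := V →L[ℂ] V)
  have h₂ := h₁.clm_apply (K.subtypeL.comp (ContinuousLinearMap.snd ℂ V K)).hasStrictFDerivAt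
  have h₃ := h₂.map_nhds_eq_of_surj (LinearMap.range_eq_top.mpr fun y => by
    obtain ⟨g, k, hk, rfl⟩ := h y
    exact ⟨(g, ⟨k, hk⟩), by simp [add_comm]⟩)
  have h₄ : (fun p : V × K => exp (A p.1) ((K.subtypeL.comp (ContinuousLinearMap.snd ℂ V K)) p))
      (0, ⟨x₀, hx₀⟩) = x₀ := by simp
  rw [← h₄, ← h₃]
  exact Filter.eventually_map.mpr (Filter.Eventually.of_forall fun p => ⟨p.1, p.2, p.2.2, rfl⟩)

lemma exp_neg_mul_exp (M : V →L[ℂ] V) : exp (-M) * exp M = 1 := by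
  let _ : NormedAlgebra ℚ (V →L[ℂ] V) := NormedAlgebra.restrictScalars ℚ ℂ _
  rw [← exp_add_of_commute ((Commute.refl M).neg_left), neg_add_cancel, exp_zero]

lemma exp_mul_exp_neg (M : V →L[ℂ] V) : exp M * exp (-M) = 1 := by
  simpa using exp_neg_mul_exp (-M)

lemma exp_apply_bilinear (B : V →L[ℂ] V →L[ℂ] V) (M : V →L[ℂ] V)
    (hM : ∀ x y, M (B x y) = B (M x) y + B x (M y)) (x y : V) :
    exp M (B x y) = B (exp M x) (exp M y) := by
  have hd (N : V →L[ℂ] V) (v : V) (t : ℂ) :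
      HasDerivAt (fun u : ℂ => exp (u • N) v) (N (exp (t • N) v)) t :=
    (hasDerivAt_exp_smul_const' N t).clm_apply (hasDerivAt_const t v) |>.congr_deriv (by simp)
  let G : ℂ → V := fun t => exp (t • -M) (B (exp (t • M) x) (exp (t • M) y))
  have hG (t : ℂ) : HasDerivAt G 0 t := by
    have h₁ : HasDerivAt (fun u : ℂ => B (exp (u • M) x) (exp (u • M) y))
        (B (M (exp (t • M) x)) (exp (t • M) y) + B (exp (t • M) x) (M (exp (t • M) y))) t :=
      ((B.hasFDerivAt.comp_hasDerivAt t (hd M x t)).clm_apply (hd M y t))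
    refine ((hasDerivAt_exp_smul_const (-M) t).clm_apply h₁).congr_deriv ?_
    rw [← hM, mul_apply_eq_comp, neg_apply, map_neg,
      neg_add_cancel]
  have hconst := is_const_of_deriv_eq_zero (fun t => (hG t).differentiableAt)
    (fun t => (hG t).deriv) 1 0
  have h₀ : G 0 = B x y := by simp [G]
  have h₁ : exp M (G 1) = B (exp M x) (exp M y) := by
    change exp M (exp ((1 : ℂ) • -M) _) = _
    rw [one_smul, one_smul, ← mul_apply_eq_comp, exp_mul_exp_neg]
    rfl
  rw [← h₁, hconst, h₀]

lemma hasSum_exp_apply (M : V →L[ℂ] V) (v : V) :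
    HasSum (fun n : ℕ => ((n.factorial : ℂ)⁻¹) • (M ^ n) v) (exp M v) := by
  have h := exp_series_hasSum_exp' (𝕂 := ℂ) M
  simpa using h.mapL (ContinuousLinearMap.apply ℂ V v)

lemma exp_apply_of_eigenvector (M : V →L[ℂ] V) {v : V} {μ : ℂ} (h : M v = μ • v) :
    exp M v = Complex.exp μ • v := by
  have hpow (n : ℕ) : (M ^ n) v = μ ^ n • v := by
    induction n with
    | zero => simp
    | succ n ih => rw [pow_succ', mul_apply_eq_comp, ih, map_smul, h, smul_smul, pow_succ]
  refine (hasSum_exp_apply M v).unique ?_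
  have h₁ := (exp_series_hasSum_exp' (𝕂 := ℂ) μ).smul_const v
  simp_rw [hpow]
  rw [Complex.exp_eq_exp_ℂ]
  simpa [smul_smul] using h₁

lemma exp_apply_of_cube_eq_zero (M : V →L[ℂ] V) {v : V} (h : M (M (M v)) = 0) :
    exp M v = v + M v + (2 : ℂ)⁻¹ • M (M v) := by
  have hpow (n : ℕ) (hn : n ∉ Finset.range 3) : ((n.factorial : ℂ)⁻¹) • (M ^ n) v = 0 := by
    obtain ⟨m, rfl⟩ := Nat.exists_eq_add_of_le (not_lt.mp fun h => hn (Finset.mem_range.mpr h))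
    have : (M ^ 3) v = 0 := h
    rw [add_comm 3 m, pow_add, mul_apply_eq_comp, this, map_zero, smul_zero]
  refine (hasSum_exp_apply M v).unique ?_
  have := hasSum_sum_of_ne_finset_zero (L := .unconditional ℕ) hpow
  simpa [Finset.sum_range_succ, pow_succ, Nat.factorial] using this

variable {L : Type*} [LieRing L] [LieAlgebra ℂ L]

variable (L) in
lemma exists_continuous_bracket [FiniteDimensional ℂ L] :
    ∃ (b : L ≃ₗ[ℂ] (Fin (Module.finrank ℂ L) → ℂ))
    (B : (Fin (Module.finrank ℂ L) → ℂ) →L[ℂ] (Fin (Module.finrank ℂ L) → ℂ) →L[ℂ]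
      (Fin (Module.finrank ℂ L) → ℂ)), ∀ x y, B x y = b ⁅b.symm x, b.symm y⁆ := by
  let b := (Module.finBasis ℂ L).equivFun
  let V := Fin (Module.finrank ℂ L) → ℂ
  let B₀ : V →ₗ[ℂ] V →ₗ[ℂ] V := LinearMap.mk₂ ℂ (fun x y => b ⁅b.symm x, b.symm y⁆)
    (by simp) (by simp) (by simp) (by simp)
  exact ⟨b, LinearMap.toContinuousLinearMap (LinearMap.toContinuousLinearMap.toLinearMap ∘ₗ B₀),
    fun _ _ => rfl⟩

lemma exists_exp_lieEquiv {b : L ≃ₗ[ℂ] V} {B : V →L[ℂ] V →L[ℂ] V}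
    (hB : ∀ x y, B x y = b ⁅b.symm x, b.symm y⁆) (g : V) :
    ∃ σ : L ≃ₗ⁅ℂ⁆ L, ∀ x, σ x = b.symm (exp (B g) (b x)) := by
  have hder (g x y : V) : B g (B x y) = B (B g x) y + B x (B g y) := by
    simp only [hB, b.symm_apply_apply]
    rw [leibniz_lie, map_add]
  exact ⟨{ toFun x := b.symm (exp (B g) (b x))
           map_add' x y := by simp
           map_smul' c x := by simp
           map_lie' := fun {x y} => by
             have := exp_apply_bilinear B (B g) (hder g) (b x) (b y)
             rw [hB, hB, b.symm_apply_apply, b.symm_apply_apply] at this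
             rw [this, b.symm_apply_apply]
           invFun x := b.symm (exp (-B g) (b x))
           left_inv x := by
             beta_reduce
             rw [b.apply_symm_apply, ← mul_apply_eq_comp, exp_neg_mul_exp,
               one_apply_eq_self, b.symm_apply_apply]
           right_inv x := by
             beta_reduce
             rw [b.apply_symm_apply, ← mul_apply_eq_comp, exp_mul_exp_neg,
               one_apply_eq_self, b.symm_apply_apply] }, fun _ => rfl⟩

/-- The automorphism `exp (ad g)`. -/
lemma exists_lieEquiv_exp [FiniteDimensional ℂ L] (g : L) : ∃ σ : L ≃ₗ⁅ℂ⁆ L,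
    (∀ (y : L) (μ : ℂ), ⁅g, y⁆ = μ • y → σ y = Complex.exp μ • y) ∧
    ∀ y : L, ⁅g, ⁅g, ⁅g, y⁆⁆⁆ = 0 → σ y = y + ⁅g, y⁆ + (2 : ℂ)⁻¹ • ⁅g, ⁅g, y⁆⁆ := by
  obtain ⟨b, B, hB⟩ := exists_continuous_bracket L
  obtain ⟨σ, hσ⟩ := exists_exp_lieEquiv hB (b g)
  have hB' (y : L) : B (b g) (b y) = b ⁅g, y⁆ := by simp [hB]
  refine ⟨σ, fun y μ h => ?_, fun y h => ?_⟩
  · rw [hσ, exp_apply_of_eigenvector _ (μ := μ) (by rw [hB', h, map_smul]), map_smul,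
      b.symm_apply_apply]
  · rw [hσ, exp_apply_of_cube_eq_zero _ (by rw [hB', hB', hB', h, map_zero]), hB', hB']
    simp

/-- If `K + [L, x₀] = L`, then elements near `x₀` are conjugate to elements of `K`. -/
lemma eventually_exists_lieEquiv [FiniteDimensional ℂ L] (K : Submodule ℂ L) {x₀ : L} (hx₀ : x₀ ∈ K)
    (h : ∀ y : L, ∃ g : L, ∃ k ∈ K, y = ⁅g, x₀⁆ + k) (d : L) :
    ∀ᶠ t in 𝓝 (0 : ℂ), ∃ σ : L ≃ₗ⁅ℂ⁆ L, ∃ k ∈ K, σ k = x₀ + t • d := by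
  obtain ⟨b, B, hB⟩ := exists_continuous_bracket L
  have hopen := eventually_exists_exp_apply B (K.map b.toLinearMap) (x₀ := b x₀)
    ⟨x₀, hx₀, rfl⟩ (fun y => by
      obtain ⟨g, k, hk, hy⟩ := h (b.symm y)
      refine ⟨b g, b k, ⟨k, hk, rfl⟩, ?_⟩
      rw [hB, b.symm_apply_apply, b.symm_apply_apply, ← map_add, ← hy, b.apply_symm_apply])
  have hlim : Filter.Tendsto (fun t : ℂ => b x₀ + t • b d) (𝓝 0) (𝓝 (b x₀)) := by
    have : Continuous (fun t : ℂ => b x₀ + t • b d) := by fun_prop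
    simpa using this.tendsto 0
  filter_upwards [hlim.eventually hopen] with t ht
  obtain ⟨g, _, ⟨k, hk, rfl⟩, hgk⟩ := ht
  obtain ⟨σ, hσ⟩ := exists_exp_lieEquiv hB g
  refine ⟨σ, k, hk, ?_⟩
  rw [hσ, b.symm_apply_eq, map_add, map_smul]
  exact hgk

end Openness

section Regular

open LieAlgebra LieSubalgebra Module Topology

attribute [local instance] LieRing.ofAssociativeRing

variable {L : Type*} [LieRing L] [LieAlgebra ℂ L]

lemma lieEquiv_mem_engel (σ : L ≃ₗ⁅ℂ⁆ L) {x z : L} (h : z ∈ engel ℂ x) :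
    σ z ∈ engel ℂ (σ x) := by
  rw [mem_engel_iff] at h ⊢
  obtain ⟨n, hn⟩ := h
  have key (n : ℕ) (z : L) : (ad ℂ L (σ x) ^ n) (σ z) = σ ((ad ℂ L x ^ n) z) := by
    induction n with
    | zero => rfl
    | succ n ih =>
      rw [pow_succ', pow_succ', Module.End.mul_apply, Module.End.mul_apply, ih, ad_apply,
        ad_apply, σ.map_lie]
  exact ⟨n, by rw [key, hn, map_zero]⟩

lemma lieEquiv_mem_engel_iff (σ : L ≃ₗ⁅ℂ⁆ L) {x z : L} :
    σ z ∈ engel ℂ (σ x) ↔ z ∈ engel ℂ x :=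
  ⟨fun h => by simpa using lieEquiv_mem_engel σ.symm h, lieEquiv_mem_engel σ⟩

variable [FiniteDimensional ℂ L]

lemma isRegular_of_lieEquiv {σ : L ≃ₗ⁅ℂ⁆ L} {x : L} (h : IsRegular ℂ (σ x)) : IsRegular ℂ x := by
  rw [isRegular_iff_finrank_engel_eq_rank] at h ⊢
  rw [← h]
  have : (engel ℂ (σ x)).toSubmodule =
      (engel ℂ x).toSubmodule.map σ.toLinearEquiv.toLinearMap := by
    ext z
    refine ⟨fun hz => ⟨σ.symm z, ?_, σ.apply_symm_apply z⟩, ?_⟩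
    · rw [← σ.apply_symm_apply z] at hz
      exact (lieEquiv_mem_engel_iff σ).mp hz
    · rintro ⟨z, hz, rfl⟩
      exact lieEquiv_mem_engel σ hz
  exact ((LinearEquiv.ofEq _ _ this).trans
    (σ.toLinearEquiv.submoduleMap (engel ℂ x).toSubmodule).symm).finrank_eq.symm

lemma engel_le_engel_of_isRegular {x y : L} (hx : IsRegular ℂ x) (hy : y ∈ engel ℂ x) :
    engel ℂ x ≤ engel ℂ y := by
  have hcard : (finrank ℂ L : Cardinal) ≤ Cardinal.mk ℂ :=
    Cardinal.natCast_le_aleph0.trans (Cardinal.infinite_iff.mp inferInstance)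
  refine engel_isBot_of_isMin hcard (engel ℂ x) ⟨engel ℂ x, x, self_mem_engel _ _, rfl⟩ le_rfl ?_
    ⟨engel ℂ y, y, hy, rfl⟩
  rintro ⟨_, z, hz, rfl⟩ hzx
  have : finrank ℂ (engel ℂ x) ≤ finrank ℂ (engel ℂ z) := by
    rw [(isRegular_iff_finrank_engel_eq_rank ℂ x).mp hx]
    apply rank_le_finrank_engel
  exact (LieSubalgebra.toSubmodule_injective (Submodule.eq_of_le_of_finrank_le hzx this)).ge

lemma engel_eq_engel_of_isRegular {x y : L} (hx : IsRegular ℂ x) (hy : IsRegular ℂ y)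
    (h : y ∈ engel ℂ x) : engel ℂ y = engel ℂ x := by
  refine (LieSubalgebra.toSubmodule_injective (Submodule.eq_of_le_of_finrank_le
    (engel_le_engel_of_isRegular hx h) ?_)).symm
  exact ((isRegular_iff_finrank_engel_eq_rank ℂ y).mp hy).trans
    ((isRegular_iff_finrank_engel_eq_rank ℂ x).mp hx).symm |>.le

lemma exists_eq_lie_add_of_engel (x y : L) : ∃ g : L, ∃ k ∈ engel ℂ x, y = ⁅g, x⁆ + k := by
  have h := (LinearMap.isCompl_iSup_ker_pow_iInf_range_pow (ad ℂ L x)).sup_eq_top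
  have hy : y ∈ (⨆ n, (ad ℂ L x ^ n).ker) ⊔ ⨅ n, (ad ℂ L x ^ n).range := h ▸ trivial
  obtain ⟨k, hk, r, hr, rfl⟩ := Submodule.mem_sup.mp hy
  obtain ⟨g, rfl⟩ := (Submodule.mem_iInf _).mp hr 1
  refine ⟨-g, k, ?_, ?_⟩
  · have : (⨆ n, (ad ℂ L x ^ n).ker) ≤ (engel ℂ x).toSubmodule :=
      iSup_le fun n z hz => (mem_engel_iff ..).mpr ⟨n, hz⟩
    exact this hk
  · rw [neg_lie, lie_skew, pow_one, ad_apply, add_comm]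

lemma finite_not_isRegular (x d : L) {t₀ : ℂ} (h : IsRegular ℂ (x + t₀ • d)) :
    {t : ℂ | ¬ IsRegular ℂ (x + t • d)}.Finite := by
  classical
  let b := finBasis ℂ L
  let P := ((ad ℂ L).toLinearMap.polyCharpoly b).coeff (rank ℂ L)
  let p : Polynomial ℂ := MvPolynomial.aeval
    (fun i => Polynomial.C (b.repr x i) + Polynomial.X * Polynomial.C (b.repr d i)) P
  have hp (t : ℂ) : p.eval t = MvPolynomial.eval (b.repr (x + t • d)) P := by
    rw [← Polynomial.coe_evalRingHom, ← MvPolynomial.coe_aeval_eq_eval]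
    change (Polynomial.evalRingHom t) (MvPolynomial.aeval _ P) = _
    rw [MvPolynomial.aeval_def, MvPolynomial.hom_eval₂]
    congr 1
    · ext; simp
    · ext i
      simp only [map_add, map_smul, Finsupp.add_apply, Finsupp.smul_apply, smul_eq_mul, map_mul,
        Polynomial.coe_evalRingHom, Polynomial.eval_C, Polynomial.eval_X]
  have hreg (t : ℂ) : IsRegular ℂ (x + t • d) ↔ p.eval t ≠ 0 := by
    rw [hp]
    exact isRegular_iff_coeff_polyCharpoly_rank_ne_zero ℂ b _
  have hp₀ : p ≠ 0 := fun h₀ => (hreg t₀).mp h (by rw [h₀, Polynomial.eval_zero])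
  refine (p.rootSet_finite ℂ).subset fun t ht => ?_
  rw [Set.mem_ofPred_eq, hreg, not_not] at ht
  rw [Polynomial.mem_rootSet]
  exact ⟨hp₀, by simpa using ht⟩

/-- Engel subalgebras of regular elements of a complex Lie algebra are conjugate. -/
lemma exists_lieEquiv_engel {x y : L} (hx : IsRegular ℂ x) (hy : IsRegular ℂ y) :
    ∃ σ : L ≃ₗ⁅ℂ⁆ L, ∀ z, z ∈ engel ℂ x → σ z ∈ engel ℂ y := by
  let S : Set ℂ := {t | IsRegular ℂ (x + t • (y - x))}
  have h₀ : (0 : ℂ) ∈ S := by simpa [S] using hx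
  have h₁ : (1 : ℂ) ∈ S := by simpa [S] using hy
  have hS : IsPreconnected S := by
    have := Set.Countable.isPathConnected_compl_of_one_lt_rank
      (by rw [Complex.rank_real_complex]; exact Cardinal.one_lt_two)
      (finite_not_isRegular x (y - x) h₀).countable
    rw [Set.compl_ofPred] at this
    simpa using this.isConnected.isPreconnected
  let P : ℂ → ℂ → Prop := fun s t => ∃ σ : L ≃ₗ⁅ℂ⁆ L, ∀ z,
    z ∈ engel ℂ (x + s • (y - x)) ↔ σ z ∈ engel ℂ (x + t • (y - x))
  have hP : P 0 1 := by
    refine hS.induction₂ P ?_ ?_ ?_ h₀ h₁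
    · intro s hs
      have h := eventually_exists_lieEquiv (engel ℂ (x + s • (y - x))).toSubmodule
        (self_mem_engel ℂ _) (fun z => exists_eq_lie_add_of_engel _ z) (y - x)
      have hlim : Filter.Tendsto (fun t : ℂ => t - s) (𝓝 s) (𝓝 0) := by
        have : Continuous (fun t : ℂ => t - s) := by fun_prop
        simpa using this.tendsto s
      filter_upwards [nhdsWithin_le_nhds (hlim.eventually h), self_mem_nhdsWithin] with t ht htS
      obtain ⟨σ, k, hk, hσ⟩ := ht
      rw [add_assoc, ← add_smul, add_sub_cancel] at hσ
      refine ⟨σ, fun z => ?_⟩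
      rw [← hσ, lieEquiv_mem_engel_iff]
      have hk' : IsRegular ℂ k := by
        refine isRegular_of_lieEquiv (σ := σ) ?_
        rw [hσ]
        exact htS
      rw [engel_eq_engel_of_isRegular hs hk' hk]
    · rintro r s t - - - ⟨σ, hσ⟩ ⟨τ, hτ⟩
      exact ⟨σ.trans τ, fun z => (hσ z).trans (hτ (σ z))⟩
    · rintro s t - - ⟨σ, hσ⟩
      exact ⟨σ.symm, fun z => by rw [hσ, σ.apply_symm_apply]⟩
  obtain ⟨σ, hσ⟩ := hP
  refine ⟨σ, fun z hz => ?_⟩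
  have := (hσ z).mp (by simpa using hz)
  simpa using this

lemma exists_isRegular_near (K : Submodule ℂ L) {x₀ : L} (hx₀ : x₀ ∈ K)
    (h : ∀ y : L, ∃ g : L, ∃ k ∈ K, y = ⁅g, x₀⁆ + k) : ∃ k ∈ K, IsRegular ℂ k := by
  obtain ⟨r, hr⟩ := exists_isRegular ℂ L
  have hfin := finite_not_isRegular x₀ (r - x₀) (t₀ := 1) (by simpa using hr)
  have h₁ : ∀ᶠ t in 𝓝[≠] (0 : ℂ), IsRegular ℂ (x₀ + t • (r - x₀)) := by
    have h₂ : ({t : ℂ | ¬ IsRegular ℂ (x₀ + t • (r - x₀))} \ {0}).Finite := hfin.sdiff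
    have h₃ := h₂.isClosed.isOpen_compl.mem_nhds (x := (0 : ℂ)) (by simp)
    filter_upwards [nhdsWithin_le_nhds h₃, self_mem_nhdsWithin] with t ht ht'
    by_contra hn
    exact ht ⟨hn, ht'⟩
  obtain ⟨t, ⟨σ, k, hk, hσ⟩, ht⟩ := (((eventually_exists_lieEquiv K hx₀ h
    (r - x₀)).filter_mono nhdsWithin_le_nhds).and h₁).exists
  exact ⟨k, hk, isRegular_of_lieEquiv (σ := σ) (by rw [hσ]; exact ht)⟩

/-- Semisimple elements are conjugate to elements of an abelian subspace `H` with
`L = [L, y₀] + H` for some `y₀ ∈ H`. -/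
lemma exists_lieEquiv_mem {s : L} (hs : (ad ℂ L s).IsSemisimple) (H : Submodule ℂ L)
    (hH : ∀ x ∈ H, ∀ y ∈ H, ⁅x, y⁆ = 0) {y₀ : L} (hy₀ : y₀ ∈ H)
    (h : ∀ y : L, ∃ g : L, ∃ k ∈ H, y = ⁅g, y₀⁆ + k) : ∃ σ : L ≃ₗ⁅ℂ⁆ L, σ s ∈ H := by
  obtain ⟨c, hc, hcr⟩ : ∃ c ∈ (ad ℂ L s).ker, IsRegular ℂ c := by
    refine exists_isRegular_near (x₀ := s) _ (by simp) fun y => ?_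
    have hr : ((ad ℂ L s).ker ⊔ (ad ℂ L s).range) = ⊤ := by
      obtain ⟨q, hq, hcompl⟩ := (Module.End.isSemisimple_iff.mp hs) (ad ℂ L s).ker
        (fun x hx => by
          rw [Submodule.mem_comap, LinearMap.mem_ker.mp hx]
          exact zero_mem _)
      rw [eq_top_iff, ← hcompl.sup_eq_top]
      refine sup_le le_sup_left (le_trans ?_ le_sup_right)
      have hinj : Function.Injective ((ad ℂ L s).restrict hq) := by
        rw [← LinearMap.ker_eq_bot, LinearMap.ker_eq_bot']
        intro x hx
        exact Subtype.ext (Submodule.disjoint_def.mp hcompl.disjoint x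
          (congrArg Subtype.val hx) x.2)
      intro x hx
      obtain ⟨z, hz⟩ := LinearMap.injective_iff_surjective.mp hinj ⟨x, hx⟩
      exact ⟨z, congrArg Subtype.val hz⟩
    obtain ⟨k, hk, _, ⟨g, rfl⟩, rfl⟩ := Submodule.mem_sup.mp (hr ▸ trivial :
      y ∈ (ad ℂ L s).ker ⊔ (ad ℂ L s).range)
    exact ⟨-g, k, hk, by rw [neg_lie, lie_skew, ad_apply, add_comm]⟩
  obtain ⟨k, hk, hkr⟩ := exists_isRegular_near H hy₀ h
  have hle : H ≤ (engel ℂ k).toSubmodule :=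
    fun x hx => (mem_engel_iff ..).mpr ⟨1, by rw [pow_one, ad_apply, hH k hk x hx]⟩
  have hrank : finrank ℂ (engel ℂ k) ≤ finrank ℂ H := by
    rw [(isRegular_iff_finrank_engel_eq_rank ℂ k).mp hkr]
    refine (rank_le_finrank_engel ℂ y₀).trans ?_
    have hdisj : Disjoint (engel ℂ y₀).toSubmodule (ad ℂ L y₀).range := by
      have hsq : (ad ℂ L y₀).range ≤ ((ad ℂ L y₀).range).map (ad ℂ L y₀) := by
        rintro _ ⟨x, rfl⟩
        obtain ⟨g, k, hk, rfl⟩ := h x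
        refine ⟨-ad ℂ L y₀ g, neg_mem ⟨g, rfl⟩, ?_⟩
        have hk₀ : ad ℂ L y₀ k = 0 := hH y₀ hy₀ k hk
        rw [map_add, hk₀, add_zero, map_neg, ad_apply, ad_apply, ad_apply, ← lie_skew g, lie_neg]
      have hpow (n : ℕ) : (ad ℂ L y₀).range ≤ (ad ℂ L y₀ ^ n).range := by
        induction n with
        | zero => rintro x -; exact ⟨x, rfl⟩
        | succ n ih =>
          refine hsq.trans ?_
          rintro _ ⟨x, hx, rfl⟩
          obtain ⟨z, rfl⟩ := ih hx
          exact ⟨z, by rw [pow_succ']; rfl⟩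
      have := (LinearMap.isCompl_iSup_ker_pow_iInf_range_pow (ad ℂ L y₀)).disjoint
      refine this.mono (fun x hx => ?_) (le_iInf hpow)
      obtain ⟨n, hn⟩ := (mem_engel_iff ..).mp hx
      exact Submodule.mem_iSup_of_mem n hn
    have h₁ := Submodule.finrank_add_finrank_le_of_disjoint hdisj
    have h₂ : H ⊔ (ad ℂ L y₀).range = ⊤ := by
      rw [eq_top_iff]
      rintro y -
      obtain ⟨g, k, hk, rfl⟩ := h y
      rw [add_comm, ← lie_skew]
      exact Submodule.add_mem_sup hk (neg_mem ⟨g, rfl⟩)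
    have h₃ := Submodule.finrank_add_le_finrank_add_finrank H (ad ℂ L y₀).range
    rw [h₂, finrank_top] at h₃
    have h₄ : finrank ℂ (engel ℂ y₀) = finrank ℂ (engel ℂ y₀).toSubmodule := rfl
    omega
  have heq := Submodule.eq_of_le_of_finrank_le hle hrank
  obtain ⟨σ, hσ⟩ := exists_lieEquiv_engel hcr hkr
  refine ⟨σ, ?_⟩
  rw [heq]
  refine hσ s ((mem_engel_iff ..).mpr ⟨1, ?_⟩)
  have hc' : ⁅s, c⁆ = 0 := hc
  rw [pow_one, ad_apply, ← lie_skew, hc', neg_zero]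

end Regular

namespace E7

open Sparse

/-- Twice the inverse Cartan matrix of type `E₇`. -/
def inverseCartan : Matrix (Fin 7) (Fin 7) ℤ :=
  !![4, 4, 6, 8, 6, 4, 2;
     4, 7, 8, 12, 9, 6, 3;
     6, 8, 12, 16, 12, 8, 4;
     8, 12, 16, 24, 18, 12, 6;
     6, 9, 12, 18, 15, 10, 5;
     4, 6, 8, 12, 10, 8, 4;
     2, 3, 4, 6, 5, 4, 3]

lemma sum_inverseCartan_mul_pairing : ∀ (k : Fin 63) (i : Fin 7),
    ∑ j, inverseCartan i j * pairing j k = 2 * coeff k i := by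
  decide +kernel

lemma sum_pairing_mul_inverseCartan : ∀ j l : Fin 7,
    ∑ i, pairing j (simple i) * inverseCartan i l = if j = l then 2 else 0 := by
  decide +kernel

lemma coeff_simple_self (i j : Fin 7) : coeff (simple i) j = if i = j then 1 else 0 := by
  revert i j
  decide +kernel

/-- The value of the `k`-th positive root at the point with simple root values `n`. -/
def rootValue (k : Fin 63) (n : Fin 7 → ℂ) : ℂ := ∑ i, coeff k i * n i

lemma rootValue_simple (i : Fin 7) (n : Fin 7 → ℂ) : rootValue (simple i) n = n i := by
  simp [rootValue, coeff_simple_self]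

/-- The element of the Cartan subalgebra with given simple root values. -/
noncomputable def torus : (Fin 7 → ℂ) →ₗ[ℂ] SeqOp where
  toFun n := ∑ j, ((2 : ℂ)⁻¹ * ∑ i, n i * inverseCartan i j) • cor j
  map_add' m n := by
    simp only [Pi.add_apply, add_mul, Finset.sum_add_distrib, mul_add, add_smul]
  map_smul' c n := by
    simp only [Pi.smul_apply, smul_eq_mul, RingHom.id_apply, Finset.smul_sum, smul_smul, mul_assoc,
      ← Finset.mul_sum]
    simp only [mul_left_comm c]

lemma torus_apply (n : Fin 7 → ℂ) :
    torus n = ∑ j, ((2 : ℂ)⁻¹ * ∑ i, n i * inverseCartan i j) • cor j := rfl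

lemma rootValue_eq (k : Fin 63) (n : Fin 7 → ℂ) : rootValue k n =
    ∑ j, ((2 : ℂ)⁻¹ * ∑ i, n i * inverseCartan i j) * pairing j k := by
  have h (i : Fin 7) :
      (coeff k i : ℂ) = (2 : ℂ)⁻¹ * ∑ j, (inverseCartan i j : ℂ) * pairing j k := by
    have : ((∑ j, inverseCartan i j * pairing j k : ℤ) : ℂ) = ((2 * coeff k i : ℤ) : ℂ) := by
      rw [sum_inverseCartan_mul_pairing]
    push_cast at this
    rw [this]
    ring
  simp only [rootValue, h, Finset.mul_sum, Finset.sum_mul]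
  rw [Finset.sum_comm]
  refine Finset.sum_congr rfl fun j _ => Finset.sum_congr rfl fun i _ => by ring

lemma lie_torus_pos (n : Fin 7 → ℂ) (k : Fin 63) :
    ⁅torus n, pos k⁆ = rootValue k n • pos k := by
  rw [torus_apply, sum_lie, rootValue_eq, Finset.sum_smul]
  exact Finset.sum_congr rfl fun j _ => by rw [smul_lie, lie_cor_pos, smul_smul]

lemma lie_torus_neg (n : Fin 7 → ℂ) (k : Fin 63) :
    ⁅torus n, neg k⁆ = -rootValue k n • neg k := by
  rw [torus_apply, sum_lie, rootValue_eq, ← Finset.sum_neg_distrib, Finset.sum_smul]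
  exact Finset.sum_congr rfl fun j _ => by rw [smul_lie, lie_cor_neg, smul_smul, mul_neg]

lemma lie_torus_cor (n : Fin 7 → ℂ) (i : Fin 7) : ⁅torus n, cor i⁆ = 0 := by
  rw [torus_apply, sum_lie]
  exact Finset.sum_eq_zero fun j _ => by rw [smul_lie, lie_cor_cor, smul_zero]

lemma lie_torus_torus (m n : Fin 7 → ℂ) : ⁅torus m, torus n⁆ = 0 := by
  rw [torus_apply n, lie_sum]
  exact Finset.sum_eq_zero fun j _ => by rw [lie_smul, lie_torus_cor, smul_zero]

lemma sum_mul_inverseCartan (a : Fin 7 → ℂ) (l : Fin 7) :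
    ∑ i, (∑ j, a j * pairing j (simple i)) * (inverseCartan i l : ℂ) = 2 * a l := by
  simp only [Finset.sum_mul]
  rw [Finset.sum_comm]
  have h (j : Fin 7) : ∑ i, a j * pairing j (simple i) * (inverseCartan i l : ℂ) =
      a j * if j = l then 2 else 0 := by
    have : ((∑ i, pairing j (simple i) * inverseCartan i l : ℤ) : ℂ) =
        ((if j = l then 2 else 0 : ℤ) : ℂ) := by
      rw [sum_pairing_mul_inverseCartan]
    push_cast at this
    simp only [mul_assoc, ← Finset.mul_sum, this]
  rw [Finset.sum_congr rfl fun j _ => h j]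
  simp [mul_comm]

lemma sum_smul_cor (a : Fin 7 → ℂ) :
    ∑ j, a j • cor j = torus fun i => ∑ j, a j * pairing j (simple i) := by
  rw [torus_apply]
  refine Finset.sum_congr rfl fun l _ => ?_
  rw [sum_mul_inverseCartan, inv_mul_cancel_left₀ two_ne_zero]

lemma cor_eq_torus (j : Fin 7) : cor j = torus fun i => (pairing j (simple i) : ℂ) := by
  simpa [ite_smul] using sum_smul_cor (fun i => if i = j then 1 else 0)

lemma torus_injective : Function.Injective torus := by
  refine (injective_iff_map_eq_zero torus).mpr fun n hn => funext fun i => ?_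
  have := lie_torus_pos n (simple i)
  rw [hn, zero_lie, rootValue_simple] at this
  exact (smul_eq_zero.mp this.symm).resolve_right (pos_ne_zero _)

lemma torus_mem (n : Fin 7 → ℂ) : torus n ∈ model := by
  rw [torus_apply]
  exact sum_mem fun j _ => model.smul_mem _ (cor_mem j)

/-- The eigenvalues of an element of the Cartan subalgebra. -/
def weight (n : Fin 7 → ℂ) : Fin 63 ⊕ Fin 63 ⊕ Fin 7 → ℂ :=
  Sum.elim (fun k => rootValue k n) (Sum.elim (fun k => -rootValue k n) fun _ => 0)

lemma lie_torus_rootVector (n : Fin 7 → ℂ) (b : Fin 63 ⊕ Fin 63 ⊕ Fin 7) :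
    ⁅torus n, rootVector b⁆ = weight n b • rootVector b := by
  rcases b with k | k | i
  · exact lie_torus_pos n k
  · exact lie_torus_neg n k
  · exact (lie_torus_cor n i).trans (zero_smul ℂ _).symm

lemma neg_ne_zero (k : Fin 63) : neg k ≠ 0 := by
  have : ∀ k : Fin 63, entryS ((negS k).headD (0, 0, 0)).1 ((negS k).headD (0, 0, 0)).2.1
      (negS k) ≠ 0 := by
    decide +kernel
  intro h₀
  have h := entry_toOp ((negS k).headD (0, 0, 0)).1 ((negS k).headD (0, 0, 0)).2.1 (negS k)
  rw [show toOp (negS k) = 0 from h₀, map_zero] at h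
  exact this k (by exact_mod_cast h.symm)

lemma rootValue_pow_ten (k : Fin 63) :
    rootValue k (fun i => 10 ^ (i : ℕ)) = (rootCode.getD k 0 : ℕ) := by
  have : ∀ k : Fin 63, ∑ i, coeff k i * 10 ^ (i : ℕ) = rootCode.getD k 0 := by
    decide +kernel
  rw [← this k, rootValue]
  push_cast
  rfl

lemma rootCode_injective : ∀ j k : Fin 63, rootCode.getD j 0 = rootCode.getD k 0 → j = k := by
  decide +kernel

lemma rootCode_pos : ∀ k : Fin 63, 0 < rootCode.getD k 0 := by
  decide +kernel

lemma linearIndependent_rootVector : LinearIndependent ℂ rootVector := by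
  let T := LieAlgebra.ad ℂ SeqOp (torus fun i => 10 ^ (i : ℕ))
  let w : Fin 63 ⊕ Fin 63 → ℂ :=
    Sum.elim (fun k => (rootCode.getD k 0 : ℕ)) fun k => -(rootCode.getD k 0 : ℕ)
  have hT : ∀ b, T (Sum.elim pos neg b) = w b • Sum.elim pos neg b := by
    rintro (k | k)
    · change _ = ((rootCode.getD k 0 : ℕ) : ℂ) • _
      rw [← rootValue_pow_ten]
      exact lie_torus_pos _ k
    · change _ = (-(rootCode.getD k 0 : ℕ) : ℂ) • _
      rw [← rootValue_pow_ten]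
      exact lie_torus_neg _ k
  have hw₀ : ∀ b, w b ≠ 0 := by
    rintro (k | k)
    · exact Nat.cast_ne_zero.mpr (rootCode_pos k).ne'
    · exact _root_.neg_ne_zero.mpr (Nat.cast_ne_zero.mpr (rootCode_pos k).ne')
  have hw : Function.Injective w := by
    have h (j k : Fin 63) : ((rootCode.getD j 0 : ℕ) : ℂ) ≠ -(rootCode.getD k 0 : ℕ) := by
      rw [ne_eq, eq_neg_iff_add_eq_zero, ← Nat.cast_add, Nat.cast_eq_zero]
      have := rootCode_pos j
      omega
    rintro (j | j) (k | k) hjk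
    · exact congrArg _ (rootCode_injective j k (Nat.cast_injective hjk))
    · exact (h j k hjk).elim
    · exact (h k j hjk.symm).elim
    · exact congrArg _ (rootCode_injective j k (Nat.cast_injective (neg_injective hjk)))
  have h₁ : LinearIndependent ℂ (Sum.elim pos neg) := by
    refine Module.End.eigenvectors_linearIndependent' T w hw _ fun b => ?_
    refine ⟨Module.End.mem_eigenspace_iff.mpr (hT b), ?_⟩
    rcases b with k | k
    exacts [pos_ne_zero k, neg_ne_zero k]
  have h₂ : LinearIndependent ℂ cor := by
    refine Fintype.linearIndependent_iff.mpr fun a ha l => ?_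
    rw [sum_smul_cor, ← map_zero torus] at ha
    have := sum_mul_inverseCartan a l
    have hz (i : Fin 7) : ∑ j, a j * (pairing j (simple i) : ℂ) = 0 :=
      congrFun (torus_injective ha) i
    simpa [hz] using this.symm
  have h₃ := h₁.sum_type h₂ <| by
    refine Disjoint.mono (Submodule.span_le.mpr ?_) (Submodule.span_le.mpr ?_)
      (T.eigenspaces_iSupIndep 0).symm
    · rintro _ ⟨b, rfl⟩
      exact Submodule.mem_iSup_of_mem (w b) (Submodule.mem_iSup_of_mem (hw₀ b)
        (Module.End.mem_eigenspace_iff.mpr (hT b)))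
    · rintro _ ⟨i, rfl⟩
      exact Module.End.mem_eigenspace_iff.mpr ((lie_torus_cor _ i).trans (zero_smul ℂ _).symm)
  rw [← linearIndependent_equiv (Equiv.sumAssoc (Fin 63) (Fin 63) (Fin 7))]
  have : rootVector ∘ Equiv.sumAssoc (Fin 63) (Fin 63) (Fin 7) =
      Sum.elim (Sum.elim pos neg) cor := by
    ext1 ((k | k) | k) <;> rfl
  rw [this]
  exact h₃

section Model

variable {L : Type*} [LieRing L] [LieAlgebra ℂ L] {φ : L →ₗ⁅ℂ⁆ SeqOp}

lemma IsModel.exists_apply_eq (hφ : IsModel φ) {X : SeqOp} (hX : X ∈ model) : ∃ x, φ x = X := by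
  rw [← hφ.range_eq] at hX
  exact hX

lemma IsModel.comp (hφ : IsModel φ) (σ : L ≃ₗ⁅ℂ⁆ L) : IsModel (φ.comp σ.toLieHom) where
  injective := hφ.injective.comp σ.injective
  range_eq := by
    rw [← hφ.range_eq]
    ext X
    refine ⟨fun ⟨x, hx⟩ => ⟨σ x, hx⟩, fun ⟨x, hx⟩ => ⟨σ.symm x, ?_⟩⟩
    rw [← hx]
    exact congrArg φ (σ.apply_symm_apply x)

lemma rootVector_mem (b : Fin 63 ⊕ Fin 63 ⊕ Fin 7) : rootVector b ∈ model := by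
  rcases b with k | k | i
  exacts [pos_mem k, neg_mem k, cor_mem i]

/-- The basis of root vectors and simple coroots. -/
noncomputable def IsModel.basis (hφ : IsModel φ) : Module.Basis (Fin 63 ⊕ Fin 63 ⊕ Fin 7) ℂ L :=
  Module.Basis.mk (v := fun b => (hφ.exists_apply_eq (rootVector_mem b)).choose)
    (LinearIndependent.of_comp (φ : L →ₗ[ℂ] SeqOp) (by
      have : (φ : L →ₗ[ℂ] SeqOp) ∘ (fun b => (hφ.exists_apply_eq (rootVector_mem b)).choose) =
          rootVector := funext fun b => (hφ.exists_apply_eq (rootVector_mem b)).choose_spec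
      rw [this]
      exact linearIndependent_rootVector))
    (by
      rintro x -
      have h₁ : φ x ∈ Submodule.span ℂ (Set.range rootVector) :=
        model_le_span (by rw [← hφ.range_eq]; exact ⟨x, rfl⟩)
      have h₂ : Set.range rootVector = (φ : L →ₗ[ℂ] SeqOp) ''
          Set.range fun b => (hφ.exists_apply_eq (rootVector_mem b)).choose := by
        rw [← Set.range_comp]
        congr 1
        exact funext fun b => (hφ.exists_apply_eq (rootVector_mem b)).choose_spec.symm
      rw [h₂, ← Submodule.map_span] at h₁
      obtain ⟨y, hy, hyx⟩ := h₁
      rwa [← hφ.injective hyx])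

lemma IsModel.apply_basis (hφ : IsModel φ) (b : Fin 63 ⊕ Fin 63 ⊕ Fin 7) :
    φ (hφ.basis b) = rootVector b := by
  rw [IsModel.basis, Module.Basis.mk_apply]
  exact (hφ.exists_apply_eq (rootVector_mem b)).choose_spec

lemma IsModel.lie_basis (hφ : IsModel φ) {s : L} {n : Fin 7 → ℂ} (hs : φ s = torus n)
    (b : Fin 63 ⊕ Fin 63 ⊕ Fin 7) : ⁅s, hφ.basis b⁆ = weight n b • hφ.basis b := by
  refine hφ.injective ?_
  rw [φ.map_lie, hs, map_smul, hφ.apply_basis, lie_torus_rootVector]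

lemma rootValue_one_ne_zero (k : Fin 63) : rootValue k 1 ≠ 0 := by
  have : ∀ k : Fin 63, ∑ i, coeff k i ≠ 0 := by
    decide +kernel
  have h : rootValue k 1 = ((∑ i, coeff k i : ℕ) : ℂ) := by simp [rootValue]
  rw [h]
  exact Nat.cast_ne_zero.mpr (this k)

/-- Semisimple elements are conjugate into the Cartan subalgebra. -/
lemma exists_isModel_torus [FiniteDimensional ℂ L] (hφ : IsModel φ) {s : L}
    (hs : (LieAlgebra.ad ℂ L s).IsSemisimple) :
    ∃ φ' : L →ₗ⁅ℂ⁆ SeqOp, IsModel φ' ∧ ∃ n, φ' s = torus n := by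
  let H : Submodule ℂ L := (LinearMap.range torus).comap (φ : L →ₗ[ℂ] SeqOp)
  obtain ⟨y₀, hy₀⟩ := hφ.exists_apply_eq (torus_mem 1)
  obtain ⟨σ, n, hn⟩ := exists_lieEquiv_mem hs H (y₀ := y₀) (by
      rintro x ⟨m, hm⟩ y ⟨n, hn⟩
      refine hφ.injective ?_
      change torus m = φ x at hm
      change torus n = φ y at hn
      rw [φ.map_lie, ← hm, ← hn, lie_torus_torus, map_zero])
    ⟨1, hy₀.symm⟩ (fun y => by
      induction hφ.basis.mem_span y using Submodule.span_induction with
      | mem y hy =>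
        obtain ⟨b, rfl⟩ := hy
        have hb := hφ.lie_basis hy₀ b
        by_cases hw : weight 1 b = 0
        · refine ⟨0, hφ.basis b, ?_, by simp⟩
          change φ _ ∈ LinearMap.range torus
          rw [hφ.apply_basis]
          rcases b with k | k | i
          · exact (rootValue_one_ne_zero k hw).elim
          · exact (rootValue_one_ne_zero k (neg_eq_zero.mp hw)).elim
          · exact ⟨_, (cor_eq_torus i).symm⟩
        · refine ⟨-(weight 1 b)⁻¹ • hφ.basis b, 0, H.zero_mem, ?_⟩
          rw [smul_lie, ← lie_skew, hb, smul_neg, neg_smul, neg_neg, smul_smul,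
            inv_mul_cancel₀ hw, one_smul, add_zero]
      | zero => exact ⟨0, 0, H.zero_mem, by simp⟩
      | add x y _ _ hx hy =>
        obtain ⟨g, k, hk, rfl⟩ := hx
        obtain ⟨g', k', hk', rfl⟩ := hy
        exact ⟨g + g', k + k', H.add_mem hk hk', by rw [add_lie]; abel⟩
      | smul c x _ hx =>
        obtain ⟨g, k, hk, rfl⟩ := hx
        exact ⟨c • g, c • k, H.smul_mem c hk, by rw [smul_lie, smul_add]⟩)
  exact ⟨φ.comp σ.toLieHom, hφ.comp σ, n, hn.symm⟩

end Model

end E7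

/-- A simple reflection, realised by an automorphism. -/
lemma exists_lieEquiv_reflection {L : Type*} [LieRing L] [LieAlgebra ℂ L] [FiniteDimensional ℂ L]
    {s E F K : L} {c : ℂ} (hE : ⁅s, E⁆ = c • E) (hF : ⁅s, F⁆ = -c • F) (hEF : ⁅E, F⁆ = K)
    (hKE : ⁅K, E⁆ = (2 : ℂ) • E) (hKF : ⁅K, F⁆ = (-2 : ℂ) • F) :
    ∃ σ : L ≃ₗ⁅ℂ⁆ L, σ s = s - c • K := by
  obtain ⟨σ, -, hσ⟩ := exists_lieEquiv_exp E
  obtain ⟨τ, -, hτ⟩ := exists_lieEquiv_exp (-F)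
  have hEs : ⁅E, s⁆ = -c • E := by rw [← lie_skew, hE, neg_smul]
  have hFs : ⁅F, s⁆ = c • F := by rw [← lie_skew, hF, neg_smul, neg_neg]
  have hFE : ⁅F, E⁆ = -K := by rw [← lie_skew, hEF]
  have hEK : ⁅E, K⁆ = (-2 : ℂ) • E := by rw [← lie_skew, hKE, neg_smul]
  have hFK : ⁅F, K⁆ = (2 : ℂ) • F := by rw [← lie_skew, hKF, neg_smul, neg_neg]
  have h₁ : σ s = s - c • E := by
    rw [hσ s (by simp [hEs]), hEs]
    simp [sub_eq_add_neg]
  have h₂ : σ E = E := by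
    rw [hσ E (by simp)]
    simp
  have h₃ : σ K = K - (2 : ℂ) • E := by
    rw [hσ K (by simp [hEK]), hEK]
    simp [sub_eq_add_neg]
  have h₄ : τ s = s - c • F := by
    rw [hτ s (by simp [hFs])]
    simp [hFs, sub_eq_add_neg]
  have h₅ : τ E = E + K - F := by
    rw [hτ E (by simp [hFE, hFK])]
    simp only [neg_lie, hFE, hFK, neg_neg]
    module
  refine ⟨(σ.trans τ).trans σ, ?_⟩
  have h₆ : τ (s - c • E) = s - c • E - c • K := by
    rw [map_sub, map_smul, h₄, h₅]
    module
  change σ (τ (σ s)) = _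
  rw [h₁, h₆, map_sub, map_sub, map_smul, map_smul, h₁, h₂, h₃]
  module

namespace E7

open Sparse

lemma sum_pairing_pos (i : Fin 7) :
    ∑ k : Fin 63, ∑ j, (coeff k j : ℤ) * pairing i (simple j) = 2 := by
  revert i
  decide +kernel

lemma pairing_simple_self (i : Fin 7) : pairing i (simple i) = 2 := by
  revert i
  decide +kernel

section Dominant

variable {L : Type*} [LieRing L] [LieAlgebra ℂ L] {φ : L →ₗ⁅ℂ⁆ SeqOp} [FiniteDimensional ℂ L]

lemma IsModel.exists_reflection (hφ : IsModel φ) {s : L} {n : Fin 7 → ℂ} (hs : φ s = torus n)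
    (i : Fin 7) : ∃ φ' : L →ₗ⁅ℂ⁆ SeqOp, IsModel φ' ∧
      φ' s = torus fun j => n j - n i * pairing i (simple j) := by
  obtain ⟨E, hE⟩ := hφ.exists_apply_eq (pos_simple_mem i)
  obtain ⟨F, hF⟩ := hφ.exists_apply_eq (neg_simple_mem i)
  obtain ⟨K, hK⟩ := hφ.exists_apply_eq (cor_mem i)
  obtain ⟨σ, hσ⟩ := exists_lieEquiv_reflection (s := s) (E := E) (F := F) (K := K) (c := n i)
    (hφ.injective <| by rw [φ.map_lie, hs, hE, lie_torus_pos, rootValue_simple, map_smul, hE])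
    (hφ.injective <| by rw [φ.map_lie, hs, hF, lie_torus_neg, rootValue_simple, map_smul, hF])
    (hφ.injective <| by rw [φ.map_lie, hE, hF, lie_raise_lower, hK])
    (hφ.injective <| by
      rw [φ.map_lie, hE, hK, lie_cor_pos, map_smul, hE, pairing_simple_self, Int.cast_ofNat])
    (hφ.injective <| by
      rw [φ.map_lie, hF, hK, lie_cor_neg, map_smul, hF, pairing_simple_self, Int.cast_ofNat])
  refine ⟨_, hφ.comp σ, ?_⟩
  change φ (σ s) = _
  rw [hσ, map_sub, map_smul, hs, hK, cor_eq_torus, ← map_smul, ← map_sub]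
  rfl

/-- Semisimple elements with integral eigenvalues are conjugate to dominant elements of the Cartan
subalgebra. -/
lemma exists_isModel_dominant (hφ : IsModel φ) {s : L} {n : Fin 7 → ℂ} (hs : φ s = torus n)
    (hint : ∀ (x : L) (μ : ℂ), x ≠ 0 → ⁅s, x⁆ = μ • x → ∃ a : ℤ, μ = a) :
    ∃ φ' : L →ₗ⁅ℂ⁆ SeqOp, IsModel φ' ∧ ∃ n : Fin 7 → ℕ, φ' s = torus fun i => (n i : ℂ) := by
  let P (z : ℤ) : Prop := ∃ φ' : L →ₗ⁅ℂ⁆ SeqOp, IsModel φ' ∧ ∃ n : Fin 7 → ℤ,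
    (φ' s = torus fun i => (n i : ℂ)) ∧ ∑ k : Fin 63, ∑ i, (coeff k i : ℤ) * n i = z
  have hP : ∃ z, P z := by
    have (i : Fin 7) : ∃ a : ℤ, n i = a :=
      hint _ _ (hφ.basis.ne_zero (Sum.inl (simple i))) ((hφ.lie_basis hs _).trans (by
        rw [weight, Sum.elim_inl, rootValue_simple]))
    choose a ha using this
    exact ⟨_, φ, hφ, a, by rw [hs]; exact congrArg torus (funext ha), rfl⟩
  have hbdd : ∃ b, ∀ z, P z → z ≤ b := by
    have hfin : {a : ℤ | (LieAlgebra.ad ℂ L s).HasEigenvalue (a : ℂ)}.Finite :=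
      (Module.End.finite_hasEigenvalue (LieAlgebra.ad ℂ L s)).preimage Int.cast_injective.injOn
    obtain ⟨M, hM⟩ := hfin.bddAbove
    refine ⟨∑ _k : Fin 63, M, ?_⟩
    rintro z ⟨φ', hφ', n, hn, rfl⟩
    refine Finset.sum_le_sum fun k _ => hM ?_
    refine Module.End.hasEigenvalue_of_hasEigenvector (x := hφ'.basis (Sum.inl k))
      ⟨Module.End.mem_eigenspace_iff.mpr ?_, hφ'.basis.ne_zero _⟩
    rw [LieAlgebra.ad_apply, hφ'.lie_basis hn]
    simp [weight, rootValue]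
  obtain ⟨z, ⟨φ', hφ', n, hn, rfl⟩, hz⟩ := Int.exists_greatest_of_bdd hbdd hP
  have hnonneg (i : Fin 7) : 0 ≤ n i := by
    by_contra! hi
    obtain ⟨φ'', hφ'', h⟩ := hφ'.exists_reflection hn i
    have h := hz _ ⟨φ'', hφ'', fun j => n j - n i * pairing i (simple j), by
      rw [h]; push_cast; rfl, rfl⟩
    simp only [mul_sub, Finset.sum_sub_distrib, mul_left_comm _ (n i), ← Finset.mul_sum,
      sum_pairing_pos] at h
    linarith
  exact ⟨φ', hφ', fun i => (n i).toNat, by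
    rw [hn]
    exact congrArg torus (funext fun i => by
      rw [← Int.cast_natCast, Int.toNat_of_nonneg (hnonneg i)])⟩

end Dominant

end E7

section Basis

variable {V : Type*} [AddCommGroup V] [Module ℂ V] {ι : Type*} (b : Module.Basis ι ℂ V)

/-- Projection to the span of the basis vectors satisfying `p`. -/
noncomputable def Module.Basis.part (p : ι → Prop) [DecidablePred p] : V →ₗ[ℂ] V :=
  b.constr ℂ fun i => if p i then b i else 0

lemma Module.Basis.part_apply_self (p : ι → Prop) [DecidablePred p] (i : ι) :
    b.part p (b i) = if p i then b i else 0 := by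
  rw [Module.Basis.part, Module.Basis.constr_basis]

lemma Module.Basis.repr_part (p : ι → Prop) [DecidablePred p] (x : V) (i : ι) :
    b.repr (b.part p x) i = if p i then b.repr x i else 0 := by
  have : (b.coord i).comp (b.part p) = (if p i then (1 : ℂ) else 0) • b.coord i := by
    refine b.ext fun j => ?_
    simp only [LinearMap.comp_apply, part_apply_self, LinearMap.smul_apply, apply_ite (b.coord i),
      map_zero, b.coord_apply, b.repr_self, smul_eq_mul]
    by_cases h : j = i
    · subst h; split_ifs <;> simp
    · split_ifs <;> simp_all
  have := LinearMap.congr_fun this x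
  split_ifs at this ⊢ <;> simpa using this

lemma Module.Basis.mem_span_image_of_repr {S : Set ι} {x : V} (h : ∀ i, b.repr x i ≠ 0 → i ∈ S) :
    x ∈ Submodule.span ℂ (b '' S) :=
  (b.mem_span_image).mpr fun i hi => h i (Finsupp.mem_support_iff.mp hi)

lemma Module.Basis.finrank_span_image (S : Finset ι) :
    Module.finrank ℂ (Submodule.span ℂ (b '' S)) = S.card := by
  classical
  rw [← Finset.coe_image, finrank_span_finset_eq_card
    ((LinearIndepOn.id_image (b.linearIndependent.linearIndepOn (s := (S : Set ι)))).mono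
      (by simp)),
    Finset.card_image_of_injective _ b.injective]

variable {b} {T : V →ₗ[ℂ] V} {w : ι → ℂ}

lemma repr_apply_of_eigenbasis (hT : ∀ i, T (b i) = w i • b i) (x : V) (i : ι) :
    b.repr (T x) i = w i * b.repr x i := by
  have : (b.coord i).comp T = w i • b.coord i := by
    refine b.ext fun j => ?_
    simp only [LinearMap.comp_apply, hT, map_smul, LinearMap.smul_apply, b.coord_apply, b.repr_self,
      Finsupp.smul_apply, smul_eq_mul]
    by_cases h : j = i
    · rw [h]
    · rw [Finsupp.single_eq_of_ne' h, mul_zero, mul_zero]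
  exact LinearMap.congr_fun this x

lemma eq_of_eigenbasis (hT : ∀ i, T (b i) = w i • b i) {x : V} {μ : ℂ} (hx : T x = μ • x)
    {i : ι} (hi : b.repr x i ≠ 0) : w i = μ := by
  have := repr_apply_of_eigenbasis hT x i
  rw [hx, map_smul, Finsupp.smul_apply, smul_eq_mul] at this
  exact (mul_right_cancel₀ hi this).symm

lemma isSemisimple_of_eigenbasis [Finite ι] (hT : ∀ i, T (b i) = w i • b i) :
    Module.End.IsSemisimple T := by
  classical
  have := Fintype.ofFinite ι
  refine Module.End.isSemisimple_of_squarefree_aeval_eq_zero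
    (p := ∏ μ ∈ Finset.univ.image w, (Polynomial.X - Polynomial.C μ))
    (Polynomial.separable_prod_X_sub_C_iff'.mpr fun x _ y _ h => h).squarefree ?_
  refine b.ext fun i => ?_
  rw [← Finset.prod_erase_mul _ _ (Finset.mem_image_of_mem w (Finset.mem_univ i)), map_mul,
    Module.End.mul_apply]
  simp [hT]

lemma part_apply_of_eigenvector [DecidableEq ℂ] (hT : ∀ i, T (b i) = w i • b i) {x : V} {ν : ℂ}
    (hx : T x = ν • x) (μ : ℂ) : b.part (fun i => w i = μ) x = if ν = μ then x else 0 := by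
  refine b.repr.injective (Finsupp.ext fun i => ?_)
  rw [b.repr_part]
  by_cases hi : b.repr x i = 0
  · split_ifs <;> simp [hi]
  · rw [eq_of_eigenbasis hT hx hi]
    split_ifs <;> simp

lemma apply_part_of_eigenbasis [DecidableEq ℂ] (hT : ∀ i, T (b i) = w i • b i) (x : V) (μ : ℂ) :
    T (b.part (fun i => w i = μ) x) = μ • b.part (fun i => w i = μ) x := by
  refine b.repr.injective (Finsupp.ext fun i => ?_)
  rw [repr_apply_of_eigenbasis hT, map_smul, Finsupp.smul_apply, b.repr_part, smul_eq_mul]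
  split_ifs with h <;> simp [h]

lemma card_le_card_add_finrank_ker [FiniteDimensional ℂ V] (P Q : Finset ι)
    (h : ∀ i ∈ P, T (b i) ∈ Submodule.span ℂ (b '' Q)) :
    P.card ≤ Q.card + Module.finrank ℂ (LinearMap.ker T) := by
  let T' : Submodule.span ℂ (b '' P) →ₗ[ℂ] V := T.domRestrict _
  have h₁ := T'.finrank_range_add_finrank_ker
  have h₂ : Module.finrank ℂ (LinearMap.range T') ≤ Q.card := by
    rw [← b.finrank_span_image Q]
    refine Submodule.finrank_mono ?_
    rintro - ⟨⟨x, hx⟩, rfl⟩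
    change T x ∈ _
    induction hx using Submodule.span_induction with
    | mem x hx => obtain ⟨i, hi, rfl⟩ := hx; exact h i hi
    | zero => simp
    | add x y _ _ hx hy => rw [map_add]; exact add_mem hx hy
    | smul c x _ hx => rw [map_smul]; exact Submodule.smul_mem _ _ hx
  have h₃ : Module.finrank ℂ (LinearMap.ker T') ≤ Module.finrank ℂ (LinearMap.ker T) :=
    LinearMap.finrank_le_finrank_of_injective
      (f := ((Submodule.subtype _).comp (Submodule.subtype (LinearMap.ker T'))).codRestrict
        (LinearMap.ker T) fun x => x.2) fun x y hxy =>
        Subtype.ext (Subtype.ext (congrArg (fun z : LinearMap.ker T => (z : V)) hxy))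
  rw [b.finrank_span_image] at h₁
  omega

end Basis

section Graded

open LieAlgebra

variable {L : Type*} [LieRing L] [LieAlgebra ℂ L] {ι : Type*} {b : Module.Basis ι ℂ L}
  {s e : L} {a : ι → ℤ}

lemma lie_lie_eq_add_smul {μ ν : ℂ} {x y : L} (hx : ⁅s, x⁆ = μ • x) (hy : ⁅s, y⁆ = ν • y) :
    ⁅s, ⁅x, y⁆⁆ = (μ + ν) • ⁅x, y⁆ := by
  rw [leibniz_lie, hx, hy, smul_lie, lie_smul, ← add_smul]

/-- The homogeneous components of an element of the centralizer of a homogeneous element lie in the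
centralizer. -/
lemma lie_part_eq_zero [DecidableEq ℂ] {w : ι → ℂ} (hs : ∀ i, ⁅s, b i⁆ = w i • b i)
    (he : ⁅s, e⁆ = (2 : ℂ) • e) {x : L} (hx : ⁅e, x⁆ = 0) (μ : ℂ) :
    ⁅e, b.part (fun i => w i = μ) x⁆ = 0 := by
  have hs' : ∀ i, ad ℂ L s (b i) = w i • b i := hs
  have : (ad ℂ L e).comp (b.part fun i => w i = μ) =
      (b.part fun i => w i = 2 + μ).comp (ad ℂ L e) := by
    refine b.ext fun i => ?_
    change ⁅e, b.part _ (b i)⁆ = b.part _ ⁅e, b i⁆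
    rw [part_apply_of_eigenvector hs' (hs' i),
      part_apply_of_eigenvector hs' (lie_lie_eq_add_smul he (hs i))]
    simp only [add_right_inj]
    split_ifs <;> simp
  have h := LinearMap.congr_fun this x
  simp only [LinearMap.comp_apply, ad_apply] at h
  rw [h, hx, map_zero]

lemma mem_range_ad_of_pos [Finite ι] [FiniteDimensional ℂ L] [IsKilling ℂ L]
    (hs : ∀ i, ⁅s, b i⁆ = (a i : ℂ) • b i)
    (hker : ∀ x, ⁅e, x⁆ = 0 → ∀ i, b.repr x i ≠ 0 → 0 ≤ a i) {i : ι} (hi : 0 < a i) :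
    b i ∈ LinearMap.range (ad ℂ L e) := by
  have := Fintype.ofFinite ι
  let B := killingForm ℂ L
  have hB : B.Nondegenerate := IsKilling.killingForm_nondegenerate ℂ L
  have hle : LinearMap.range (ad ℂ L e) ≤ B.orthogonal (LinearMap.ker (ad ℂ L e)) := by
    rintro - ⟨y, rfl⟩ z hz
    have hz' : ⁅e, z⁆ = 0 := hz
    change LieModule.traceForm ℂ L L z ⁅e, y⁆ = 0
    rw [← LieModule.traceForm_apply_lie_apply, ← lie_skew, hz', neg_zero, map_zero,
      LinearMap.zero_apply]
  have hrank := (ad ℂ L e).finrank_range_add_finrank_ker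
  have horth := LinearMap.BilinForm.finrank_orthogonal hB (LinearMap.ker (ad ℂ L e))
  rw [Submodule.eq_of_le_of_finrank_eq hle (by rw [horth]; omega)]
  intro z hz
  change B z (b i) = 0
  rw [← b.sum_repr z, map_sum, LinearMap.sum_apply]
  refine Finset.sum_eq_zero fun j _ => ?_
  by_cases hj : b.repr z j = 0
  · simp [hj]
  have hj' := hker z hz j hj
  have h := LieModule.traceForm_apply_lie_apply ℂ L L (b j) s (b i)
  rw [hs, ← lie_skew, hs] at h
  change B (-((a j : ℂ) • b j)) (b i) = B (b j) ((a i : ℂ) • b i) at h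
  simp only [map_neg, LinearMap.neg_apply, map_smul, LinearMap.smul_apply, smul_eq_mul] at h ⊢
  have h₁ : ((a i + a j : ℤ) : ℂ) * B (b j) (b i) = 0 := by
    push_cast
    linear_combination -h
  rw [(mul_eq_zero.mp h₁).resolve_left (Int.cast_ne_zero.mpr (by omega)), mul_zero]

/-- The centralizer of a nilpotent element is no larger than the parts of weight `0` and `-1`. -/
lemma finrank_ker_le_card [Fintype ι] [FiniteDimensional ℂ L] [IsKilling ℂ L]
    (hs : ∀ i, ⁅s, b i⁆ = (a i : ℂ) • b i)
    (he : ⁅s, e⁆ = (2 : ℂ) • e) (hker : ∀ x, ⁅e, x⁆ = 0 → ∀ i, b.repr x i ≠ 0 → 0 ≤ a i) :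
    Module.finrank ℂ (LinearMap.ker (ad ℂ L e)) ≤
      (Finset.univ.filter fun i => a i = 0 ∨ a i = -1).card := by
  let R := b.part fun i => 0 < a i
  let S := b.part fun i => a i ≤ -2
  let θ : L →ₗ[ℂ] L := R + (ad ℂ L e).comp S
  have hθ : LinearMap.range θ ≤ LinearMap.range (ad ℂ L e) := by
    rintro - ⟨x, rfl⟩
    refine add_mem ?_ ⟨S x, rfl⟩
    rw [← b.sum_repr x, map_sum]
    refine sum_mem fun i _ => ?_
    rw [map_smul, b.part_apply_self]
    refine Submodule.smul_mem _ _ ?_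
    split_ifs with h
    · exact mem_range_ad_of_pos hs hker h
    · exact zero_mem _
  have hker' : LinearMap.ker θ ≤
      Submodule.span ℂ (b '' (Finset.univ.filter fun i => a i = 0 ∨ a i = -1 : Finset ι)) := by
    intro x hx
    have hx' : R x + ⁅e, S x⁆ = 0 := hx
    have hR : R x = 0 := by
      refine b.repr.injective (Finsupp.ext fun i => ?_)
      rw [b.repr_part, map_zero, Finsupp.zero_apply]
      split_ifs with hi
      · have h₁ : b.repr ⁅e, S x⁆ i = 0 := by
          rw [← b.sum_repr x, map_sum, lie_sum, map_sum, Finsupp.finsetSum_apply]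
          refine Finset.sum_eq_zero fun j _ => ?_
          rw [map_smul, b.part_apply_self, lie_smul, map_smul, Finsupp.smul_apply]
          split_ifs with hj
          · refine smul_eq_zero_of_right _ (by_contra fun h => ?_)
            have := eq_of_eigenbasis (T := ad ℂ L s) hs (lie_lie_eq_add_smul he (hs j)) h
            have : a i = 2 + a j := by exact_mod_cast this
            omega
          · simp
        have h₂ := congrArg (fun y => b.repr y i) hx'
        simpa [h₁, R, b.repr_part, hi] using h₂
      · rfl
    have hS := hker (S x) (by simpa [hR] using hx')
    refine b.mem_span_image_of_repr fun i hi => ?_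
    have h₁ : ¬ 0 < a i := fun h => hi (by
      have := b.repr_part (fun i => 0 < a i) x i
      rw [if_pos h] at this
      rw [← this]
      change b.repr (R x) i = 0
      rw [hR, map_zero, Finsupp.zero_apply])
    have h₂ : ¬ a i ≤ -2 := fun h => by
      have := hS i (by rw [b.repr_part, if_pos h]; exact hi)
      omega
    simp only [Finset.coe_filter, Finset.mem_univ, true_and, Set.mem_ofPred_eq]
    omega
  have h₁ := Submodule.finrank_mono hker'
  rw [b.finrank_span_image] at h₁
  have h₂ := θ.finrank_range_add_finrank_ker
  have h₃ := (ad ℂ L e).finrank_range_add_finrank_ker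
  have h₄ := Submodule.finrank_mono hθ
  omega

end Graded

namespace E7

open Sparse

/-- The natural number values of the positive roots at a dominant integral point. -/
def natValue (n : Fin 7 → ℕ) (k : Fin 63) : ℕ := ∑ i, coeff k i * n i

/-- The integer eigenvalues of a dominant integral element of the Cartan subalgebra. -/
def intWeight (n : Fin 7 → ℕ) : Fin 63 ⊕ Fin 63 ⊕ Fin 7 → ℤ :=
  Sum.elim (fun k => natValue n k) (Sum.elim (fun k => -natValue n k) fun _ => 0)

lemma rootValue_natCast (n : Fin 7 → ℕ) (k : Fin 63) :
    rootValue k (fun i => (n i : ℂ)) = natValue n k := by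
  simp [rootValue, natValue]

lemma weight_natCast (n : Fin 7 → ℕ) (b : Fin 63 ⊕ Fin 63 ⊕ Fin 7) :
    weight (fun i => (n i : ℂ)) b = intWeight n b := by
  rcases b with k | k | i <;> simp [weight, intWeight, rootValue_natCast]

lemma natValue_simple (n : Fin 7 → ℕ) (i : Fin 7) : natValue n (simple i) = n i := by
  simp [natValue, coeff_simple_self]

lemma coeff_mul_le_natValue (n : Fin 7 → ℕ) (k : Fin 63) (i : Fin 7) :
    coeff k i * n i ≤ natValue n k :=
  Finset.single_le_sum (f := fun i => coeff k i * n i) (fun _ _ => Nat.zero_le _)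
    (Finset.mem_univ i)

section Cases

variable {L : Type*} [LieRing L] [LieAlgebra ℂ L] {φ : L →ₗ⁅ℂ⁆ SeqOp} {s e : L}

/-- A distinguished element commutes with no nonzero element of the Cartan subalgebra. -/
lemma IsModel.eq_zero_of_lie_torus (hφ : IsModel φ)
    (hdist : ∀ x : L, ⁅x, e⁆ = 0 → (LieAlgebra.ad ℂ L x).IsSemisimple → x = 0)
    {m : Fin 7 → ℂ} (h : ⁅torus m, φ e⁆ = 0) : m = 0 := by
  obtain ⟨x, hx⟩ := hφ.exists_apply_eq (torus_mem m)
  have := hdist x (hφ.injective (by rw [φ.map_lie, hx, h, map_zero]))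
    (isSemisimple_of_eigenbasis fun b => hφ.lie_basis hx b)
  rw [this, map_zero] at hx
  exact torus_injective (by rw [← hx, map_zero])

variable {n : Fin 7 → ℕ}

lemma IsModel.lie_basis_natCast (hφ : IsModel φ) (hs : φ s = torus fun i => (n i : ℂ))
    (b : Fin 63 ⊕ Fin 63 ⊕ Fin 7) : ⁅s, hφ.basis b⁆ = (intWeight n b : ℂ) • hφ.basis b := by
  rw [hφ.lie_basis hs, weight_natCast]

lemma IsModel.intWeight_eq (hφ : IsModel φ) (hs : φ s = torus fun i => (n i : ℂ)) {x : L} {a : ℤ}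
    (hx : ⁅s, x⁆ = (a : ℂ) • x) {b : Fin 63 ⊕ Fin 63 ⊕ Fin 7} (hb : hφ.basis.repr x b ≠ 0) :
    intWeight n b = a :=
  Int.cast_injective (α := ℂ)
    (eq_of_eigenbasis (T := LieAlgebra.ad ℂ L s) (hφ.lie_basis_natCast hs) hx hb)

lemma IsModel.exists_apply_eq_sum (hφ : IsModel φ) (hs : φ s = torus fun i => (n i : ℂ))
    (he : ⁅s, e⁆ = (2 : ℂ) • e) : ∃ a : Fin 63 → ℂ, φ e = ∑ k, a k • pos k ∧
      ∀ k, a k ≠ 0 → natValue n k = 2 := by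
  have hw {b} (hb : hφ.basis.repr e b ≠ 0) : intWeight n b = 2 :=
    hφ.intWeight_eq hs (by rw [he, Int.cast_ofNat]) hb
  refine ⟨fun k => hφ.basis.repr e (Sum.inl k), ?_, fun k hk => ?_⟩
  · conv_lhs => rw [← hφ.basis.sum_repr e, map_sum, Fintype.sum_sum_type]
    rw [Finset.sum_eq_zero (s := (Finset.univ : Finset (Fin 63 ⊕ Fin 7))), add_zero]
    · exact Finset.sum_congr rfl fun k _ => by rw [map_smul, hφ.apply_basis]; rfl
    · intro b _
      refine (congrArg φ (smul_eq_zero_of_left (by_contra fun hb => ?_) _)).trans φ.map_zero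
      have := hw hb
      rcases b with k | i <;> simp [intWeight] at this
      omega
  · have := hw hk
    simp only [intWeight, Sum.elim_inl] at this
    omega

lemma IsModel.eq_zero_of_forall_rootValue (hφ : IsModel φ)
    (hdist : ∀ x : L, ⁅x, e⁆ = 0 → (LieAlgebra.ad ℂ L x).IsSemisimple → x = 0)
    (hs : φ s = torus fun i => (n i : ℂ)) (he : ⁅s, e⁆ = (2 : ℂ) • e) {m : Fin 7 → ℂ}
    (h : ∀ k, natValue n k = 2 → rootValue k m = 0) : m = 0 := by
  refine hφ.eq_zero_of_lie_torus hdist ?_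
  obtain ⟨a, ha, hn⟩ := hφ.exists_apply_eq_sum hs he
  rw [ha, lie_sum]
  refine Finset.sum_eq_zero fun k _ => ?_
  by_cases hk : a k = 0
  · rw [hk, zero_smul, lie_zero]
  · rw [lie_smul, lie_torus_pos, h k (hn k hk), zero_smul, smul_zero]

lemma exists_coeff_pos_of_coeff_eq_two : ∀ (k : Fin 63) (i : Fin 7), coeff k i = 2 →
    ∃ j, j ≠ i ∧ 0 < coeff k j := by
  decide +kernel

lemma rootValue_single (k : Fin 63) (i : Fin 7) : rootValue k (Pi.single i 1) = coeff k i := by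
  simp [rootValue, Pi.single_apply]

lemma IsModel.le_two (hφ : IsModel φ)
    (hdist : ∀ x : L, ⁅x, e⁆ = 0 → (LieAlgebra.ad ℂ L x).IsSemisimple → x = 0)
    (hs : φ s = torus fun i => (n i : ℂ)) (he : ⁅s, e⁆ = (2 : ℂ) • e) (i : Fin 7) : n i ≤ 2 := by
  by_contra! hi
  have := hφ.eq_zero_of_forall_rootValue hdist hs he (m := Pi.single i 1) fun k hk => by
    have := coeff_mul_le_natValue n k i
    rw [rootValue_single, Nat.cast_eq_zero]
    by_contra h
    have : n i ≤ coeff k i * n i := Nat.le_mul_of_pos_left _ (Nat.pos_of_ne_zero h)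
    omega
  simpa using congrFun this i

lemma coeff_le_one_of_natValue_eq_two (hn : ∀ j, n j ≠ 0) {k : Fin 63} (hk : natValue n k = 2)
    (i : Fin 7) : coeff k i ≤ 1 := by
  by_contra! h
  have hle (j : Fin 7) : coeff k j ≤ coeff k j * n j :=
    Nat.le_mul_of_pos_right _ (Nat.pos_of_ne_zero (hn j))
  have hi := (hle i).trans (coeff_mul_le_natValue n k i)
  obtain ⟨j, hj, hj'⟩ := exists_coeff_pos_of_coeff_eq_two k i (by omega)
  have h₁ := Finset.add_le_sum (f := fun i => coeff k i * n i) (fun _ _ => Nat.zero_le _)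
    (Finset.mem_univ i) (Finset.mem_univ j) hj.symm
  have h₂ := hle i
  have h₃ := hle j
  change _ ≤ natValue n k at h₁
  omega

lemma IsModel.exists_eq_zero_of_eq_one (hφ : IsModel φ)
    (hdist : ∀ x : L, ⁅x, e⁆ = 0 → (LieAlgebra.ad ℂ L x).IsSemisimple → x = 0)
    (hs : φ s = torus fun i => (n i : ℂ)) (he : ⁅s, e⁆ = (2 : ℂ) • e)
    (hcard : (Finset.univ.filter fun i => n i ≤ 1).card ≤ 2) {i : Fin 7} (hi : n i = 1) :
    ∃ j, n j = 0 := by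
  by_contra! hn
  have hle := hφ.le_two hdist hs he
  by_cases h : ∃ j, j ≠ i ∧ n j = 1
  · obtain ⟨j, hji, hj⟩ := h
    have hrest (l : Fin 7) (hli : l ≠ i) (hlj : l ≠ j) : n l = 2 := by
      have h₁ := hn l
      have h₂ := hle l
      by_contra h₃
      have : ({i, j, l} : Finset (Fin 7)) ⊆ Finset.univ.filter fun i => n i ≤ 1 := by
        intro x hx
        simp only [Finset.mem_insert, Finset.mem_singleton] at hx
        rw [Finset.mem_filter]
        rcases hx with rfl | rfl | rfl <;> simp <;> omega
      have := Finset.card_le_card this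
      rw [Finset.card_eq_three.mpr ⟨i, j, l, hji.symm, hli.symm, hlj.symm, rfl⟩] at this
      omega
    have := hφ.eq_zero_of_forall_rootValue hdist hs he (m := Pi.single i 1 - Pi.single j 1)
      fun k hk => by
      have h₁ := coeff_le_one_of_natValue_eq_two hn hk i
      have h₂ := coeff_le_one_of_natValue_eq_two hn hk j
      have h₃ : natValue n k = coeff k i + coeff k j +
          2 * ∑ l ∈ (Finset.univ.erase i).erase j, coeff k l := by
        rw [natValue, ← Finset.add_sum_erase _ _ (Finset.mem_univ i),
          ← Finset.add_sum_erase _ _ (Finset.mem_erase.mpr ⟨hji, Finset.mem_univ j⟩), hi, hj,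
          mul_one, mul_one, add_assoc, Finset.mul_sum]
        refine congrArg _ (congrArg _ (Finset.sum_congr rfl fun l hl => ?_))
        simp only [Finset.mem_erase] at hl
        rw [hrest l hl.2.1 hl.1, mul_comm]
      have h₄ : coeff k i = coeff k j := by omega
      simp [rootValue, Pi.single_apply, mul_sub, h₄]
    simpa [hji.symm] using congrFun this i
  · push Not at h
    have := hφ.eq_zero_of_forall_rootValue hdist hs he (m := Pi.single i 1) fun k hk => by
      have h₁ := coeff_le_one_of_natValue_eq_two hn hk i
      have h₃ : natValue n k = coeff k i + 2 * ∑ l ∈ Finset.univ.erase i, coeff k l := by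
        rw [natValue, ← Finset.add_sum_erase _ _ (Finset.mem_univ i), hi, mul_one,
          Finset.mul_sum]
        refine congrArg _ (Finset.sum_congr rfl fun l hl => ?_)
        have h₁ := h l (Finset.ne_of_mem_erase hl)
        have h₂ := hn l
        have h₃ := hle l
        rw [show n l = 2 by omega, mul_comm]
      rw [rootValue_single, Nat.cast_eq_zero]
      omega
    simpa using congrFun this i

variable [FiniteDimensional ℂ L]

lemma IsModel.card_le (hφ : IsModel φ) (hs : φ s = torus fun i => (n i : ℂ))
    (he : ⁅s, e⁆ = (2 : ℂ) • e) : 7 + (Finset.univ.filter fun i => n i ≤ 1).card +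
      (Finset.univ.filter fun i => n i = 0).card ≤
        Module.finrank ℂ (LinearMap.ker (LieAlgebra.ad ℂ L e)) := by
  let P := Finset.univ.filter fun b => 0 ≤ intWeight n b
  let Q := Finset.univ.filter fun b => 2 ≤ intWeight n b
  have h := card_le_card_add_finrank_ker (b := hφ.basis) (T := LieAlgebra.ad ℂ L e) P Q
    fun b hb => hφ.basis.mem_span_image_of_repr fun c hc => by
      have : intWeight n c = 2 + intWeight n b := hφ.intWeight_eq hs (by
        push_cast
        exact lie_lie_eq_add_smul he (hφ.lie_basis_natCast hs b)) hc
      have hb' := (Finset.mem_filter.mp hb).2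
      simp only [Q, Finset.coe_filter, Finset.mem_univ, true_and, Set.mem_ofPred_eq]
      omega
  let D : Finset (Fin 63 ⊕ Fin 63 ⊕ Fin 7) :=
    ((Finset.univ.filter fun i => n i ≤ 1).image simple).disjSum
      (((Finset.univ.filter fun i => n i = 0).image simple).disjSum Finset.univ)
  have hsimple : Function.Injective simple := Fin.castLE_injective (by decide)
  have hD : D.card = (Finset.univ.filter fun i => n i ≤ 1).card +
      ((Finset.univ.filter fun i => n i = 0).card + 7) := by
    simp only [D, Finset.card_disjSum, Finset.card_image_of_injective _ hsimple, Finset.card_univ,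
      Fintype.card_fin]
  have hDP : D ⊆ P \ Q := by
    rintro (k | k | i) hb
    all_goals simp only [D, Finset.inl_mem_disjSum, Finset.inr_mem_disjSum, Finset.mem_image,
      Finset.mem_filter, Finset.mem_univ, true_and] at hb
    · obtain ⟨i, hi, rfl⟩ := hb
      simp only [P, Q, Finset.mem_sdiff, Finset.mem_filter, Finset.mem_univ, true_and]
      simp only [intWeight, Sum.elim_inl, natValue_simple]
      omega
    · obtain ⟨i, hi, rfl⟩ := hb
      simp only [P, Q, Finset.mem_sdiff, Finset.mem_filter, Finset.mem_univ, true_and]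
      simp only [intWeight, Sum.elim_inl, Sum.elim_inr, natValue_simple]
      omega
    · simp only [P, Q, Finset.mem_sdiff, Finset.mem_filter, Finset.mem_univ, true_and]
      simp only [intWeight, Sum.elim_inr]
      omega
  have hQP : Q ⊆ P := fun b hb => by
    simp only [P, Q, Finset.mem_filter, Finset.mem_univ, true_and] at hb ⊢
    omega
  have h₁ := Finset.card_le_card hDP
  rw [Finset.card_sdiff_of_subset hQP] at h₁
  omega

lemma IsModel.finrank_ker_le_of_forall (hφ : IsModel φ) [LieAlgebra.IsKilling ℂ L]
    (hs : φ s = torus fun i => (n i : ℂ)) (he : ⁅s, e⁆ = (2 : ℂ) • e)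
    (hker : ∀ (x : L) (μ : ℂ), x ≠ 0 → ⁅e, x⁆ = 0 → ⁅s, x⁆ = μ • x → ∃ a : ℕ, μ = a)
    (hn : ∀ i, n i = 2) : Module.finrank ℂ (LinearMap.ker (LieAlgebra.ad ℂ L e)) ≤ 7 := by
  classical
  refine (finrank_ker_le_card (hφ.lie_basis_natCast hs) he fun x hx b hb => ?_).trans ?_
  · have hpart := hφ.basis.repr_part (fun b' => (intWeight n b' : ℂ) = intWeight n b) x b
    rw [if_pos rfl] at hpart
    obtain ⟨a, ha⟩ := hker _ (intWeight n b)
      (fun h => hb (by rw [← hpart, h, map_zero, Finsupp.zero_apply]))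
      (lie_part_eq_zero (hφ.lie_basis_natCast hs) he hx (intWeight n b))
      (apply_part_of_eigenbasis (T := LieAlgebra.ad ℂ L s) (hφ.lie_basis_natCast hs) x _)
    have : intWeight n b = a := by exact_mod_cast ha
    omega
  · have hk (k : Fin 63) : natValue n k ≠ 0 ∧ natValue n k ≠ 1 := by
      have h₁ : ∑ i, coeff k i ≠ 0 := fun h => rootValue_one_ne_zero k (by
        simp [rootValue, ← Nat.cast_sum, h])
      have h₂ : natValue n k = (∑ i, coeff k i) * 2 := by simp [natValue, hn, Finset.sum_mul]
      omega
    have : (Finset.univ.filter fun b => intWeight n b = 0 ∨ intWeight n b = -1) ⊆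
        Finset.univ.image (fun i : Fin 7 => (Sum.inr (Sum.inr i) : Fin 63 ⊕ Fin 63 ⊕ Fin 7)) := by
      rintro (k | k | i) hb
      · have := hk k
        replace hb := (Finset.mem_filter.mp hb).2
        simp only [intWeight, Sum.elim_inl] at hb
        omega
      · have := hk k
        replace hb := (Finset.mem_filter.mp hb).2
        simp only [intWeight, Sum.elim_inl, Sum.elim_inr] at hb
        omega
      · simp
    exact (Finset.card_le_card this).trans (Finset.card_image_le.trans (by simp))

/-- The dominant element attached to a distinguished element with centralizer of dimension `9`. -/
lemma IsModel.exists_eq_zero (hφ : IsModel φ) [LieAlgebra.IsKilling ℂ L]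
    (hdist : ∀ x : L, ⁅x, e⁆ = 0 → (LieAlgebra.ad ℂ L x).IsSemisimple → x = 0)
    (hs : φ s = torus fun i => (n i : ℂ)) (he : ⁅s, e⁆ = (2 : ℂ) • e)
    (hker : ∀ (x : L) (μ : ℂ), x ≠ 0 → ⁅e, x⁆ = 0 → ⁅s, x⁆ = μ • x → ∃ a : ℕ, μ = a)
    (hdim : Module.finrank ℂ (LinearMap.ker (LieAlgebra.ad ℂ L e)) = 9) :
    ∃ i, n i = 0 ∧ ∀ j ≠ i, n j = 2 := by
  have hcard := hφ.card_le hs he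
  rw [hdim] at hcard
  obtain ⟨i, hi⟩ : ∃ i, n i = 0 := by
    by_contra! hn
    have := hφ.finrank_ker_le_of_forall hs he hker fun i => by
      have h₁ := hφ.le_two hdist hs he i
      have h₂ : n i ≠ 1 := fun hi => by
        obtain ⟨j, hj⟩ := hφ.exists_eq_zero_of_eq_one hdist hs he (by omega) hi
        exact hn j hj
      have := hn i
      omega
    omega
  have h₁ : 1 ≤ (Finset.univ.filter fun i => n i = 0).card :=
    Finset.card_pos.mpr ⟨i, Finset.mem_filter.mpr ⟨Finset.mem_univ i, hi⟩⟩
  have h₂ := Finset.card_le_one_iff_subset_singleton.mp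
    (show (Finset.univ.filter fun i => n i ≤ 1).card ≤ 1 by omega)
  obtain ⟨l, hl⟩ := h₂
  refine ⟨i, hi, fun j hji => ?_⟩
  by_contra hj
  have := hφ.le_two hdist hs he j
  have hil : i ∈ Finset.univ.filter fun i => n i ≤ 1 := by simp [hi]
  have hjl : j ∈ Finset.univ.filter fun i => n i ≤ 1 := by simp; omega
  exact hji ((Finset.mem_singleton.mp (hl hjl)).trans (Finset.mem_singleton.mp (hl hil)).symm)

end Cases

lemma eq_simple_or_agree_bracket : ∀ (i : Fin 7) (k : Fin 63),
    ∑ j ∈ Finset.univ.erase i, coeff k j = 1 → ∃ j, j ≠ i ∧ (k = simple j ∨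
      ∃ ε ∈ ([1, -1] : List ℤ),
        agree (posS k) (scale ε (bracket (posS (simple i)) (posS (simple j)))) = true) := by
  decide +kernel

lemma lie_pos_simple_of_pairing_eq_zero {i j : Fin 7} (h : i ≠ j)
    (hij : pairing i (simple j) = 0) : ⁅pos (simple i), pos (simple j)⁆ = 0 := by
  have := agree_serre i j h
  rw [if_pos hij] at this
  rw [pos, pos, ← toOp_bracket, toOp_eq_of_agree this, toOp_nil]

lemma pairing_simple_eq {i j : Fin 7} (h : i ≠ j) :
    pairing i (simple j) = 0 ∨ pairing i (simple j) = -1 := by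
  have := agree_serre i j h
  split_ifs at this with h'
  · exact Or.inl h'
  · exact Or.inr this.1

lemma lie_pos_simple_lie_pos_simple {i j : Fin 7} (h : i ≠ j) :
    ⁅pos (simple i), ⁅pos (simple i), pos (simple j)⁆⁆ = 0 := by
  have := agree_serre i j h
  split_ifs at this with h'
  · rw [lie_pos_simple_of_pairing_eq_zero h h', lie_zero]
  · rw [pos, pos, ← toOp_bracket, ← toOp_bracket, toOp_eq_of_agree this.2, toOp_nil]

lemma lie_neg_simple_pos_simple {i j : Fin 7} (h : i ≠ j) :
    ⁅neg (simple i), pos (simple j)⁆ = 0 := by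
  rw [← lie_skew, lie_raise_lower_of_ne h.symm, neg_zero]

lemma lie_neg_simple_lie_pos_simple {i j : Fin 7} (h : i ≠ j) :
    ⁅neg (simple i), ⁅pos (simple i), pos (simple j)⁆⁆ =
      -(pairing i (simple j) : ℂ) • pos (simple j) := by
  rw [leibniz_lie, lie_neg_simple_pos_simple h, lie_zero, add_zero, ← lie_skew (neg _),
    lie_raise_lower, neg_lie, lie_cor_pos, neg_smul]

/-- A combination of the simple root vectors other than the `i`-th one, and of their brackets with
the `i`-th one. -/
noncomputable def combination (i : Fin 7) (c d : Fin 7 → ℂ) : SeqOp :=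
  ∑ j ∈ Finset.univ.erase i,
    (c j • pos (simple j) + d j • ⁅pos (simple i), pos (simple j)⁆)

lemma combination_add (i : Fin 7) (c d c' d' : Fin 7 → ℂ) :
    combination i (c + c') (d + d') = combination i c d + combination i c' d' := by
  rw [combination, combination, combination, ← Finset.sum_add_distrib]
  refine Finset.sum_congr rfl fun j _ => ?_
  simp only [Pi.add_apply]
  module

lemma combination_single_left {i j : Fin 7} (h : j ≠ i) (a : ℂ) :
    combination i (Pi.single j a) 0 = a • pos (simple j) := by
  rw [combination, Finset.sum_eq_single_of_mem j (by simp [h])]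
  · simp
  · intro l _ hl
    simp [hl]

lemma combination_single_right {i j : Fin 7} (h : j ≠ i) (a : ℂ) :
    combination i 0 (Pi.single j a) = a • ⁅pos (simple i), pos (simple j)⁆ := by
  rw [combination, Finset.sum_eq_single_of_mem j (by simp [h])]
  · simp
  · intro l _ hl
    simp [hl]

lemma lie_pos_simple_combination (i : Fin 7) (c d : Fin 7 → ℂ) :
    ⁅pos (simple i), combination i c d⁆ = combination i 0 c := by
  rw [combination, combination, lie_sum]
  refine Finset.sum_congr rfl fun j hj => ?_
  rw [lie_add, lie_smul, lie_smul,
    lie_pos_simple_lie_pos_simple (Finset.ne_of_mem_erase hj).symm, smul_zero, add_zero,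
    Pi.zero_apply, zero_smul, zero_add]

lemma lie_neg_simple_combination (i : Fin 7) (c d : Fin 7 → ℂ) :
    ⁅neg (simple i), combination i c d⁆ =
      combination i (fun j => -(pairing i (simple j) * d j)) 0 := by
  rw [combination, combination, lie_sum]
  refine Finset.sum_congr rfl fun j hj => ?_
  have h := (Finset.ne_of_mem_erase hj).symm
  rw [lie_add, lie_smul, lie_smul, lie_neg_simple_lie_pos_simple h, lie_neg_simple_pos_simple h,
    Pi.zero_apply]
  module

lemma combination_zero (i : Fin 7) : combination i 0 0 = 0 := by
  simp [combination]

lemma lie_torus_combination_eq_zero {i : Fin 7} {c d m : Fin 7 → ℂ}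
    (hc : ∀ j ≠ i, c j = 0 ∨ m j = 0)
    (hd : ∀ j ≠ i, pairing i (simple j) = -1 → d j = 0 ∨ m i + m j = 0) :
    ⁅torus m, combination i c d⁆ = 0 := by
  rw [combination, lie_sum]
  refine Finset.sum_eq_zero fun j hj => ?_
  have hj := Finset.ne_of_mem_erase hj
  rw [lie_add, lie_smul, lie_smul, leibniz_lie, lie_torus_pos, lie_torus_pos, smul_lie, lie_smul,
    ← add_smul, rootValue_simple, rootValue_simple, smul_smul, smul_smul,
    mul_eq_zero.mpr (hc j hj), zero_smul, zero_add]
  rcases pairing_simple_eq hj.symm with h | h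
  · rw [lie_pos_simple_of_pairing_eq_zero hj.symm h, smul_zero]
  · rw [mul_eq_zero.mpr (hd j hj h), zero_smul]

/-- The pair `s`, `e` is given by a dominant integral point and a combination of root vectors. -/
def HasForm {L : Type*} [LieRing L] [LieAlgebra ℂ L] (s e : L) (n : Fin 7 → ℕ) (i : Fin 7)
    (c d : Fin 7 → ℂ) : Prop :=
  ∃ φ : L →ₗ⁅ℂ⁆ SeqOp, IsModel φ ∧ φ s = torus (fun i => (n i : ℂ)) ∧ φ e = combination i c d

section Form

variable {L : Type*} [LieRing L] [LieAlgebra ℂ L] {s e : L} {n : Fin 7 → ℕ} {i : Fin 7}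
  {c d : Fin 7 → ℂ}

lemma IsModel.exists_hasForm {φ : L →ₗ⁅ℂ⁆ SeqOp} (hφ : IsModel φ)
    (hs : φ s = torus fun i => (n i : ℂ)) (he : ⁅s, e⁆ = (2 : ℂ) • e) (hi : n i = 0)
    (hn : ∀ j ≠ i, n j = 2) : ∃ c d, HasForm s e n i c d := by
  obtain ⟨a, ha, hk⟩ := hφ.exists_apply_eq_sum hs he
  suffices h : ∃ c d, ∑ k, a k • pos k = combination i c d by
    obtain ⟨c, d, h⟩ := h
    exact ⟨c, d, φ, hφ, hs, ha.trans h⟩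
  refine Finset.sum_induction _ (fun x => ∃ c d, x = combination i c d) ?_
    ⟨0, 0, (combination_zero i).symm⟩ fun k _ => ?_
  · rintro _ _ ⟨c, d, rfl⟩ ⟨c', d', rfl⟩
    exact ⟨_, _, (combination_add i c d c' d').symm⟩
  by_cases hak : a k = 0
  · exact ⟨0, 0, by rw [hak, zero_smul, combination_zero]⟩
  have h := hk k hak
  rw [natValue, ← Finset.add_sum_erase _ _ (Finset.mem_univ i), hi, mul_zero, zero_add,
    Finset.sum_congr rfl fun j hj => by rw [hn j (Finset.ne_of_mem_erase hj)],
    ← Finset.sum_mul] at h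
  obtain ⟨j, hj, rfl | ⟨ε, -, hε⟩⟩ := eq_simple_or_agree_bracket i k (by omega)
  · exact ⟨_, _, (combination_single_left hj _).symm⟩
  · refine ⟨_, _, Eq.trans ?_ (combination_single_right hj (a k * ε)).symm⟩
    rw [pos, toOp_eq_of_agree hε, toOp_scale, toOp_bracket, smul_smul]
    rfl

lemma HasForm.not_forall (h : HasForm s e n i c d)
    (hdist : ∀ x : L, ⁅x, e⁆ = 0 → (LieAlgebra.ad ℂ L x).IsSemisimple → x = 0) :
    ¬ ∀ j ≠ i, pairing i (simple j) = -1 → c j = 0 ∨ d j = 0 := by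
  intro hcd
  obtain ⟨φ, hφ, -, he⟩ := h
  have := hφ.eq_zero_of_lie_torus hdist
    (m := fun j => if j = i then 1 else if pairing i (simple j) = -1 ∧ c j = 0 then -1 else 0)
    (by
      rw [he]
      refine lie_torus_combination_eq_zero (fun j hj => ?_) fun j hj hij => ?_
      · by_cases hc : c j = 0
        · exact Or.inl hc
        · exact Or.inr (by rw [if_neg hj, if_neg fun h => hc h.2])
      · by_cases hc : c j = 0
        · exact Or.inr (by rw [if_pos rfl, if_neg hj, if_pos ⟨hij, hc⟩, add_neg_cancel])
        · exact Or.inl ((hcd j hj hij).resolve_left hc))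
  simpa using congrFun this i

lemma HasForm.ne_zero (h : HasForm s e n i c d)
    (hdist : ∀ x : L, ⁅x, e⁆ = 0 → (LieAlgebra.ad ℂ L x).IsSemisimple → x = 0)
    {j : Fin 7} (hj : j ≠ i) (hij : pairing i (simple j) = 0) : c j ≠ 0 := by
  intro hc
  obtain ⟨φ, hφ, -, he⟩ := h
  have := hφ.eq_zero_of_lie_torus hdist (m := Pi.single j 1) (by
    rw [he]
    refine lie_torus_combination_eq_zero (fun l _ => ?_) fun l hl hil => ?_
    · by_cases hlj : l = j
      · exact Or.inl (hlj ▸ hc)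
      · exact Or.inr (Pi.single_eq_of_ne hlj _)
    · refine Or.inr ?_
      have hlj : l ≠ j := by
        rintro rfl
        omega
      rw [Pi.single_eq_of_ne hj.symm, Pi.single_eq_of_ne hlj, add_zero])
  simpa using congrFun this j

variable [FiniteDimensional ℂ L]

lemma HasForm.raise (h : HasForm s e n i c d) (hi : n i = 0) (x : ℂ) :
    HasForm s e n i c fun j => d j + x * c j := by
  obtain ⟨φ, hφ, hs, he⟩ := h
  obtain ⟨g, hg⟩ := hφ.exists_apply_eq (model.smul_mem x (pos_simple_mem i))
  obtain ⟨σ, -, hσ⟩ := exists_lieEquiv_exp g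
  have hgs : ⁅g, s⁆ = 0 := hφ.injective (by
    rw [φ.map_lie, hg, hs, smul_lie, ← lie_skew, lie_torus_pos, rootValue_simple, hi,
      Nat.cast_zero, zero_smul, neg_zero, smul_zero, map_zero])
  have hge : φ ⁅g, e⁆ = x • combination i 0 c := by
    rw [φ.map_lie, hg, he, smul_lie, lie_pos_simple_combination]
  have hgge : ⁅g, ⁅g, e⁆⁆ = 0 := hφ.injective (by
    rw [φ.map_lie, hge, hg, smul_lie, lie_smul, lie_pos_simple_combination, combination_zero,
      smul_zero, smul_zero, map_zero])
  refine ⟨_, hφ.comp σ, ?_, ?_⟩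
  · change φ (σ s) = _
    rw [hσ s (by rw [hgs, lie_zero, lie_zero]), hgs, lie_zero, smul_zero, add_zero, add_zero, hs]
  · change φ (σ e) = _
    rw [hσ e (by rw [hgge, lie_zero]), hgge, smul_zero, add_zero, map_add, he, hge, combination,
      combination, combination, Finset.smul_sum, ← Finset.sum_add_distrib]
    refine Finset.sum_congr rfl fun j _ => ?_
    rw [Pi.zero_apply]
    module

lemma HasForm.lower (h : HasForm s e n i c d) (hi : n i = 0) (y : ℂ) :
    HasForm s e n i (fun j => c j - y * (pairing i (simple j) * d j)) d := by
  obtain ⟨φ, hφ, hs, he⟩ := h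
  obtain ⟨g, hg⟩ := hφ.exists_apply_eq (model.smul_mem y (neg_simple_mem i))
  obtain ⟨σ, -, hσ⟩ := exists_lieEquiv_exp g
  have hgs : ⁅g, s⁆ = 0 := hφ.injective (by
    rw [φ.map_lie, hg, hs, smul_lie, ← lie_skew, lie_torus_neg, rootValue_simple, hi,
      Nat.cast_zero, _root_.neg_zero, zero_smul, _root_.neg_zero, smul_zero, map_zero])
  have hge : φ ⁅g, e⁆ = y • combination i (fun j => -(pairing i (simple j) * d j)) 0 := by
    rw [φ.map_lie, hg, he, smul_lie, lie_neg_simple_combination]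
  have hgge : ⁅g, ⁅g, e⁆⁆ = 0 := hφ.injective (by
    rw [φ.map_lie, hge, hg, smul_lie, lie_smul, lie_neg_simple_combination]
    simp [combination])
  refine ⟨_, hφ.comp σ, ?_, ?_⟩
  · change φ (σ s) = _
    rw [hσ s (by rw [hgs, lie_zero, lie_zero]), hgs, lie_zero, smul_zero, add_zero, add_zero, hs]
  · change φ (σ e) = _
    rw [hσ e (by rw [hgge, lie_zero]), hgge, smul_zero, add_zero, map_add, he, hge, combination,
      combination, combination, Finset.smul_sum, ← Finset.sum_add_distrib]
    refine Finset.sum_congr rfl fun j _ => ?_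
    rw [Pi.zero_apply]
    module

lemma HasForm.exists_eq_zero_or (h : HasForm s e n i c d) (hi : n i = 0) {p q : Fin 7}
    (hq : pairing i (simple q) = -1) :
    ∃ c' d', HasForm s e n i c' d' ∧ (c' p = 0 ∨ d' p = 0) ∧ (c' q = 0 ∨ d' q = 0) ∧
      ∀ j, c j = 0 → d j = 0 → c' j = 0 := by
  by_cases hcp : c p = 0
  · by_cases hcq : c q = 0
    · exact ⟨c, d, h, Or.inl hcp, Or.inl hcq, fun j hc _ => hc⟩
    · exact ⟨_, _, h.raise hi (-d q / c q), Or.inl hcp, Or.inr (by field_simp; ring),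
        fun j hc _ => hc⟩
  · have h₁ := h.raise hi (-d p / c p)
    have hdp : d p + -d p / c p * c p = 0 := by field_simp; ring
    by_cases hdq : d q + -d p / c p * c q = 0
    · exact ⟨_, _, h₁, Or.inr hdp, Or.inr hdq, fun j hc _ => hc⟩
    · refine ⟨_, _, h₁.lower hi (-c q / (d q + -d p / c p * c q)), Or.inr hdp, Or.inl ?_,
        fun j hc hd => by simp [hc, hd]⟩
      rw [hq]
      set u := d q + -d p / c p * c q
      push_cast
      field_simp
      ring

lemma HasForm.eq_three (h : HasForm s e n i c d) (hi : n i = 0)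
    (hdist : ∀ x : L, ⁅x, e⁆ = 0 → (LieAlgebra.ad ℂ L x).IsSemisimple → x = 0) : i = 3 := by
  by_contra hi3
  have : ∀ i : Fin 7, i ≠ 3 → ∃ p q : Fin 7,
      pairing i (simple q) = -1 ∧ ∀ j ≠ i, pairing i (simple j) = -1 → j = p ∨ j = q := by
    decide +kernel
  obtain ⟨p, q, hq, hpq⟩ := this i hi3
  obtain ⟨c', d', h', hp', hq', -⟩ := h.exists_eq_zero_or hi hq
  refine h'.not_forall hdist fun j hj hij => ?_
  rcases hpq j hj hij with rfl | rfl
  · exact hp'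
  · exact hq'

/-- A normal form of the nilpositive element. -/
lemma HasForm.exists_normal (h : HasForm s e n 3 c d) (hi : n 3 = 0)
    (hdist : ∀ x : L, ⁅x, e⁆ = 0 → (LieAlgebra.ad ℂ L x).IsSemisimple → x = 0) :
    ∃ c d, HasForm s e n 3 c d ∧ d 1 = 0 ∧ c 2 = 0 ∧ c 0 ≠ 0 ∧ c 1 ≠ 0 ∧ d 2 ≠ 0 ∧ c 4 ≠ 0 ∧
      d 4 ≠ 0 ∧ c 5 ≠ 0 ∧ c 6 ≠ 0 := by
  have hpair : pairing 3 (simple 1) = -1 ∧ pairing 3 (simple 2) = -1 ∧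
      pairing 3 (simple 4) = -1 ∧ pairing 3 (simple 0) = 0 ∧ pairing 3 (simple 5) = 0 ∧
      pairing 3 (simple 6) = 0 ∧
      ∀ j ≠ 3, pairing 3 (simple j) = -1 → j = 1 ∨ j = 2 ∨ j = 4 := by
    decide +kernel
  obtain ⟨hp1, hp2, hp4, hp0, hp5, hp6, hnb⟩ := hpair
  have key {c d} (h : HasForm s e n 3 c d) (h₁ : c 1 = 0 ∨ d 1 = 0) (h₂ : c 2 = 0 ∨ d 2 = 0)
      (h₄ : c 4 = 0 ∨ d 4 = 0) : False := h.not_forall hdist fun j hj hij => by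
    rcases hnb j hj hij with rfl | rfl | rfl <;> assumption
  have h₀ : ¬ (c 1 = 0 ∧ d 1 = 0) := fun h₁ => by
    obtain ⟨c', d', h', h₂, h₄, hz⟩ := h.exists_eq_zero_or hi hp4
    exact key h' (Or.inl (hz 1 h₁.1 h₁.2)) h₂ h₄
  obtain ⟨c, d, h, hc1⟩ : ∃ c d, HasForm s e n 3 c d ∧ c 1 ≠ 0 := by
    by_cases hc1 : c 1 = 0
    · exact ⟨_, _, h.lower hi 1, by simpa [hc1, hp1] using fun hd => h₀ ⟨hc1, hd⟩⟩
    · exact ⟨c, d, h, hc1⟩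
  obtain ⟨d, h, hd1⟩ : ∃ d, HasForm s e n 3 c d ∧ d 1 = 0 :=
    ⟨_, h.raise hi (-d 1 / c 1), by field_simp; ring⟩
  have hd2 : d 2 ≠ 0 := fun hd2 => by
    by_cases hd4 : d 4 = 0
    · exact key h (Or.inr hd1) (Or.inr hd2) (Or.inr hd4)
    · refine key (h.lower hi (-c 4 / d 4)) (Or.inr hd1) (Or.inr hd2) (Or.inl ?_)
      rw [hp4]
      push_cast
      field_simp
      ring
  obtain ⟨c, h, hc1, hc2⟩ : ∃ c, HasForm s e n 3 c d ∧ c 1 ≠ 0 ∧ c 2 = 0 :=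
    ⟨_, h.lower hi (-c 2 / d 2), by simpa [hd1] using hc1, by
      rw [hp2]
      push_cast
      field_simp
      ring⟩
  exact ⟨c, d, h, hd1, hc2, h.ne_zero hdist (by decide) hp0, hc1, hd2,
    fun hc4 => key h (Or.inr hd1) (Or.inl hc2) (Or.inl hc4),
    fun hd4 => key h (Or.inr hd1) (Or.inl hc2) (Or.inr hd4),
    h.ne_zero hdist (by decide) hp5, h.ne_zero hdist (by decide) hp6⟩

end Form

/-- The integral combination of matrices given by a list of indices and coefficients. -/
def linS {ι : Type*} (v : ι → Sparse) (l : List (ι × ℤ)) : Sparse :=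
  l.foldr (fun t S => scale t.2 (v t.1) ++ S) []

lemma toOp_linS {ι : Type*} (v : ι → Sparse) (l : List (ι × ℤ)) :
    toOp (linS v l) = (l.map fun t => (t.2 : ℂ) • toOp (v t.1)).sum := by
  induction l with
  | nil => rfl
  | cons t l ih =>
    have : linS v (t :: l) = scale t.2 (v t.1) ++ linS v l := rfl
    rw [this, toOp_append, toOp_scale, ih, List.map_cons, List.sum_cons]

/-- The integral combination of positive root vectors given by a list. -/
noncomputable def combo (l : List (Fin 63 × ℤ)) : SeqOp := toOp (linS posS l)

lemma combo_eq_sum (l : List (Fin 63 × ℤ)) :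
    combo l = (l.map fun t => (t.2 : ℂ) • pos t.1).sum :=
  toOp_linS posS l

/-- A basis of the centralizer of the subregular nilpotent element, which is its first vector. -/
def centralizerList : Fin 9 → List (Fin 63 × ℤ) :=
  ![[(0, 1), (1, 1), (4, 1), (5, 1), (6, 1), (9, 1), (10, 1)],
    [(18, 1), (19, -2), (20, 1), (21, -1), (22, -2), (23, 1), (24, -2), (27, 2)],
    [(32, -1), (33, -2), (35, -3), (36, -1), (37, 2), (39, 1), (40, 2)],
    [(32, -1), (35, -1), (36, -1), (37, 1), (40, 1)],
    [(45, -1), (46, 1), (47, 1), (48, 1)],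
    [(51, -1), (52, -1), (53, 1)],
    [(54, -1), (55, -1), (56, 1)],
    [(60, 1)],
    [(62, 1)]]

/-- The simple root values of the subregular semisimple element. -/
def subregularPoint : Fin 7 → ℕ := ![2, 2, 2, 0, 2, 2, 2]

lemma combination_three {c d : Fin 7 → ℂ} (h₁ : d 1 = 0) (h₂ : c 2 = 0) :
    combination 3 c d = c 0 • pos 0 + c 1 • pos 1 + c 4 • pos 4 + c 5 • pos 5 + c 6 • pos 6 +
      d 2 • pos 9 + (-d 4) • pos 10 := by
  have h₃ : (Finset.univ : Finset (Fin 7)).erase 3 = {0, 1, 2, 4, 5, 6} := by decide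
  have h₄ : ⁅pos (simple 3), pos (simple 2)⁆ = pos 9 := (pos_eq_lie 9 (by decide)).symm
  have h₅ : ⁅pos (simple 3), pos (simple 4)⁆ = -pos 10 := by
    rw [← lie_skew, neg_inj]
    exact (pos_eq_lie 10 (by decide)).symm
  have h₆ {j : Fin 7} (hj : 3 ≠ j) (h : pairing 3 (simple j) = 0) :
      ⁅pos (simple 3), pos (simple j)⁆ = 0 := lie_pos_simple_of_pairing_eq_zero hj h
  rw [combination, h₃, Finset.sum_insert (by decide), Finset.sum_insert (by decide),
    Finset.sum_insert (by decide), Finset.sum_insert (by decide), Finset.sum_insert (by decide),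
    Finset.sum_singleton, h₁, h₂, h₄, h₅, h₆ (j := 0) (by decide) (by decide +kernel),
    h₆ (j := 5) (by decide) (by decide +kernel), h₆ (j := 6) (by decide) (by decide +kernel),
    show simple 0 = 0 from rfl, show simple 1 = 1 from rfl, show simple 4 = 4 from rfl,
    show simple 5 = 5 from rfl, show simple 6 = 6 from rfl]
  module

/-- The subregular nilpotent element is conjugate to the standard one. -/
lemma HasForm.exists_standard {L : Type*} [LieRing L] [LieAlgebra ℂ L] [FiniteDimensional ℂ L]
    {s e : L} {n : Fin 7 → ℕ} {c d : Fin 7 → ℂ} (h : HasForm s e n 3 c d) (hi : n 3 = 0)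
    (hn : ∀ j ≠ 3, n j = 2)
    (hdist : ∀ x : L, ⁅x, e⁆ = 0 → (LieAlgebra.ad ℂ L x).IsSemisimple → x = 0) :
    ∃ φ : L →ₗ⁅ℂ⁆ SeqOp, IsModel φ ∧ φ s = torus (fun i => (subregularPoint i : ℂ)) ∧
      φ e = combo (centralizerList 0) := by
  obtain ⟨c, d, ⟨φ, hφ, hs, he⟩, hd1, hc2, hc0, hc1, hd2, hc4, hd4, hc5, hc6⟩ :=
    h.exists_normal hi hdist
  have hnp : n = subregularPoint := by
    funext j
    by_cases hj : j = 3
    · rw [hj, hi]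
      rfl
    · rw [hn j hj]
      revert j
      decide
  have he' : e = c 0 • hφ.basis (Sum.inl 0) + c 1 • hφ.basis (Sum.inl 1) +
      c 4 • hφ.basis (Sum.inl 4) + c 5 • hφ.basis (Sum.inl 5) + c 6 • hφ.basis (Sum.inl 6) +
      d 2 • hφ.basis (Sum.inl 9) + (-d 4) • hφ.basis (Sum.inl 10) := hφ.injective (by
    rw [he, combination_three hd1 hc2]
    simp only [map_add, map_smul, hφ.apply_basis]
    rfl)
  obtain ⟨u, hu0, hu1, hu4, hu5, hu6, hu9, hu10⟩ : ∃ u : Fin 7 → ℂ, u 0 = -Complex.log (c 0) ∧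
      u 1 = -Complex.log (c 1) ∧ u 4 = -Complex.log (c 4) ∧ u 5 = -Complex.log (c 5) ∧
      u 6 = -Complex.log (c 6) ∧ u 2 + u 3 = -Complex.log (d 2) ∧
      u 3 + u 4 = -Complex.log (-d 4) :=
    ⟨![-Complex.log (c 0), -Complex.log (c 1),
      -Complex.log (d 2) - (-Complex.log (-d 4) - -Complex.log (c 4)),
      -Complex.log (-d 4) - -Complex.log (c 4), -Complex.log (c 4), -Complex.log (c 5),
      -Complex.log (c 6)], rfl, rfl, rfl, rfl, rfl, sub_add_cancel _ _, sub_add_cancel _ _⟩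
  obtain ⟨g, hg⟩ := hφ.exists_apply_eq (torus_mem u)
  obtain ⟨σ, hσ, hσ'⟩ := exists_lieEquiv_exp g
  have hexp {a μ : ℂ} (ha : a ≠ 0) (hμ : μ = -Complex.log a) {k : Fin 63}
      (hk : rootValue k u = μ) : φ (σ (a • hφ.basis (Sum.inl k))) = pos k := by
    rw [map_smul, hσ _ _ (hφ.lie_basis hg _), weight, Sum.elim_inl, hk, hμ, Complex.exp_neg,
      Complex.exp_log ha, smul_inv_smul₀ ha, hφ.apply_basis]
    rfl
  have hr (i : Fin 7) : rootValue (simple i) u = u i := rootValue_simple i u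
  have h9 : rootValue 9 u = u 2 + u 3 := by
    have : coeff 9 = ![0, 0, 1, 1, 0, 0, 0] := by decide +kernel
    simp [rootValue, this, Fin.sum_univ_seven]
  have h10 : rootValue 10 u = u 3 + u 4 := by
    have : coeff 10 = ![0, 0, 0, 1, 1, 0, 0] := by decide +kernel
    simp [rootValue, this, Fin.sum_univ_seven]
  refine ⟨_, hφ.comp σ, ?_, ?_⟩
  · have hgs : ⁅g, s⁆ = 0 := hφ.injective (by
      rw [φ.map_lie, hg, hs, lie_torus_torus, map_zero])
    change φ (σ s) = _
    rw [hσ' s (by simp [hgs]), hgs, lie_zero, smul_zero, add_zero, add_zero, hs, hnp]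
  · change φ (σ e) = _
    rw [he']
    simp only [map_add σ, map_add φ]
    rw [hexp hc0 hu0 (k := 0) (hr 0), hexp hc1 hu1 (k := 1) (hr 1), hexp hc4 hu4 (k := 4) (hr 4),
      hexp hc5 hu5 (k := 5) (hr 5), hexp hc6 hu6 (k := 6) (hr 6), hexp hd2 hu9 h9,
      hexp (_root_.neg_ne_zero.mpr hd4) hu10 h10]
    simp [combo_eq_sum, centralizerList, add_assoc]

/-- The weights of the basis of the centralizer of the subregular nilpotent element. -/
def centralizerWeight : Fin 9 → ℕ := ![2, 6, 10, 10, 14, 16, 18, 22, 26]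

/-- The subregular nilnegative element. -/
def nilnegative : List (Fin 63 × ℤ) :=
  [(0, 26), (1, 37), (2, 35), (4, 35), (5, 40), (6, 21), (8, 22), (9, 50), (10, 22)]

/-- The coroot coordinates of the subregular semisimple element. -/
def corootCoordinate : Fin 7 → ℤ := ![26, 37, 50, 72, 57, 40, 21]

lemma agree_bracket_centralizerList : ∀ i : Fin 9,
    agree (bracket (linS posS (centralizerList i)) (linS posS (centralizerList 0))) [] = true := by
  decide +kernel

lemma agree_bracket_nilnegative :
    agree (bracket (linS posS (centralizerList 0)) (linS negS nilnegative))
      (linS corS ((List.finRange 7).map fun i => (i, corootCoordinate i))) = true := by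
  decide +kernel

lemma natValue_centralizerList : ∀ i : Fin 9, ∀ t ∈ centralizerList i,
    natValue subregularPoint t.1 = centralizerWeight i := by
  decide +kernel

lemma natValue_nilnegative : ∀ t ∈ nilnegative, natValue subregularPoint t.1 = 2 := by
  decide +kernel

lemma sum_corootCoordinate : ∀ i : Fin 7, ∑ j, corootCoordinate j * pairing j (simple i) =
    subregularPoint i := by
  decide +kernel

lemma lie_combo_combo_zero (i : Fin 9) :
    ⁅combo (centralizerList i), combo (centralizerList 0)⁆ = 0 := by
  rw [combo, combo, ← toOp_bracket, toOp_eq_of_agree (agree_bracket_centralizerList i), toOp_nil]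

lemma lie_combo_nilnegative :
    ⁅combo (centralizerList 0), toOp (linS negS nilnegative)⁆ =
      torus fun i => (subregularPoint i : ℂ) := by
  rw [combo, ← toOp_bracket, toOp_eq_of_agree agree_bracket_nilnegative, toOp_linS, List.map_map]
  have h (i : Fin 7) : (subregularPoint i : ℂ) =
      ∑ j, (corootCoordinate j : ℂ) * pairing j (simple i) := by
    rw [← Int.cast_natCast, ← sum_corootCoordinate]
    push_cast
    rfl
  rw [funext h, ← sum_smul_cor, Fin.sum_univ_def]
  rfl

lemma lie_list_sum_eq_smul {L : Type*} [LieRing L] [LieAlgebra ℂ L] {s : L} {a : ℂ} (l : List L)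
    (h : ∀ x ∈ l, ⁅s, x⁆ = a • x) : ⁅s, l.sum⁆ = a • l.sum := by
  induction l with
  | nil => simp
  | cons x l ih =>
    rw [List.sum_cons, lie_add, smul_add, h x (by simp), ih fun y hy => h y (by simp [hy])]

lemma lie_torus_combo (i : Fin 9) :
    ⁅torus fun i => (subregularPoint i : ℂ), combo (centralizerList i)⁆ =
      (centralizerWeight i : ℂ) • combo (centralizerList i) := by
  rw [combo_eq_sum]
  refine lie_list_sum_eq_smul _ fun x hx => ?_
  obtain ⟨t, ht, rfl⟩ := List.mem_map.mp hx
  rw [lie_smul, lie_torus_pos, rootValue_natCast, natValue_centralizerList i t ht, smul_comm]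

lemma lie_torus_nilnegative :
    ⁅torus fun i => (subregularPoint i : ℂ), toOp (linS negS nilnegative)⁆ =
      (-2 : ℂ) • toOp (linS negS nilnegative) := by
  rw [toOp_linS]
  refine lie_list_sum_eq_smul _ fun x hx => ?_
  obtain ⟨t, ht, rfl⟩ := List.mem_map.mp hx
  have := lie_torus_neg (fun i => (subregularPoint i : ℂ)) t.1
  rw [rootValue_natCast, natValue_nilnegative t ht, Nat.cast_ofNat] at this
  rw [lie_smul, smul_comm]
  exact congrArg _ this

lemma combo_mem (l : List (Fin 63 × ℤ)) : combo l ∈ model := by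
  rw [combo_eq_sum]
  refine list_sum_mem fun x hx => ?_
  obtain ⟨t, -, rfl⟩ := List.mem_map.mp hx
  exact model.smul_mem _ (pos_mem _)

lemma nilnegative_mem : toOp (linS negS nilnegative) ∈ model := by
  rw [toOp_linS]
  refine list_sum_mem fun x hx => ?_
  obtain ⟨t, -, rfl⟩ := List.mem_map.mp hx
  exact model.smul_mem _ (neg_mem _)

/-- The coefficient of a positive root vector in a combination. -/
def comboCoeff (l : List (Fin 63 × ℤ)) (k : Fin 63) : ℤ :=
  (l.map fun t => if t.1 = k then t.2 else 0).sum

lemma combo_eq_sum_comboCoeff (l : List (Fin 63 × ℤ)) :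
    combo l = ∑ k, (comboCoeff l k : ℂ) • pos k := by
  rw [combo_eq_sum]
  induction l with
  | nil => simp [comboCoeff]
  | cons t l ih =>
    simp only [comboCoeff, List.map_cons, List.sum_cons, Int.cast_add, add_smul,
      Finset.sum_add_distrib] at ih ⊢
    rw [ih]
    simp

/-- Coordinates which separate the basis of the centralizer. -/
def pivot : Fin 9 → Fin 63 := ![0, 18, 33, 37, 45, 51, 54, 60, 62]

lemma comboCoeff_pivot : ∀ i : Fin 9, comboCoeff (centralizerList i) (pivot i) ≠ 0 ∧
    ∀ j, j ≠ i → j = 2 ∧ i = 3 ∨ comboCoeff (centralizerList j) (pivot i) = 0 := by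
  decide +kernel

lemma linearIndependent_combo :
    LinearIndependent ℂ fun i : Fin 9 => combo (centralizerList i) := by
  have hpos : LinearIndependent ℂ pos :=
    linearIndependent_rootVector.comp Sum.inl Sum.inl_injective
  rw [Fintype.linearIndependent_iff] at hpos ⊢
  intro g hg
  have h (k : Fin 63) : ∑ i, g i * comboCoeff (centralizerList i) k = 0 := by
    refine hpos (fun k => ∑ i, g i * comboCoeff (centralizerList i) k) ?_ k
    simp only [Finset.sum_smul, mul_smul]
    rw [Finset.sum_comm, ← hg]
    exact Finset.sum_congr rfl fun i _ => by rw [combo_eq_sum_comboCoeff, Finset.smul_sum]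
  have key (i : Fin 9) (h' : i = 3 → g 2 = 0) : g i = 0 := by
    have h := h (pivot i)
    rw [Finset.sum_eq_single i] at h
    · exact (mul_eq_zero.mp h).resolve_right (Int.cast_ne_zero.mpr (comboCoeff_pivot i).1)
    · intro j _ hj
      rcases (comboCoeff_pivot i).2 j hj with ⟨rfl, hi⟩ | h₀
      · rw [h' hi, zero_mul]
      · rw [h₀, Int.cast_zero, mul_zero]
    · simp
  exact fun i => key i fun _ => key 2 fun h => absurd h (by decide)

section Triple

variable {L : Type*} [LieRing L] [LieAlgebra ℂ L] {φ : L →ₗ⁅ℂ⁆ SeqOp} {s e h f : L}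

lemma eq_of_lie_sum_eq_smul {ι : Type*} [Fintype ι] {X : ι → L} (hX : LinearIndependent ℂ X)
    {w : ι → ℂ} (hs : ∀ i, ⁅s, X i⁆ = w i • X i) {a : ι → ℂ} {μ : ℂ}
    (h : ⁅s, ∑ i, a i • X i⁆ = μ • ∑ i, a i • X i) {i : ι} (hi : a i ≠ 0) : w i = μ := by
  rw [lie_sum, Finset.smul_sum, ← sub_eq_zero, ← Finset.sum_sub_distrib] at h
  have := Fintype.linearIndependent_iff.mp hX (fun i => a i * (w i - μ)) (by
    rw [← h]
    refine Finset.sum_congr rfl fun i _ => ?_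
    rw [lie_smul, hs]
    module) i
  exact sub_eq_zero.mp ((mul_eq_zero.mp this).resolve_left hi)


lemma IsModel.exists_centralizer_basis [FiniteDimensional ℂ L] (hφ : IsModel φ)
    (he : φ e = combo (centralizerList 0))
    (hdim : Module.finrank ℂ ↥(centralizer L e) = 9) : ∃ X : Fin 9 → L,
      (∀ i, φ (X i) = combo (centralizerList i)) ∧ LinearIndependent ℂ X ∧
      ∀ x, ⁅x, e⁆ = 0 ↔ ∃ a : Fin 9 → ℂ, x = ∑ i, a i • X i := by
  choose X hX using fun i => hφ.exists_apply_eq (combo_mem (centralizerList i))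
  have hli : LinearIndependent ℂ X := by
    have h : (φ : L →ₗ[ℂ] SeqOp) ∘ X = fun i => combo (centralizerList i) := funext hX
    exact LinearIndependent.of_comp (φ : L →ₗ[ℂ] SeqOp) (h ▸ linearIndependent_combo)
  have hXe (i : Fin 9) : ⁅X i, e⁆ = 0 := hφ.injective (by
    rw [φ.map_lie, hX, he, lie_combo_combo_zero, map_zero])
  have hspan : Submodule.span ℂ (Set.range X) = (centralizer L e).toSubmodule :=
    Submodule.eq_of_le_of_finrank_eq (Submodule.span_le.mpr (by rintro _ ⟨i, rfl⟩; exact hXe i))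
      ((finrank_span_eq_card hli).trans hdim.symm)
  refine ⟨X, hX, hli, fun x => ?_⟩
  have : ⁅x, e⁆ = 0 ↔ x ∈ Submodule.span ℂ (Set.range X) := by
    rw [hspan]
    rfl
  rw [this, Submodule.mem_span_range_iff_exists_fun]
  exact exists_congr fun a => eq_comm

lemma IsModel.lie_eq_centralizerWeight_smul (hφ : IsModel φ)
    (hh : φ h = torus fun i => (subregularPoint i : ℂ))
    {X : Fin 9 → L} (hX : ∀ i, φ (X i) = combo (centralizerList i)) (i : Fin 9) :
    ⁅h, X i⁆ = (centralizerWeight i : ℂ) • X i := hφ.injective (by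
  rw [φ.map_lie, hh, hX, lie_torus_combo, map_smul, hX])

/-- The semisimple and nilnegative elements of the triple are determined. -/
lemma IsModel.apply_eq_and_apply_eq (hφ : IsModel φ)
    (hs : φ s = torus fun i => (subregularPoint i : ℂ)) (he : φ e = combo (centralizerList 0))
    (t : IsSl2Triple h e f) (hsh : ⁅s, h⁆ = 0) {X : Fin 9 → L}
    (hX : ∀ i, φ (X i) = combo (centralizerList i)) (hli : LinearIndependent ℂ X)
    (hcent : ∀ x, ⁅x, e⁆ = 0 ↔ ∃ a : Fin 9 → ℂ, x = ∑ i, a i • X i) :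
    φ h = torus (fun i => (subregularPoint i : ℂ)) ∧ φ f = toOp (linS negS nilnegative) := by
  have hsX := hφ.lie_eq_centralizerWeight_smul hs hX
  have hse : ⁅s, e⁆ = (2 : ℂ) • e := by
    have : X 0 = e := hφ.injective (by rw [hX, he])
    rw [← this, hsX]
    rfl
  have hw : ∀ i, centralizerWeight i ≠ 0 := by decide
  have key {x : L} (hxe : ⁅x, e⁆ = 0) (μ : ℂ) (hμ : ∀ i, (centralizerWeight i : ℂ) ≠ μ)
      (hx : ⁅s, x⁆ = μ • x) : x = 0 := by
    obtain ⟨a, rfl⟩ := (hcent x).mp hxe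
    exact Finset.sum_eq_zero fun i _ => smul_eq_zero_of_left
      (by_contra fun ha => hμ i (eq_of_lie_sum_eq_smul hli hsX hx ha)) _
  have hh : h = s := sub_eq_zero.mp (key
    (by rw [sub_lie, hse, t.lie_h_e_nsmul, two_smul, two_smul, sub_self]) 0
    (fun i => Nat.cast_ne_zero.mpr (hw i)) (by rw [lie_sub, hsh, lie_self, sub_zero, zero_smul]))
  obtain ⟨y, hy⟩ := hφ.exists_apply_eq nilnegative_mem
  have hey : ⁅e, y⁆ = s := hφ.injective (by rw [φ.map_lie, he, hy, hs, lie_combo_nilnegative])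
  have hsy : ⁅s, y⁆ = (-2 : ℂ) • y := hφ.injective (by
    rw [φ.map_lie, hs, hy, lie_torus_nilnegative, map_smul, hy])
  have hf : f = y := sub_eq_zero.mp (key
    (by rw [← lie_skew, lie_sub, hey, t.lie_e_f, hh, sub_self, _root_.neg_zero]) (-2)
    (fun i hi => by
      have : ((centralizerWeight i + 2 : ℕ) : ℂ) = 0 := by
        push_cast
        rw [hi]
        ring
      rw [Nat.cast_eq_zero] at this
      omega)
    (by
      have := t.lie_h_f_nsmul
      rw [hh] at this
      rw [lie_sub, this, hsy]
      module))
  exact ⟨by rw [hh, hs], by rw [hf, hy]⟩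

end Triple

/-- The indices of the basis of the centralizer which lie in its centre. -/
def centralIndex : Fin 6 → Fin 9 := ![0, 2, 4, 6, 7, 8]

/-- The index of a centralizing vector dual to a central one. -/
def partner : Fin 6 → Fin 9 := ![8, 6, 4, 3, 1, 0]

/-- The values of the duality between the centre and the centralizer. -/
def partnerValue : Fin 6 → ℤ := ![-26, 90, 98, 30, -66, -26]

lemma agree_bracket_central : ∀ i j, agree (bracket (linS posS (centralizerList (centralIndex i)))
    (linS posS (centralizerList j))) [] = true := by
  decide +kernel

lemma agree_bracket_noncentral :
    agree (bracket (linS posS (centralizerList 3)) (linS posS (centralizerList 1)))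
      (scale (-3) (linS posS (centralizerList 5))) = true ∧
    agree (bracket (linS posS (centralizerList 5)) (linS posS (centralizerList 1)))
      (scale 6 (linS posS (centralizerList 7))) = true ∧
    agree (bracket (linS posS (centralizerList 5)) (linS posS (centralizerList 3)))
      (scale (-2) (linS posS (centralizerList 8))) = true := by
  decide +kernel

lemma agree_bracket_partner : ∀ k j, k ≤ j →
    agree (bracket (bracket (linS negS nilnegative) (linS posS (centralizerList (partner k))))
      (linS posS (centralizerList (centralIndex j))))
      (scale (if j = k then partnerValue k else 0) (linS posS (centralizerList 8))) = true := by
  decide +kernel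

lemma sum_fin_nine {M : Type*} [AddCommMonoid M] (g : Fin 9 → M) :
    ∑ i, g i = g 0 + g 1 + g 2 + g 3 + g 4 + g 5 + g 6 + g 7 + g 8 := by
  rw [Fin.sum_univ_castSucc, Fin.sum_univ_eight]
  rfl

lemma eq_five_of_centralizerWeight :
    ∀ i, centralizerWeight (centralIndex i) = 26 → i = 5 := by
  decide

lemma partnerValue_ne_zero : ∀ k, partnerValue k ≠ 0 := by
  decide

section Center

variable {L : Type*} [LieRing L] [LieAlgebra ℂ L] {φ : L →ₗ⁅ℂ⁆ SeqOp} {e h f : L} {X : Fin 9 → L}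

lemma IsModel.lie_central (hφ : IsModel φ) (hX : ∀ i, φ (X i) = combo (centralizerList i))
    (i : Fin 6) (j : Fin 9) : ⁅X (centralIndex i), X j⁆ = 0 := hφ.injective (by
  rw [φ.map_lie, hX, hX, combo, combo, ← toOp_bracket,
    toOp_eq_of_agree (agree_bracket_central i j), toOp_nil, map_zero])

lemma IsModel.lie_eq_smul_of_agree (hφ : IsModel φ)
    (hX : ∀ i, φ (X i) = combo (centralizerList i)) {i j k : Fin 9} {c : ℤ}
    (h : agree (bracket (linS posS (centralizerList i)) (linS posS (centralizerList j)))
      (scale c (linS posS (centralizerList k))) = true) : ⁅X i, X j⁆ = (c : ℂ) • X k :=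
  hφ.injective (by
    rw [φ.map_lie, hX, hX, combo, combo, ← toOp_bracket, toOp_eq_of_agree h, toOp_scale,
      map_smul, hX, combo])

lemma IsModel.lie_lie_partner (hφ : IsModel φ) (hf : φ f = toOp (linS negS nilnegative))
    (hX : ∀ i, φ (X i) = combo (centralizerList i)) {k j : Fin 6} (hkj : k ≤ j) :
    ⁅⁅f, X (partner k)⁆, X (centralIndex j)⁆ =
      if j = k then (partnerValue k : ℂ) • X 8 else 0 := hφ.injective (by
  rw [φ.map_lie, φ.map_lie, hX, hX, hf, combo, combo, ← toOp_bracket, ← toOp_bracket,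
    toOp_eq_of_agree (agree_bracket_partner k j hkj), toOp_scale]
  split_ifs
  · rw [map_smul, hX, combo]
  · rw [Int.cast_zero, zero_smul, map_zero])

lemma IsModel.inCenterOfCentralizer_iff (hφ : IsModel φ)
    (hX : ∀ i, φ (X i) = combo (centralizerList i)) (hli : LinearIndependent ℂ X)
    (hcent : ∀ x, ⁅x, e⁆ = 0 ↔ ∃ a : Fin 9 → ℂ, x = ∑ i, a i • X i) (v : L) :
    InCenterOfCentralizer L e v ↔ ∃ a : Fin 6 → ℂ, v = ∑ i, a i • X (centralIndex i) := by
  have hXe (i : Fin 9) : ⁅X i, e⁆ = 0 := (hcent _).mpr ⟨Pi.single i 1, by simp [Pi.single_apply]⟩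
  constructor
  · rintro ⟨hv, hc⟩
    obtain ⟨a, rfl⟩ := (hcent v).mp hv
    have hz := hφ.lie_central hX
    have h₃₁ := hφ.lie_eq_smul_of_agree hX agree_bracket_noncentral.1
    have h₅₁ := hφ.lie_eq_smul_of_agree hX agree_bracket_noncentral.2.1
    have h₅₃ := hφ.lie_eq_smul_of_agree hX agree_bracket_noncentral.2.2
    have hsum (y : Fin 9) : a 1 • ⁅X 1, X y⁆ + a 3 • ⁅X 3, X y⁆ + a 5 • ⁅X 5, X y⁆ = 0 := by
      have h := hc (X y) (hXe y)
      rw [sum_lie, sum_fin_nine] at h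
      simp only [smul_lie] at h
      rw [show ⁅X 0, X y⁆ = 0 from hz 0 y, show ⁅X 2, X y⁆ = 0 from hz 1 y,
        show ⁅X 4, X y⁆ = 0 from hz 2 y, show ⁅X 6, X y⁆ = 0 from hz 3 y,
        show ⁅X 7, X y⁆ = 0 from hz 4 y, show ⁅X 8, X y⁆ = 0 from hz 5 y] at h
      simpa using h
    have h₁ := hsum 1
    have h₂ := hsum 3
    rw [lie_self, h₃₁, h₅₁] at h₁
    rw [lie_self, ← lie_skew, h₃₁, h₅₃] at h₂
    have hl := Fintype.linearIndependent_iff.mp hli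
    have e₁ := hl ![0, 0, 0, 0, 0, -3 * a 3, 0, 6 * a 5, 0] (by
      rw [← h₁]
      simp only [sum_fin_nine]
      simp
      module)
    have e₂ := hl ![0, 0, 0, 0, 0, 3 * a 1, 0, 0, -2 * a 5] (by
      rw [← h₂]
      simp only [sum_fin_nine]
      simp
      module)
    have a₁ : a 1 = 0 := by simpa using e₂ 5
    have a₃ : a 3 = 0 := by simpa using e₁ 5
    have a₅ : a 5 = 0 := by simpa using e₁ 7
    refine ⟨a ∘ centralIndex, ?_⟩
    rw [sum_fin_nine, Fin.sum_univ_six, a₁, a₃, a₅]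
    simp only [zero_smul, add_zero]
    rfl
  · rintro ⟨a, rfl⟩
    refine ⟨(hcent _).mpr ?_, fun y hy => ?_⟩
    · refine (hcent _).mp ?_
      rw [sum_lie]
      exact Finset.sum_eq_zero fun i _ => by rw [smul_lie, hXe, smul_zero]
    · obtain ⟨b, rfl⟩ := (hcent y).mp hy
      rw [sum_lie]
      refine Finset.sum_eq_zero fun i _ => ?_
      rw [smul_lie, lie_sum, Finset.sum_eq_zero, smul_zero]
      exact fun j _ => by rw [lie_smul, hφ.lie_central hX, smul_zero]

lemma IsModel.finrank_zCenter (hφ : IsModel φ)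
    (hX : ∀ i, φ (X i) = combo (centralizerList i)) (hli : LinearIndependent ℂ X)
    (hcent : ∀ x, ⁅x, e⁆ = 0 ↔ ∃ a : Fin 9 → ℂ, x = ∑ i, a i • X i) :
    Module.finrank ℂ ↥(zCenter L e) = 6 := by
  have h : zCenter L e = Submodule.span ℂ (Set.range (X ∘ centralIndex)) := by
    ext v
    rw [Submodule.mem_span_range_iff_exists_fun]
    exact (hφ.inCenterOfCentralizer_iff hX hli hcent v).trans (exists_congr fun a => eq_comm)
  rw [h, finrank_span_eq_card (hli.comp _ (by decide)), Fintype.card_fin]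

lemma eq_of_lie_central_eq_smul (hli : LinearIndependent ℂ X) {w : Fin 9 → ℂ}
    (hw : ∀ i, ⁅h, X i⁆ = w i • X i) {a : Fin 6 → ℂ} {μ : ℂ}
    (hμ : ⁅h, ∑ i, a i • X (centralIndex i)⁆ = μ • ∑ i, a i • X (centralIndex i)) {i : Fin 6}
    (hi : a i ≠ 0) : w (centralIndex i) = μ :=
  eq_of_lie_sum_eq_smul (hli.comp _ (by decide)) (fun i => hw (centralIndex i)) hμ hi

lemma IsModel.exists_eigenvector_iff (hφ : IsModel φ)
    (hh : φ h = torus fun i => (subregularPoint i : ℂ))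
    (hX : ∀ i, φ (X i) = combo (centralizerList i)) (hli : LinearIndependent ℂ X)
    (hcent : ∀ x, ⁅x, e⁆ = 0 ↔ ∃ a : Fin 9 → ℂ, x = ∑ i, a i • X i) (m : ℂ) :
    (∃ z : L, z ≠ 0 ∧ InCenterOfCentralizer L e z ∧ ⁅h, z⁆ = m • z) ↔
      m ∈ ({2, 10, 14, 18, 22, 26} : Set ℂ) := by
  have hw := hφ.lie_eq_centralizerWeight_smul hh hX
  have hz := hφ.inCenterOfCentralizer_iff hX hli hcent
  have hrange : m ∈ ({2, 10, 14, 18, 22, 26} : Set ℂ) ↔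
      ∃ i, (centralizerWeight (centralIndex i) : ℂ) = m := by
    simp [Fin.exists_fin_succ, centralizerWeight, centralIndex, eq_comm]
  rw [hrange]
  constructor
  · rintro ⟨z, hz₀, hzc, hzm⟩
    obtain ⟨a, rfl⟩ := (hz z).mp hzc
    obtain ⟨i, -, hi⟩ := Finset.exists_ne_zero_of_sum_ne_zero hz₀
    exact ⟨i, eq_of_lie_central_eq_smul hli hw hzm (left_ne_zero_of_smul hi)⟩
  · rintro ⟨i, rfl⟩
    exact ⟨X (centralIndex i), hli.ne_zero _,
      (hz _).mpr ⟨Pi.single i 1, by simp [Pi.single_apply]⟩, hw _⟩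

lemma IsModel.propertyP (hφ : IsModel φ) (hh : φ h = torus fun i => (subregularPoint i : ℂ))
    (hf : φ f = toOp (linS negS nilnegative)) (hX : ∀ i, φ (X i) = combo (centralizerList i))
    (hli : LinearIndependent ℂ X)
    (hcent : ∀ x, ⁅x, e⁆ = 0 ↔ ∃ a : Fin 9 → ℂ, x = ∑ i, a i • X i) : PropertyP L e h f := by
  intro m hm hmax v hv hv₀ z hzc hzm
  have hw := hφ.lie_eq_centralizerWeight_smul hh hX
  have hz := hφ.inCenterOfCentralizer_iff hX hli hcent
  have hm26 : m = 26 := by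
    have hmem := (hφ.exists_eigenvector_iff hh hX hli hcent m).mp hm
    have hle := hmax 26 ((hφ.exists_eigenvector_iff hh hX hli hcent 26).mpr (by simp))
    have hre : (26 : ℝ) ≤ m.re := (Complex.le_def.mp hle).1
    simp only [Set.mem_insert_iff, Set.mem_singleton_iff] at hmem
    rcases hmem with rfl | rfl | rfl | rfl | rfl | rfl <;> first | rfl | (norm_num at hre)
  obtain ⟨b, rfl⟩ : ∃ b : ℂ, z = b • X 8 := by
    obtain ⟨a, rfl⟩ := (hz z).mp hzc
    refine ⟨a 5, Finset.sum_eq_single_of_mem 5 (Finset.mem_univ _) fun i _ hi => ?_⟩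
    refine smul_eq_zero_of_left (by_contra fun ha => ?_) _
    have h := eq_of_lie_central_eq_smul hli hw hzm ha
    rw [hm26] at h
    exact hi (eq_five_of_centralizerWeight i (by exact_mod_cast h))
  obtain ⟨a, rfl⟩ := (hz v).mp hv
  obtain ⟨i, -, hi⟩ := Finset.exists_ne_zero_of_sum_ne_zero hv₀
  obtain ⟨k, hk, hmin⟩ : ∃ k, a k ≠ 0 ∧ ∀ j < k, a j = 0 := by
    have hex : ∃ j, a j ≠ 0 := ⟨i, left_ne_zero_of_smul hi⟩
    exact ⟨Fin.find _ hex, Fin.find_spec hex, fun j hj => not_not.mp (Fin.find_min hex hj)⟩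
  have hpv : (partnerValue k : ℂ) ≠ 0 := Int.cast_ne_zero.mpr (partnerValue_ne_zero k)
  refine ⟨(b / (a k * partnerValue k)) • X (partner k), (hcent _).mpr
    ⟨Pi.single (partner k) (b / (a k * partnerValue k)), by simp [Pi.single_apply]⟩, ?_⟩
  rw [lie_smul, smul_lie, lie_sum, Finset.sum_eq_single k]
  · rw [lie_smul, hφ.lie_lie_partner hf hX le_rfl, if_pos rfl, smul_smul, smul_smul]
    congr 1
    field_simp
  · intro j _ hj
    rcases lt_or_ge j k with h | h
    · rw [hmin j h, zero_smul, lie_zero]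
    · rw [lie_smul, hφ.lie_lie_partner hf hX h, if_neg hj, smul_zero]
  · simp

end Center

end E7

/-- For the subregular distinguished nilpotent orbit of `E₇`
(`dim 𝔤^e = 9`): `dim 𝔷(𝔤^e) = 6`, the eigenvalues of `ad h` on `𝔷(𝔤^e)` are
`2, 10, 14, 18, 22, 26`, and `e` satisfies property (P). -/
theorem e7_subregular_propertyP
    (L : Type*) [LieRing L] [LieAlgebra ℂ L] [FiniteDimensional ℂ L]
    [LieAlgebra.IsSimple ℂ L] (htype : Nonempty (L ≃ₗ⁅ℂ⁆ LieAlgebra.e₇ ℂ))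
    (e h f : L) (ht : IsSl2Triple h e f) (he : IsNilpotent (LieAlgebra.ad ℂ L e))
    (hdist : IsDistinguished L e)
    (hdim : Module.finrank ℂ ↥(centralizer L e) = 9) :
    Module.finrank ℂ ↥(zCenter L e) = 6 ∧
    (∀ m : ℂ, (∃ z : L, z ≠ 0 ∧ InCenterOfCentralizer L e z ∧ ⁅h, z⁆ = m • z) ↔
      m ∈ ({2, 10, 14, 18, 22, 26} : Set ℂ)) ∧
    PropertyP L e h f := by
  have : LieAlgebra.IsKilling ℂ L := inferInstance
  obtain ⟨s, hss, hs⟩ := exists_semisimple_part h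
  have hse : ⁅s, e⁆ = (2 : ℂ) • e := lie_eq_smul_of_lie_eq_smul hs (by
    rw [ht.lie_h_e_nsmul, two_smul, two_smul])
  have hsh : ⁅s, h⁆ = 0 := by
    rw [lie_eq_smul_of_lie_eq_smul hs (μ := 0) (by rw [lie_self, zero_smul]), zero_smul]
  have hker : Module.finrank ℂ (LinearMap.ker (LieAlgebra.ad ℂ L e)) = 9 := by
    rw [← hdim]
    have h : LinearMap.ker (LieAlgebra.ad ℂ L e) = (centralizer L e).toSubmodule := by
      ext x
      change ⁅e, x⁆ = 0 ↔ ⁅x, e⁆ = 0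
      rw [← lie_skew, neg_eq_zero]
    rw [h]
    rfl
  obtain ⟨φ, hφ⟩ := E7.exists_isModel htype.some
  obtain ⟨φ, hφ, n, hn⟩ := E7.exists_isModel_torus hφ hss
  obtain ⟨φ, hφ, n, hn⟩ := E7.exists_isModel_dominant hφ hn
    fun x μ hx hμ => intCast_of_eigenvector ht he hs hx hμ
  obtain ⟨i, hi, hj⟩ := hφ.exists_eq_zero hdist hn hse
    (fun x μ hx hex hμ => natCast_of_highest ht hs hx hex hμ) hker
  obtain ⟨c, d, hcd⟩ := hφ.exists_hasForm hn hse hi hj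
  obtain rfl := hcd.eq_three hi hdist
  obtain ⟨φ, hφ, hφs, hφe⟩ := hcd.exists_standard hi hj hdist
  obtain ⟨X, hX, hli, hcent⟩ := hφ.exists_centralizer_basis hφe hdim
  obtain ⟨hφh, hφf⟩ := hφ.apply_eq_and_apply_eq hφs hφe ht hsh hX hli hcent
  exact ⟨hφ.finrank_zCenter hX hli hcent, hφ.exists_eigenvector_iff hφh hX hli hcent,
    hφ.propertyP hφh hφf hX hli hcent⟩
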